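/- For each n ≥ 2 there exists a critical angle θ₀ ∈ [π/2, π] with the following property: for every θ ∈ (θ₀, 2π) the cone 𝒪_θ ⊆ ℝⁿ has the backward uniqueness property (BU), and for every θ ∈ (0, θ₀) the cone 𝒪_θ does not have the backward uniqueness property. -/

import Mathlib

open Real Set Filter

/-- The Laplacian of `f` at `x`, computed as the sum of the second partial
derivatives in the coordinate directions. -/
noncomputable def lap {n : ℕ} (f : EuclideanSpace ℝ (Fin n) → ℝ)
    (x : EuclideanSpace ℝ (Fin n)) : ℝ :=
  ∑ i, fderiv ℝ (fun y => fderiv ℝ f y (EuclideanSpace.single i 1)) x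
      (EuclideanSpace.single i 1)

/-- The open cone `𝒪_θ = {x : x₁ > |x| cos (θ/2)}` in `ℝⁿ`. -/
def cone (n : ℕ) [NeZero n] (θ : ℝ) : Set (EuclideanSpace ℝ (Fin n)) :=
  {x | ‖x‖ * Real.cos (θ / 2) < x 0}

/-- The backward uniqueness property (BU) for an open set `Ω ⊆ ℝⁿ`:
every bounded smooth solution of `|∂ₜ u - Δ u| ≤ c₁ (|∇u| + |u|)` on `Ω × (0, T)`
whose continuous extension vanishes at time `T` vanishes identically. -/
def HasBU (n : ℕ) (Ω : Set (EuclideanSpace ℝ (Fin n))) : Prop :=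
  ∀ T : ℝ, 0 < T → ∀ c₁ : ℝ, 0 ≤ c₁ →
    ∀ u : EuclideanSpace ℝ (Fin n) → ℝ → ℝ,
      ContDiffOn ℝ (⊤ : ℕ∞) (fun p : EuclideanSpace ℝ (Fin n) × ℝ => u p.1 p.2)
        (Ω ×ˢ Set.Ioo 0 T) →
      (∃ M : ℝ, ∀ x ∈ Ω, ∀ t ∈ Set.Ioo (0 : ℝ) T, |u x t| ≤ M) →
      (∀ x ∈ Ω, ∀ t ∈ Set.Ioo (0 : ℝ) T,
        |deriv (u x) t - lap (fun y => u y t) x| ≤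
          c₁ * (‖gradient (fun y => u y t) x‖ + |u x t|)) →
      (∀ x ∈ Ω, Filter.Tendsto (u x) (nhdsWithin T (Set.Iio T)) (nhds 0)) →
      ∀ x ∈ Ω, ∀ t ∈ Set.Ioo (0 : ℝ) T, u x t = 0

section Auxiliary

open MeasureTheory Topology
open scoped ContDiff

section Derivations
variable {X : Type*} [NormedAddCommGroup X] [NormedSpace ℝ X]

/-- The derivative of `f` in the constant direction `v`. -/
noncomputable def pd (v : X) (f : X → ℝ) : X → ℝ := fun p => fderiv ℝ f p v

@[fun_prop]
theorem contDiff_pd {f : X → ℝ} (hf : ContDiff ℝ ∞ f) (v : X) : ContDiff ℝ ∞ (pd v f) := by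
  unfold pd
  exact (hf.fderiv_right (m := ∞) (by simp)).clm_apply contDiff_const

@[fun_prop]
theorem contDiff_pd' {f : X → ℝ} (hf : ContDiff ℝ ∞ f) (v : X) :
    ContDiff ℝ ∞ (fun p => pd v f p) := contDiff_pd hf v

@[fun_prop]
theorem continuous_pd {f : X → ℝ} (hf : ContDiff ℝ ∞ f) (v : X) :
    Continuous (fun p => pd v f p) := (contDiff_pd hf v).continuous

theorem smooth_differentiable {f : X → ℝ} (hf : ContDiff ℝ ∞ f) : Differentiable ℝ f :=
  hf.differentiable (by simp)

theorem pd_mul {f g : X → ℝ} (hf : ContDiff ℝ ∞ f) (hg : ContDiff ℝ ∞ g) (v p : X) :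
    pd v (fun x => f x * g x) p = pd v f p * g p + f p * pd v g p := by
  unfold pd
  rw [fderiv_fun_mul (smooth_differentiable hf p) (smooth_differentiable hg p)]
  simp; ring

theorem pd_add {f g : X → ℝ} (hf : ContDiff ℝ ∞ f) (hg : ContDiff ℝ ∞ g) (v p : X) :
    pd v (fun x => f x + g x) p = pd v f p + pd v g p := by
  unfold pd
  rw [fderiv_fun_add (smooth_differentiable hf p) (smooth_differentiable hg p)]
  simp

theorem pd_sub {f g : X → ℝ} (hf : ContDiff ℝ ∞ f) (hg : ContDiff ℝ ∞ g) (v p : X) :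
    pd v (fun x => f x - g x) p = pd v f p - pd v g p := by
  unfold pd
  rw [fderiv_fun_sub (smooth_differentiable hf p) (smooth_differentiable hg p)]
  simp

theorem pd_const (c : ℝ) (v p : X) : pd v (fun _ => c) p = 0 := by
  simp [pd]

theorem pd_const_mul {f : X → ℝ} (hf : ContDiff ℝ ∞ f) (c : ℝ) (v p : X) :
    pd v (fun x => c * f x) p = c * pd v f p := by
  rw [pd_mul contDiff_const hf, pd_const]; ring

theorem pd_sum {ι : Type*} (s : Finset ι) {f : ι → X → ℝ} (hf : ∀ i, ContDiff ℝ ∞ (f i))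
    (v p : X) : pd v (fun x => ∑ i ∈ s, f i x) p = ∑ i ∈ s, pd v (f i) p := by
  unfold pd
  rw [fderiv_fun_sum (fun i _ => smooth_differentiable (hf i) p)]
  simp

theorem pd_sq {f : X → ℝ} (hf : ContDiff ℝ ∞ f) (v p : X) :
    pd v (fun x => f x ^ 2) p = 2 * f p * pd v f p := by
  simp only [pow_two]
  rw [pd_mul hf hf]; ring

theorem pd_comp {g : ℝ → ℝ} {f : X → ℝ} (hg : ContDiff ℝ ∞ g) (hf : ContDiff ℝ ∞ f) (v p : X) :
    pd v (fun x => g (f x)) p = deriv g (f p) * pd v f p := by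
  unfold pd
  have := (hg.differentiable (by simp) (f p)).hasDerivAt.comp_hasFDerivAt p
    (smooth_differentiable hf p).hasFDerivAt
  rw [show (fun x => g (f x)) = g ∘ f from rfl, this.fderiv]
  simp

theorem pd_exp {f : X → ℝ} (hf : ContDiff ℝ ∞ f) (v p : X) :
    pd v (fun x => Real.exp (f x)) p = Real.exp (f p) * pd v f p := by
  rw [pd_comp Real.contDiff_exp hf]; simp

theorem pd_comm {f : X → ℝ} (hf : ContDiff ℝ ∞ f) (v w p : X) :
    pd v (pd w f) p = pd w (pd v f) p := by
  have h : IsSymmSndFDerivAt ℝ f p := (hf.contDiffAt).isSymmSndFDerivAt (by simpa using ENat.LEInfty.out)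
  have h1 : Differentiable ℝ (fderiv ℝ f) :=
    (hf.fderiv_right (m := ∞) (by simp)).differentiable (by simp)
  have key : ∀ a b : X, pd a (pd b f) p = fderiv ℝ (fderiv ℝ f) p a b := by
    intro a b
    unfold pd
    rw [fderiv_clm_apply (h1 p) (differentiableAt_const b)]
    simp
  rw [key, key]
  exact h v w

theorem pd_congr {f g : X → ℝ} {p : X} (h : f =ᶠ[𝓝 p] g) (v : X) :
    pd v f p = pd v g p := by
  unfold pd; rw [h.fderiv_eq]

theorem hasCompactSupport_pd {f : X → ℝ} (hf : HasCompactSupport f) (v : X) :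
    HasCompactSupport (pd v f) := hf.fderiv_apply ℝ v

end Derivations

section NullIntegral
variable {X : Type*} [MeasurableSpace X] {μ : Measure X}

/-- `f` is integrable with vanishing integral. -/
def NullInt (μ : Measure X) (f : X → ℝ) : Prop :=
  Integrable f μ ∧ ∫ x, f x ∂μ = 0


theorem NullInt.add {f g : X → ℝ} (hf : NullInt μ f) (hg : NullInt μ g) :
    NullInt μ (fun x => f x + g x) :=
  ⟨hf.1.add hg.1, by rw [integral_add hf.1 hg.1, hf.2, hg.2, add_zero]⟩

theorem NullInt.sub {f g : X → ℝ} (hf : NullInt μ f) (hg : NullInt μ g) :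
    NullInt μ (fun x => f x - g x) :=
  ⟨hf.1.sub hg.1, by rw [integral_sub hf.1 hg.1, hf.2, hg.2, sub_zero]⟩

theorem NullInt.sum {ι : Type*} (s : Finset ι) {f : ι → X → ℝ} (hf : ∀ i, NullInt μ (f i)) :
    NullInt μ (fun x => ∑ i ∈ s, f i x) :=
  ⟨integrable_finsetSum _ fun i _ => (hf i).1, by
    rw [integral_finsetSum _ fun i _ => (hf i).1]
    exact Finset.sum_eq_zero fun i _ => (hf i).2⟩

theorem nullInt_pd [NormedAddCommGroup X] [NormedSpace ℝ X] [FiniteDimensional ℝ X]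
    [BorelSpace X] [μ.IsAddHaarMeasure] {f : X → ℝ} (hf : ContDiff ℝ ∞ f) (hc : HasCompactSupport f) (v : X) :
    NullInt μ (pd v f) := by
  have hi : Integrable (pd v f) μ :=
    (contDiff_pd hf v).continuous.integrable_of_hasCompactSupport (hasCompactSupport_pd hc v)
  refine ⟨hi, ?_⟩
  have := integral_mul_fderiv_eq_neg_fderiv_mul_of_integrable (μ := μ) (f := fun _ : X => (1:ℝ))
    (g := f) (v := v) (by simp) (by simp only [one_mul]; exact hi)
    (by simpa using hf.continuous.integrable_of_hasCompactSupport hc)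
    (by fun_prop) (fun x _ => smooth_differentiable hf x)
  simpa [pd] using this

end NullIntegral

section Carleman
variable {X : Type*} [NormedAddCommGroup X] [NormedSpace ℝ X] {ι : Type*} [Fintype ι]

/-- The sum of the second derivatives in the directions `e i`. -/
noncomputable def lapl (e : ι → X) (f : X → ℝ) : X → ℝ := fun p => ∑ i, pd (e i) (pd (e i) f) p

@[fun_prop]
theorem contDiff_lapl {f : X → ℝ} (hf : ContDiff ℝ ∞ f) (e : ι → X) :
    ContDiff ℝ ∞ (lapl e f) := by
  unfold lapl
  fun_prop

variable [FiniteDimensional ℝ X] [MeasurableSpace X] [BorelSpace X] {ν : Measure X}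
  [ν.IsAddHaarMeasure]

theorem carleman_identity {v φ ζ U : X → ℝ} (hv : ContDiff ℝ ∞ v) (hc : HasCompactSupport v)
    (hφ : ContDiff ℝ ∞ φ) (hζ : ContDiff ℝ ∞ ζ) (hU : ContDiff ℝ ∞ U) (e : ι → X) (s : X) (m : ℝ)
    (hζe : ∀ i p, pd (e i) ζ p = 0) (hΔ : ∀ i p, pd (e i) (lapl e φ) p = 0) :
    NullInt ν (fun p => ζ p * (2 * (lapl e v p + U p * v p) *
        (pd s v p - 2 * ∑ j, pd (e j) φ p * pd (e j) v p - (lapl e φ p + m) * v p))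
      - ζ p * (4 * ∑ i, ∑ j, pd (e i) (pd (e j) φ) p * pd (e i) v p * pd (e j) v p
        + 2 * m * ∑ i, pd (e i) v p ^ 2
        + (-pd s U p + 2 * ∑ j, pd (e j) U p * pd (e j) φ p - 2 * m * U p) * v p ^ 2)
      - pd s ζ p * (∑ i, pd (e i) v p ^ 2 - U p * v p ^ 2)) := by
  have hΔs := contDiff_lapl hφ e
  have cs : ∀ (a : X), HasCompactSupport (pd a v) := fun a => hasCompactSupport_pd hc a
  have I1 : ∀ i, NullInt ν (fun p => 2 * ζ p * pd (e i) (pd (e i) v) p * pd s v p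
      - pd s ζ p * pd (e i) v p ^ 2) := by
    intro i
    have a1 := nullInt_pd (μ := ν) (f := fun p => (2 * ζ p * pd s v p) * pd (e i) v p)
      (by fun_prop) ((cs (e i)).mul_left) (e i)
    have a2 := nullInt_pd (μ := ν) (f := fun p => (ζ p * pd (e i) v p) * pd (e i) v p)
      (by fun_prop) ((cs (e i)).mul_left) s
    convert a1.sub a2 using 2 with p
    repeat rw [pd_mul (by fun_prop) (by fun_prop)]
    rw [pd_const, hζe, pd_comm hv s (e i)]
    ring
  have I2 : ∀ i j, NullInt ν (fun p => -4 * ζ p * pd (e i) (pd (e i) v) p * pd (e j) φ p *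
      pd (e j) v p - 4 * ζ p * pd (e i) v p * pd (e i) (pd (e j) φ) p * pd (e j) v p
      + 2 * ζ p * pd (e j) (pd (e j) φ) p * pd (e i) v p ^ 2) := by
    intro i j
    have a1 := nullInt_pd (μ := ν) (f := fun p => (-4 * ζ p * pd (e j) φ p * pd (e j) v p) *
      pd (e i) v p) (by fun_prop) ((cs (e i)).mul_left) (e i)
    have a2 := nullInt_pd (μ := ν) (f := fun p => (2 * ζ p * pd (e j) φ p * pd (e i) v p) *
      pd (e i) v p) (by fun_prop) ((cs (e i)).mul_left) (e j)
    convert a1.add a2 using 2 with p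
    repeat rw [pd_mul (by fun_prop) (by fun_prop)]
    rw [pd_const, pd_const, hζe, hζe, pd_comm hv (e i) (e j)]
    ring
  have I3 : ∀ i, NullInt ν (fun p => -2 * ζ p * (lapl e φ p + m) * pd (e i) (pd (e i) v) p * v p
      - 2 * ζ p * (lapl e φ p + m) * pd (e i) v p ^ 2) := by
    intro i
    have a1 := nullInt_pd (μ := ν) (f := fun p => (-2 * ζ p * (lapl e φ p + m) * v p) *
      pd (e i) v p) (by fun_prop) ((cs (e i)).mul_left) (e i)
    convert a1 using 2 with p
    repeat rw [pd_mul (by fun_prop) (by fun_prop)]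
    rw [pd_const, hζe, pd_add (by fun_prop) (by fun_prop), pd_const, hΔ]
    ring
  have I4 : NullInt ν (fun p => pd s ζ p * U p * v p ^ 2 + ζ p * pd s U p * v p ^ 2 +
      2 * ζ p * U p * v p * pd s v p) := by
    have a1 := nullInt_pd (μ := ν) (f := fun p => (ζ p * U p * v p) * v p) (by fun_prop)
      hc.mul_left s
    convert a1 using 2 with p
    repeat rw [pd_mul (by fun_prop) (by fun_prop)]
    ring
  have I5 : ∀ j, NullInt ν (fun p => -2 * ζ p * pd (e j) U p * pd (e j) φ p * v p ^ 2
      - 2 * ζ p * U p * pd (e j) (pd (e j) φ) p * v p ^ 2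
      - 4 * ζ p * U p * pd (e j) φ p * v p * pd (e j) v p) := by
    intro j
    have a1 := nullInt_pd (μ := ν) (f := fun p => (-2 * ζ p * U p * pd (e j) φ p * v p) * v p)
      (by fun_prop) hc.mul_left (e j)
    convert a1 using 2 with p
    repeat rw [pd_mul (by fun_prop) (by fun_prop)]
    rw [pd_const, hζe]
    ring
  convert ((((NullInt.sum Finset.univ I1).add
    (NullInt.sum Finset.univ fun i => NullInt.sum Finset.univ fun j => I2 i j)).add
    (NullInt.sum Finset.univ I3)).add I4).add (NullInt.sum Finset.univ I5) using 2 with p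
  have e1 : ∑ i, (2 * ζ p * pd (e i) (pd (e i) v) p * pd s v p - pd s ζ p * pd (e i) v p ^ 2) =
      2 * ζ p * pd s v p * lapl e v p - pd s ζ p * ∑ i, pd (e i) v p ^ 2 := by
    rw [Finset.sum_sub_distrib, lapl, Finset.mul_sum, Finset.mul_sum]
    congr 1
    exact Finset.sum_congr rfl fun i _ => by ring
  have e2 : ∑ i, ∑ j, (-4 * ζ p * pd (e i) (pd (e i) v) p * pd (e j) φ p *
      pd (e j) v p - 4 * ζ p * pd (e i) v p * pd (e i) (pd (e j) φ) p * pd (e j) v p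
      + 2 * ζ p * pd (e j) (pd (e j) φ) p * pd (e i) v p ^ 2) =
      -4 * ζ p * lapl e v p * (∑ j, pd (e j) φ p * pd (e j) v p)
      - 4 * ζ p * (∑ i, ∑ j, pd (e i) (pd (e j) φ) p * pd (e i) v p * pd (e j) v p)
      + 2 * ζ p * (∑ i, pd (e i) v p ^ 2) * lapl e φ p := by
    simp only [lapl]
    rw [mul_assoc (-4 * ζ p), mul_assoc (2 * ζ p), Finset.sum_mul_sum, Finset.sum_mul_sum]
    simp only [Finset.mul_sum, ← Finset.sum_add_distrib, ← Finset.sum_sub_distrib]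
    exact Finset.sum_congr rfl fun i _ => Finset.sum_congr rfl fun j _ => by ring
  have e3 : ∑ i, (-2 * ζ p * (lapl e φ p + m) * pd (e i) (pd (e i) v) p * v p
      - 2 * ζ p * (lapl e φ p + m) * pd (e i) v p ^ 2) =
      -2 * ζ p * (lapl e φ p + m) * v p * lapl e v p
      - 2 * ζ p * (lapl e φ p + m) * ∑ i, pd (e i) v p ^ 2 := by
    generalize lapl e φ p = d
    rw [Finset.sum_sub_distrib, lapl, Finset.mul_sum, Finset.mul_sum]
    congr 1
    exact Finset.sum_congr rfl fun i _ => by ring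
  have e5 : ∑ j, (-2 * ζ p * pd (e j) U p * pd (e j) φ p * v p ^ 2
      - 2 * ζ p * U p * pd (e j) (pd (e j) φ) p * v p ^ 2
      - 4 * ζ p * U p * pd (e j) φ p * v p * pd (e j) v p) =
      -2 * ζ p * v p ^ 2 * (∑ j, pd (e j) U p * pd (e j) φ p)
      - 2 * ζ p * U p * v p ^ 2 * lapl e φ p
      - 4 * ζ p * U p * v p * ∑ j, pd (e j) φ p * pd (e j) v p := by
    simp only [lapl, Finset.mul_sum, ← Finset.sum_sub_distrib]
    exact Finset.sum_congr rfl fun j _ => by ring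
  rw [e1, e2, e3, e5]
  ring

/-- The weighted Carleman inequality: `w = e^{-φ} v`, and `U = |∇φ|² - φ_t + m`. -/
theorem carleman_inequality {w φ ζ : X → ℝ} (hw : ContDiff ℝ ∞ w) (hc : HasCompactSupport w)
    (hφ : ContDiff ℝ ∞ φ) (hζ : ContDiff ℝ ∞ ζ) (hζ0 : ∀ p, 0 ≤ ζ p)
    (e : ι → X) (s : X) (m : ℝ)
    (hζe : ∀ i p, pd (e i) ζ p = 0) (hΔ : ∀ i p, pd (e i) (lapl e φ) p = 0)
    {v U : X → ℝ} (hvdef : v = fun p => Real.exp (φ p) * w p)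
    (hUdef : U = fun p => ∑ i, pd (e i) φ p ^ 2 - pd s φ p + m)  :
    ∃ I : X → ℝ, Integrable I ν ∧ ∫ p, I p ∂ν ≤ 0 ∧ ∀ p, I p =
      ζ p * (4 * ∑ i, ∑ j, pd (e i) (pd (e j) φ) p * pd (e i) v p * pd (e j) v p
        + 2 * m * ∑ i, pd (e i) v p ^ 2
        + (-pd s U p + 2 * ∑ j, pd (e j) U p * pd (e j) φ p - 2 * m * U p) * v p ^ 2
        - 1 / 2 * (Real.exp (φ p) * (pd s w p + lapl e w p)) ^ 2)
      + pd s ζ p * (∑ i, pd (e i) v p ^ 2 - U p * v p ^ 2) := by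
  have hv : ContDiff ℝ ∞ v := by rw [hvdef]; fun_prop
  have hcv : HasCompactSupport v := by rw [hvdef]; exact hc.mul_left
  have hU : ContDiff ℝ ∞ U := by rw [hUdef]; fun_prop
  obtain ⟨hi, h0⟩ := carleman_identity (ν := ν) hv hcv hφ hζ hU e s m hζe hΔ
  set F : X → ℝ := fun p => 1 / 2 * ζ p * (Real.exp (φ p) * (pd s w p + lapl e w p)
     - 2 * (lapl e v p + U p * v p)) ^ 2 with hF
  have hpdv : ∀ (a p : X), pd a v p = Real.exp (φ p) * (pd a w p + pd a φ p * w p) := by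
    intro a p
    rw [hvdef, pd_mul (by fun_prop) hw, pd_exp hφ]; ring
  have hpdv2 : ∀ (a p : X), pd a (pd a v) p = Real.exp (φ p) * (pd a (pd a w) p
      + 2 * (pd a φ p * pd a w p) + (pd a φ p) ^ 2 * w p + pd a (pd a φ) p * w p) := by
    intro a p
    rw [show pd a v = fun p => Real.exp (φ p) * (pd a w p + pd a φ p * w p) from
      funext (hpdv a), pd_mul (by fun_prop) (by fun_prop), pd_exp hφ,
      pd_add (by fun_prop) (by fun_prop), pd_mul (by fun_prop) (by fun_prop)]
    ring
  have hlap : ∀ p, lapl e v p = Real.exp (φ p) * (lapl e w p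
      + 2 * (∑ j, pd (e j) φ p * pd (e j) w p) + (∑ i, pd (e i) φ p ^ 2) * w p
      + lapl e φ p * w p) := by
    intro p
    simp only [lapl, hpdv2, Finset.mul_sum, Finset.sum_mul, ← Finset.sum_add_distrib]
  have hgrad : ∀ p, ∑ j, pd (e j) φ p * pd (e j) v p = Real.exp (φ p) *
      ((∑ j, pd (e j) φ p * pd (e j) w p) + (∑ i, pd (e i) φ p ^ 2) * w p) := by
    intro p
    simp only [hpdv, Finset.mul_sum, Finset.sum_mul, ← Finset.sum_add_distrib]
    exact Finset.sum_congr rfl fun i _ => by ring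
  have hf : ∀ p, Real.exp (φ p) * (pd s w p + lapl e w p) = (lapl e v p + U p * v p) +
      (pd s v p - 2 * ∑ j, pd (e j) φ p * pd (e j) v p - (lapl e φ p + m) * v p) := by
    intro p
    rw [hgrad, hlap, hpdv s, hUdef, hvdef]
    ring
  have hFi : Integrable F ν := by
    apply Continuous.integrable_of_hasCompactSupport
    · have := (contDiff_lapl hw e).continuous
      have := (contDiff_lapl hv e).continuous
      have := hv.continuous
      have := hU.continuous
      have := hφ.continuous
      have := hζ.continuous
      simp only [hF]
      fun_prop
    · refine HasCompactSupport.intro' (K := tsupport w) hc (isClosed_tsupport w) ?_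
      intro p hp
      have hw0 : w =ᶠ[𝓝 p] fun _ => 0 := notMem_tsupport_iff_eventuallyEq.mp hp
      have hz : ∀ a, pd a w =ᶠ[𝓝 p] fun _ => 0 := by
        intro a
        filter_upwards [hw0.eventuallyEq_nhds] with x hx
        rw [pd_congr hx, pd_const]
      have hz2 : ∀ a, pd a (pd a w) p = 0 := fun a => by rw [pd_congr (hz a), pd_const]
      have h1 : lapl e w p = 0 := by simp [lapl, hz2]
      have h2 : lapl e v p = 0 := by
        rw [hlap, h1]
        simp [hw0.eq_of_nhds, fun a => (hz a).eq_of_nhds]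
      have h3 : v p = 0 := by simp [hvdef, hw0.eq_of_nhds]
      simp [hF, h1, h2, h3, (hz s).eq_of_nhds]
  refine ⟨_, (hi.add hFi).neg, ?_, ?_⟩
  · rw [integral_neg' , integral_add' hi hFi, h0, zero_add, neg_nonpos]
    refine integral_nonneg fun p => ?_
    simp only [hF, Pi.zero_apply]
    have := hζ0 p
    positivity
  · intro p
    simp only [Pi.neg_apply, Pi.add_apply, hF]
    rw [hf]
    ring
end Carleman

section Caccioppoli
variable {X : Type*} [NormedAddCommGroup X] [NormedSpace ℝ X] {ι : Type*} [Fintype ι]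

/-- The squared length of the gradient of `f` in the directions `e i`. -/
noncomputable def gradSq (e : ι → X) (f : X → ℝ) : X → ℝ := fun p => ∑ i, pd (e i) f p ^ 2

theorem gradSq_nonneg (e : ι → X) (f : X → ℝ) (p : X) : 0 ≤ gradSq e f p :=
  Finset.sum_nonneg fun _ _ => sq_nonneg _

@[fun_prop]
theorem contDiff_gradSq {f : X → ℝ} (hf : ContDiff ℝ ∞ f) (e : ι → X) :
    ContDiff ℝ ∞ (gradSq e f) := by
  unfold gradSq
  fun_prop

theorem sq_sum_pd_mul_le (e : ι → X) (f g : X → ℝ) (p : X) :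
    (∑ i, pd (e i) f p * pd (e i) g p) ^ 2 ≤ gradSq e f p * gradSq e g p :=
  Finset.sum_mul_sq_le_sq_mul_sq _ _ _

variable [FiniteDimensional ℝ X] [MeasurableSpace X] [BorelSpace X] {ν : Measure X}
  [ν.IsAddHaarMeasure]

/-- The Caccioppoli inequality for the backward heat operator. -/
theorem caccioppoli {u g : X → ℝ} (hu : ContDiff ℝ ∞ u) (hg : ContDiff ℝ ∞ g)
    (hc : HasCompactSupport g) (e : ι → X) (s : X) {c : ℝ} (hc0 : 0 ≤ c)
    (hP : ∀ p, g p ≠ 0 → |pd s u p + lapl e u p| ≤ c * (√(gradSq e u p) + |u p|)) :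
    ∃ N : X → ℝ, NullInt ν N ∧ ∀ p, g p ^ 2 * gradSq e u p ≤ N p +
      u p ^ 2 * (-2 * g p * pd s g p + 2 * (c ^ 2 + c) * g p ^ 2 + 8 * gradSq e g p) := by
  have J1 : ∀ i, NullInt ν (fun p => g p ^ 2 * pd (e i) u p ^ 2 + g p ^ 2 * u p *
      pd (e i) (pd (e i) u) p + 2 * g p * u p * (pd (e i) g p * pd (e i) u p)) := by
    intro i
    have a1 := nullInt_pd (μ := ν) (f := fun p => (g p * u p * pd (e i) u p) * g p)
      (by fun_prop) hc.mul_left (e i)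
    convert a1 using 2 with p
    repeat rw [pd_mul (by fun_prop) (by fun_prop)]
    ring
  have J2 : NullInt ν (fun p => 2 * g p * pd s g p * u p ^ 2 + 2 * g p ^ 2 * u p * pd s u p) := by
    have a1 := nullInt_pd (μ := ν) (f := fun p => (g p * u p * u p) * g p)
      (by fun_prop) hc.mul_left s
    convert a1 using 2 with p
    repeat rw [pd_mul (by fun_prop) (by fun_prop)]
    ring
  have J := NullInt.sum (μ := ν) Finset.univ J1
  refine ⟨_, (J.add J).add J2, fun p => ?_⟩
  have e1 : ∑ i, (g p ^ 2 * pd (e i) u p ^ 2 + g p ^ 2 * u p *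
      pd (e i) (pd (e i) u) p + 2 * g p * u p * (pd (e i) g p * pd (e i) u p)) =
      g p ^ 2 * gradSq e u p + g p ^ 2 * u p * lapl e u p +
      2 * g p * u p * ∑ i, pd (e i) g p * pd (e i) u p := by
    simp only [gradSq, lapl, Finset.mul_sum, Finset.sum_add_distrib]
  rw [e1]
  set G := gradSq e u p
  set D := ∑ i, pd (e i) g p * pd (e i) u p with hD
  have hG : 0 ≤ G := gradSq_nonneg e u p
  have hgg : 0 ≤ gradSq e g p := gradSq_nonneg e g p
  have hDle : D ^ 2 ≤ gradSq e g p * G := sq_sum_pd_mul_le e g u p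
  have hA : -(g p ^ 2 * u p * (pd s u p + lapl e u p)) ≤
      g p ^ 2 * G / 4 + (c ^ 2 + c) * g p ^ 2 * u p ^ 2 := by
    by_cases h0 : g p = 0
    · simp [h0]
    have h1 := hP p h0
    have h2 : -(u p * (pd s u p + lapl e u p)) ≤ |u p| * (c * (√G + |u p|)) :=
      (neg_le_abs _).trans (by rw [abs_mul]; gcongr)
    have h3 : |u p| * (c * (√G + |u p|)) ≤ G / 4 + (c ^ 2 + c) * u p ^ 2 := by
      have : √G ^ 2 = G := Real.sq_sqrt hG
      have h4 : |u p| ^ 2 = u p ^ 2 := sq_abs _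
      nlinarith [sq_nonneg (√G / 2 - c * |u p|)]
    have h5 := mul_le_mul_of_nonneg_left (h2.trans h3) (sq_nonneg (g p))
    linarith
  have hB : -(2 * g p * u p * D) ≤ g p ^ 2 * G / 4 + 4 * u p ^ 2 * gradSq e g p := by
    have h1 : (2 * (g p * u p) * D) ^ 2 ≤ (2 * (√(g p ^ 2 * G / 4) * (2 * |u p| * √(gradSq e g p)))) ^ 2 := by
      have a1 : √(g p ^ 2 * G / 4) ^ 2 = g p ^ 2 * G / 4 := Real.sq_sqrt (by positivity)
      have a2 : √(gradSq e g p) ^ 2 = gradSq e g p := Real.sq_sqrt hgg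
      have a3 : |u p| ^ 2 = u p ^ 2 := sq_abs _
      calc (2 * (g p * u p) * D) ^ 2 = 4 * (g p ^ 2 * u p ^ 2) * D ^ 2 := by ring
        _ ≤ 4 * (g p ^ 2 * u p ^ 2) * (gradSq e g p * G) := by gcongr
        _ = (2 * (√(g p ^ 2 * G / 4) * (2 * |u p| * √(gradSq e g p)))) ^ 2 := by
          rw [mul_pow, mul_pow _ (2 * |u p| * √(gradSq e g p)), mul_pow (2 * |u p|),
            mul_pow _ (|u p|), a1, a2, a3]; ring
    have h2 := abs_le_of_sq_le_sq h1 (by positivity)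
    have a1 : √(g p ^ 2 * G / 4) ^ 2 = g p ^ 2 * G / 4 := Real.sq_sqrt (by positivity)
    have a2 : (2 * |u p| * √(gradSq e g p)) ^ 2 = 4 * u p ^ 2 * gradSq e g p := by
      rw [mul_pow, mul_pow, sq_abs, Real.sq_sqrt hgg]; ring
    nlinarith [sq_nonneg (√(g p ^ 2 * G / 4) - (2 * |u p| * √(gradSq e g p))), (abs_le.mp h2).1]
  linarith
end Caccioppoli

/-- Space-time. -/
abbrev SpaceTime (n : ℕ) := EuclideanSpace ℝ (Fin n) × ℝ

namespace SpaceTime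
variable {n : ℕ}

/-- The `i`-th spatial direction. -/
noncomputable def dir (i : Fin n) : SpaceTime n := (EuclideanSpace.single i 1, 0)

/-- The time direction. -/
def timeDir : SpaceTime n := (0, 1)

/-- The `i`-th spatial coordinate. -/
def crd (i : Fin n) (p : SpaceTime n) : ℝ := p.1 i

/-- The time coordinate. -/
def time (p : SpaceTime n) : ℝ := p.2

/-- The squared length of the spatial component. -/
noncomputable def nsq (p : SpaceTime n) : ℝ := ∑ i, crd i p ^ 2

/-- The `i`-th spatial coordinate as a continuous linear map. -/
noncomputable def crdL (i : Fin n) : SpaceTime n →L[ℝ] ℝ :=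
  (EuclideanSpace.proj i : EuclideanSpace ℝ (Fin n) →L[ℝ] ℝ).comp (ContinuousLinearMap.fst ℝ _ _)

theorem crd_eq (i : Fin n) : crd i = crdL i := rfl

theorem time_eq : (time : SpaceTime n → ℝ) = ContinuousLinearMap.snd ℝ (EuclideanSpace ℝ (Fin n)) ℝ := rfl

@[fun_prop]
theorem contDiff_crd (i : Fin n) : ContDiff ℝ ∞ (crd i) := by
  rw [crd_eq]; exact (crdL i).contDiff

@[fun_prop]
theorem contDiff_time : ContDiff ℝ ∞ (time : SpaceTime n → ℝ) := contDiff_snd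

@[fun_prop]
theorem contDiff_nsq : ContDiff ℝ ∞ (nsq : SpaceTime n → ℝ) := by
  unfold nsq; fun_prop

@[fun_prop]
theorem continuous_crd (i : Fin n) : Continuous (crd i) := (contDiff_crd i).continuous

@[fun_prop]
theorem continuous_time : Continuous (time : SpaceTime n → ℝ) := contDiff_time.continuous

@[fun_prop]
theorem continuous_nsq : Continuous (nsq : SpaceTime n → ℝ) := contDiff_nsq.continuous

theorem pd_crd (v p : SpaceTime n) (i : Fin n) : pd v (crd i) p = v.1 i := by
  rw [pd, crd_eq, ContinuousLinearMap.fderiv]; rfl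

theorem pd_time (v p : SpaceTime n) : pd v time p = v.2 := by
  rw [pd, time_eq, ContinuousLinearMap.fderiv]; rfl

theorem pd_dir_crd (i j : Fin n) (p : SpaceTime n) : pd (dir i) (crd j) p = if j = i then 1 else 0 := by
  rw [pd_crd]; simp [dir]

theorem pd_timeDir_crd (j : Fin n) (p : SpaceTime n) : pd timeDir (crd j) p = 0 := by
  rw [pd_crd]; simp [timeDir]

theorem pd_dir_time (i : Fin n) (p : SpaceTime n) : pd (dir i) time p = 0 := by
  rw [pd_time]; simp [dir]

theorem pd_timeDir_time (p : SpaceTime n) : pd timeDir time p = 1 := by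
  rw [pd_time]; simp [timeDir]

theorem pd_nsq (v p : SpaceTime n) : pd v nsq p = ∑ i, 2 * crd i p * v.1 i := by
  rw [show (nsq : SpaceTime n → ℝ) = fun p => ∑ i, crd i p ^ 2 from rfl,
    pd_sum _ (fun i => by fun_prop)]
  refine Finset.sum_congr rfl fun i _ => ?_
  rw [pd_sq (by fun_prop), pd_crd]

theorem pd_dir_nsq (i : Fin n) (p : SpaceTime n) : pd (dir i) nsq p = 2 * crd i p := by
  rw [pd_nsq]; simp [dir]

theorem pd_timeDir_nsq (p : SpaceTime n) : pd timeDir nsq p = 0 := by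
  rw [pd_nsq]; simp [timeDir]

theorem nsq_eq (p : SpaceTime n) : nsq p = ‖p.1‖ ^ 2 := by
  rw [EuclideanSpace.norm_sq_eq]; simp [nsq, crd]

theorem nsq_nonneg (p : SpaceTime n) : 0 ≤ nsq p := by rw [nsq_eq]; positivity

theorem crd_sq_le (i : Fin n) (p : SpaceTime n) : crd i p ^ 2 ≤ nsq p :=
  Finset.single_le_sum (f := fun i => crd i p ^ 2) (fun _ _ => sq_nonneg _) (Finset.mem_univ i)

instance : (volume : Measure (SpaceTime n)).IsAddHaarMeasure := by
  rw [Measure.volume_eq_prod]; infer_instance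

/-- The coefficient of the linear part of the Carleman weight. -/
noncomputable def wtH (K L : ℝ) (p : SpaceTime n) : ℝ := (L - time p) + K * (L - time p) ^ 2

/-- The coefficient of the quadratic part of the Carleman weight. -/
noncomputable def wtQ (L : ℝ) (p : SpaceTime n) : ℝ := 1 / 100 * (2 + (L - time p))

/-- The Carleman weight for a half-space. -/
noncomputable def wt (o : Fin n) (γ K L : ℝ) (p : SpaceTime n) : ℝ :=
  γ * (wtH K L p * crd o p) - wtQ L p * nsq p

@[fun_prop]
theorem contDiff_wtH (K L : ℝ) : ContDiff ℝ ∞ (wtH K L : SpaceTime n → ℝ) := by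
  unfold wtH; fun_prop

@[fun_prop]
theorem contDiff_wtQ (L : ℝ) : ContDiff ℝ ∞ (wtQ L : SpaceTime n → ℝ) := by
  unfold wtQ; fun_prop

@[fun_prop]
theorem contDiff_wt (o : Fin n) (γ K L : ℝ) : ContDiff ℝ ∞ (wt o γ K L) := by
  unfold wt; fun_prop

theorem pd_wtH (K L : ℝ) (v p : SpaceTime n) :
    pd v (wtH K L) p = -(1 + 2 * K * (L - time p)) * pd v time p := by
  unfold wtH
  rw [pd_add (by fun_prop) (by fun_prop), pd_mul (by fun_prop) (by fun_prop),
    pd_sq (by fun_prop), pd_sub (by fun_prop) (by fun_prop), pd_const, pd_const]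
  ring

theorem pd_wtQ (L : ℝ) (v p : SpaceTime n) : pd v (wtQ L) p = -(1 / 100) * pd v time p := by
  unfold wtQ
  rw [pd_mul (by fun_prop) (by fun_prop), pd_add (by fun_prop) (by fun_prop),
    pd_sub (by fun_prop) (by fun_prop), pd_const, pd_const, pd_const]
  ring

theorem pd_dir_wt (o : Fin n) (γ K L : ℝ) (i : Fin n) : pd (dir i) (wt o γ K L) =
    fun p => γ * wtH K L p * (if o = i then 1 else 0) - 2 * (wtQ L p * crd i p) := by
  funext p
  unfold wt
  rw [pd_sub (by fun_prop) (by fun_prop), pd_const_mul (by fun_prop),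
    pd_mul (by fun_prop) (by fun_prop), pd_mul (by fun_prop) (by fun_prop), pd_wtH, pd_wtQ,
    pd_dir_crd, pd_dir_nsq, pd_dir_time]
  ring

theorem pd_timeDir_wt (o : Fin n) (γ K L : ℝ) : pd timeDir (wt o γ K L) =
    fun p => -(γ * (1 + 2 * K * (L - time p)) * crd o p) + 1 / 100 * nsq p := by
  funext p
  unfold wt
  rw [pd_sub (by fun_prop) (by fun_prop), pd_const_mul (by fun_prop),
    pd_mul (by fun_prop) (by fun_prop), pd_mul (by fun_prop) (by fun_prop), pd_wtH, pd_wtQ,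
    pd_timeDir_crd, pd_timeDir_nsq, pd_timeDir_time]
  ring

theorem pd_dir_pd_dir_wt (o : Fin n) (γ K L : ℝ) (i j : Fin n) (p : SpaceTime n) :
    pd (dir i) (pd (dir j) (wt o γ K L)) p = if j = i then -2 * wtQ L p else 0 := by
  rw [pd_dir_wt, pd_sub (by fun_prop) (by fun_prop), pd_mul (by fun_prop) (by fun_prop),
    pd_const_mul (by fun_prop), pd_const_mul (by fun_prop), pd_mul (by fun_prop) (by fun_prop),
    pd_const, pd_wtH, pd_wtQ, pd_dir_time, pd_dir_crd]
  split_ifs <;> ring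

theorem lapl_wt (o : Fin n) (γ K L : ℝ) :
    lapl dir (wt o γ K L) = fun p => -2 * n * wtQ L p := by
  funext p
  simp only [lapl, pd_dir_pd_dir_wt]
  simp; ring

theorem pd_dir_lapl_wt (o : Fin n) (γ K L : ℝ) (i : Fin n) (p : SpaceTime n) :
    pd (dir i) (lapl dir (wt o γ K L)) p = 0 := by
  rw [lapl_wt, pd_mul (by fun_prop) (by fun_prop), pd_wtQ, pd_const, pd_dir_time]; ring

theorem hessian_wt (o : Fin n) (γ K L : ℝ) (b : Fin n → ℝ) (p : SpaceTime n) :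
    ∑ i, ∑ j, pd (dir i) (pd (dir j) (wt o γ K L)) p * b i * b j =
      -2 * wtQ L p * ∑ i, b i ^ 2 := by
  rw [Finset.mul_sum]
  refine Finset.sum_congr rfl fun i _ => ?_
  simp only [pd_dir_pd_dir_wt]
  simp; ring

theorem gradSq_wt (o : Fin n) (γ K L : ℝ) (p : SpaceTime n) :
    ∑ i, pd (dir i) (wt o γ K L) p ^ 2 =
      γ ^ 2 * wtH K L p ^ 2 - 4 * γ * wtH K L p * wtQ L p * crd o p + 4 * wtQ L p ^ 2 * nsq p := by
  simp only [pd_dir_wt]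
  have : ∀ i, (γ * wtH K L p * (if o = i then 1 else 0) - 2 * (wtQ L p * crd i p)) ^ 2 =
      (if o = i then γ ^ 2 * wtH K L p ^ 2 - 4 * γ * wtH K L p * wtQ L p * crd i p else 0)
        + 4 * wtQ L p ^ 2 * crd i p ^ 2 := by
    intro i; split_ifs <;> ring
  simp only [this, Finset.sum_add_distrib, ← Finset.mul_sum]
  simp [nsq]

/-- The zero-order potential of the conjugated operator. -/
noncomputable def wtU (o : Fin n) (γ K L m : ℝ) (p : SpaceTime n) : ℝ :=
  ∑ i, pd (dir i) (wt o γ K L) p ^ 2 - pd timeDir (wt o γ K L) p + m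

theorem wtU_eq (o : Fin n) (γ K L m : ℝ) : wtU o γ K L m = fun p =>
    γ ^ 2 * wtH K L p ^ 2 - 4 * γ * (wtH K L p * wtQ L p * crd o p) + 4 * (wtQ L p ^ 2 * nsq p)
      + γ * ((1 + 2 * K * (L - time p)) * crd o p) - 1 / 100 * nsq p + m := by
  funext p
  rw [wtU, gradSq_wt, pd_timeDir_wt]
  ring

theorem pd_wtU (o : Fin n) (γ K L m : ℝ) (v p : SpaceTime n) : pd v (wtU o γ K L m) p =
    γ ^ 2 * (2 * wtH K L p * pd v (wtH K L) p)
      - 4 * γ * (pd v (wtH K L) p * wtQ L p * crd o p + wtH K L p * pd v (wtQ L) p * crd o p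
        + wtH K L p * wtQ L p * pd v (crd o) p)
      + 4 * (2 * wtQ L p * pd v (wtQ L) p * nsq p + wtQ L p ^ 2 * pd v nsq p)
      + γ * (-2 * K * pd v time p * crd o p + (1 + 2 * K * (L - time p)) * pd v (crd o) p)
      - 1 / 100 * pd v nsq p := by
  have e : pd v (fun p => 1 + 2 * K * (L - time p)) p = -2 * K * pd v time p := by
    rw [pd_add (by fun_prop) (by fun_prop), pd_const_mul (by fun_prop), pd_const,
      pd_sub (by fun_prop) (by fun_prop), pd_const]
    ring
  rw [wtU_eq, pd_add (by fun_prop) (by fun_prop), pd_sub (by fun_prop) (by fun_prop),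
    pd_add (by fun_prop) (by fun_prop), pd_add (by fun_prop) (by fun_prop),
    pd_sub (by fun_prop) (by fun_prop), pd_const_mul (by fun_prop), pd_const_mul (by fun_prop),
    pd_const_mul (by fun_prop), pd_const_mul (by fun_prop), pd_const_mul (by fun_prop),
    pd_sq (by fun_prop), pd_mul (f := fun p => wtH K L p * wtQ L p) (by fun_prop) (by fun_prop),
    pd_mul (f := wtH K L) (by fun_prop) (by fun_prop),
    pd_mul (f := fun p => wtQ L p ^ 2) (by fun_prop) (by fun_prop), pd_sq (by fun_prop),
    pd_mul (g := crd o) (by fun_prop) (by fun_prop), e, pd_const]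
  ring

/-- The zero-order coefficient in the Carleman inequality. -/
theorem zeroOrder_wt (o : Fin n) (γ K L m : ℝ) (p : SpaceTime n) :
    -pd timeDir (wtU o γ K L m) p + 2 * ∑ j, pd (dir j) (wtU o γ K L m) p *
        pd (dir j) (wt o γ K L) p - 2 * m * wtU o γ K L m p =
      -(8 * wtQ L p + 2 * m) * (γ ^ 2 * wtH K L p ^ 2 - 4 * γ * wtH K L p * wtQ L p * crd o p
          + 4 * wtQ L p ^ 2 * nsq p)
      - 4 * (-γ ^ 2 * wtH K L p * (1 + 2 * K * (L - time p))
          + 2 * γ * (wtH K L p / 100 + wtQ L p * (1 + 2 * K * (L - time p))) * crd o p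
          - 4 / 100 * wtQ L p * nsq p)
      + γ * (2 * K) * crd o p
      + 2 * m * (-γ * (1 + 2 * K * (L - time p)) * crd o p + nsq p / 100) - 2 * m ^ 2 := by
  set H := wtH K L p
  set Q := wtQ L p
  set B := 1 + 2 * K * (L - time p)
  have hs : ∑ j, pd (dir j) (wtU o γ K L m) p * pd (dir j) (wt o γ K L) p =
      γ ^ 2 * H * (-4 * H * Q + B) + (8 * Q ^ 2 - 2 / 100) * γ * H * crd o p
        - 2 * γ * Q * (-4 * H * Q + B) * crd o p - 2 * Q * (8 * Q ^ 2 - 2 / 100) * nsq p := by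
    have : ∀ j, pd (dir j) (wtU o γ K L m) p * pd (dir j) (wt o γ K L) p =
        (if o = j then γ ^ 2 * H * (-4 * H * Q + B) + (8 * Q ^ 2 - 2 / 100) * γ * H * crd j p
          - 2 * γ * Q * (-4 * H * Q + B) * crd j p else 0)
        - 2 * Q * (8 * Q ^ 2 - 2 / 100) * crd j p ^ 2 := by
      intro j
      rw [pd_wtU, pd_wtH, pd_wtQ, pd_dir_time, pd_dir_crd, pd_dir_nsq, pd_dir_wt]
      simp only [H, Q, B]
      split_ifs <;> ring
    simp only [this, Finset.sum_sub_distrib, ← Finset.mul_sum]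
    simp [nsq]
  rw [hs, pd_wtU, pd_wtH, pd_wtQ, pd_timeDir_time, pd_timeDir_crd, pd_timeDir_nsq, wtU_eq]
  simp only [H, Q, B]
  ring
end SpaceTime

theorem wt_grad_coeff {c μ K L τ : ℝ} (hμ : μ = 1 + c ^ 2) (hK : K = 16 * μ)
    (hL : 64 * μ * L ≤ 1) (h0 : 0 ≤ τ) (h1 : τ ≤ L) {γ l N : ℝ} (hγ : 0 ≤ γ) (hl : 0 ≤ l)
    (hN : 0 ≤ N) {h q : ℝ} (hh : h = τ + K * τ ^ 2) (hq : q = 1 / 100 * (2 + τ)) :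
    γ * l - 2 * μ ^ 2 - c ^ 2 ≤
      (-(8 * q + 2 * μ) * (γ ^ 2 * h ^ 2 - 4 * γ * h * q * l + 4 * q ^ 2 * N)
      - 4 * (-γ ^ 2 * h * (1 + 2 * K * τ) + 2 * γ * (h / 100 + q * (1 + 2 * K * τ)) * l
          - 4 / 100 * q * N) + γ * (2 * K) * l
      + 2 * μ * (-γ * (1 + 2 * K * τ) * l + N / 100) - 2 * μ ^ 2)
      - 2 * c ^ 2 * (γ ^ 2 * h ^ 2 - 4 * γ * h * q * l + 4 * q ^ 2 * N) - c ^ 2 := by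
  have hμ1 : 1 ≤ μ := by nlinarith [sq_nonneg c]
  have hμL : μ * τ ≤ 1 / 64 := by nlinarith
  have hτ : τ ≤ 1 / 64 := by nlinarith
  have hq1 : 1 / 50 ≤ q := by linarith
  have hq2 : q ≤ 101 / 5000 := by linarith
  have hB : K * τ ≤ 1 / 4 := by rw [hK]; linarith
  have hB0 : 0 ≤ K * τ := by rw [hK]; positivity
  have hh0 : 0 ≤ h := by rw [hh, hK]; positivity
  have hhτ : h ≤ 5 / 4 * τ := by rw [hh]; nlinarith
  set B := 1 + 2 * K * τ with hBd
  have hB1 : 1 ≤ B := by rw [hBd]; linarith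
  have hB2 : B ≤ 3 / 2 := by rw [hBd]; linarith
  set P := 8 * q + 2 * μ + 2 * c ^ 2 with hP
  have hP1 : P ≤ 5 * μ := by rw [hP]; linarith
  have hP0 : 0 ≤ P := by rw [hP]; positivity
  have hPh : P * h ≤ 4 := by
    calc P * h ≤ 5 * μ * (5 / 4 * τ) := by gcongr
      _ ≤ 4 := by linarith
  have t1 : 0 ≤ γ ^ 2 * (h * (4 * B - P * h)) := by
    have : 0 ≤ 4 * B - P * h := by linarith
    positivity
  have t2 : 0 ≤ γ * l * (4 * (P * h * q) - 8 * (h / 100 + q * B) + 2 * K - 2 * μ * B - 1) := by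
    have a1 : 0 ≤ P * h * q := by positivity
    have a2 : q * B ≤ 101 / 5000 * (3 / 2) := by gcongr
    have a3 : μ * B ≤ μ * (3 / 2) := by gcongr
    have : 0 ≤ 4 * (P * h * q) - 8 * (h / 100 + q * B) + 2 * K - 2 * μ * B - 1 := by
      rw [hK]; nlinarith
    positivity
  have t3 : 0 ≤ N * (16 / 100 * q + 2 * μ / 100 - 4 * (P * q ^ 2)) := by
    have a1 : P * q ^ 2 ≤ (8 * q + 4 * μ) * (101 / 5000) ^ 2 := by
      gcongr
      rw [hP]; linarith
    have : 0 ≤ 16 / 100 * q + 2 * μ / 100 - 4 * (P * q ^ 2) := by linarith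
    positivity
  have : (-(8 * q + 2 * μ) * (γ ^ 2 * h ^ 2 - 4 * γ * h * q * l + 4 * q ^ 2 * N)
      - 4 * (-γ ^ 2 * h * B + 2 * γ * (h / 100 + q * B) * l
          - 4 / 100 * q * N) + γ * (2 * K) * l
      + 2 * μ * (-γ * B * l + N / 100) - 2 * μ ^ 2)
      - 2 * c ^ 2 * (γ ^ 2 * h ^ 2 - 4 * γ * h * q * l + 4 * q ^ 2 * N) - c ^ 2 =
      γ * l - 2 * μ ^ 2 - c ^ 2 + γ ^ 2 * (h * (4 * B - P * h)) +
      γ * l * (4 * (P * h * q) - 8 * (h / 100 + q * B) + 2 * K - 2 * μ * B - 1) +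
      N * (16 / 100 * q + 2 * μ / 100 - 4 * (P * q ^ 2)) := by
    rw [hP]; ring
  rw [this]
  linarith

set_option maxHeartbeats 400000 in
theorem wt_abs_bounds {μ K τ : ℝ} (hμ1 : 1 ≤ μ) (hK : K = 16 * μ)
    (hτ : 64 * μ * |τ| ≤ 1) {γ l N : ℝ} (hγ : 1 ≤ γ) (hl : l ^ 2 ≤ N)
    {h q : ℝ} (hh : h = τ + K * τ ^ 2) (hq : q = 1 / 100 * (2 + τ)) :
    (-(160 * μ ^ 2 * (γ ^ 2 * (1 + N))) ≤
      (-(8 * q + 2 * μ) * (γ ^ 2 * h ^ 2 - 4 * γ * h * q * l + 4 * q ^ 2 * N)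
      - 4 * (-γ ^ 2 * h * (1 + 2 * K * τ) + 2 * γ * (h / 100 + q * (1 + 2 * K * τ)) * l
          - 4 / 100 * q * N) + γ * (2 * K) * l
      + 2 * μ * (-γ * (1 + 2 * K * τ) * l + N / 100) - 2 * μ ^ 2)) ∧
    (γ ^ 2 * h ^ 2 - 4 * γ * (h * q * l) + 4 * (q ^ 2 * N)
      + γ * ((1 + 2 * K * τ) * l) - 1 / 100 * N + μ ≤ 160 * μ ^ 2 * (γ ^ 2 * (1 + N))) := by
  have hN : 0 ≤ N := (sq_nonneg l).trans hl
  have hτ1 : |τ| ≤ 1 / 64 := by nlinarith [abs_nonneg τ]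
  obtain ⟨hτa, hτb⟩ := abs_le.mp hτ1
  have hKτ : |K * τ| ≤ 1 / 4 := by
    rw [abs_mul, hK, abs_of_pos (by positivity : (0:ℝ) < 16 * μ)]; linarith
  obtain ⟨hKa, hKb⟩ := abs_le.mp hKτ
  have hh1 : |h| ≤ 1 := by
    have : h = τ * (1 + K * τ) := by rw [hh]; ring
    rw [this, abs_mul]
    have : |1 + K * τ| ≤ 2 := by rw [abs_le]; constructor <;> linarith
    nlinarith [abs_nonneg τ, abs_nonneg (1 + K * τ)]
  have hB1 : 0 ≤ 1 + 2 * K * τ := by linarith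
  have hB2 : 1 + 2 * K * τ ≤ 2 := by linarith
  set B := 1 + 2 * K * τ
  have hq0 : 0 ≤ q := by linarith
  have hq1 : q ≤ 1 / 40 := by linarith
  have hl1 : |l| ≤ 1 + N := by
    rw [abs_le]; constructor <;> nlinarith [sq_nonneg (l - 1), sq_nonneg (l + 1)]
  obtain ⟨hla, hlb⟩ := abs_le.mp hl1
  obtain ⟨hha, hhb⟩ := abs_le.mp hh1
  set G := γ ^ 2 * (1 + N) with hG
  have hγ2 : γ ≤ γ ^ 2 := by nlinarith
  have g1 : γ ^ 2 ≤ G := by rw [hG]; nlinarith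
  have g2 : γ * |l| ≤ G := mul_le_mul hγ2 hl1 (abs_nonneg l) (sq_nonneg γ)
  have g3 : N ≤ G := by rw [hG]; nlinarith
  have g4 : 1 ≤ G := by nlinarith
  have hh2 : h ^ 2 ≤ 1 := by nlinarith
  have s1 : γ ^ 2 * h ^ 2 ≤ G := by nlinarith
  have hbl : ∀ a : ℝ, |a| ≤ 2 → |a * (γ * l)| ≤ 2 * G := by
    intro a ha
    rw [abs_mul, abs_mul, abs_of_pos (by linarith : 0 < γ)]
    have : 0 ≤ γ * |l| := by positivity
    nlinarith [abs_nonneg a]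
  have ahq : |h * q| ≤ 2 := by
    rw [abs_mul, abs_of_nonneg hq0]; nlinarith [abs_nonneg h]
  obtain ⟨u1, u2⟩ := abs_le.mp (hbl (h * q) ahq)
  obtain ⟨u3, u4⟩ := abs_le.mp (hbl B (by rw [abs_of_nonneg hB1]; exact hB2))
  obtain ⟨u5, u6⟩ := abs_le.mp (hbl (h / 100 + q * B) (by
    rw [abs_le]; constructor <;> nlinarith))
  obtain ⟨u7, u8⟩ := abs_le.mp (hbl 1 (by norm_num))
  have s2 : q ^ 2 * N ≤ G := by
    have : q ^ 2 ≤ 1 := pow_le_one₀ hq0 (by linarith)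
    calc q ^ 2 * N ≤ 1 * N := mul_le_mul_of_nonneg_right this hN
      _ ≤ G := by linarith
  set S := γ ^ 2 * h ^ 2 - 4 * γ * h * q * l + 4 * q ^ 2 * N with hS
  have hS' : S = γ ^ 2 * h ^ 2 - 4 * (h * q * (γ * l)) + 4 * (q ^ 2 * N) := by rw [hS]; ring
  have hS1 : S ≤ 13 * G := by rw [hS']; linarith
  have s5 : -(2 * G) ≤ γ ^ 2 * (h * B) := by
    have : |h * B| ≤ 2 := by
      rw [abs_mul, abs_of_nonneg hB1]
      calc |h| * B ≤ 1 * 2 := mul_le_mul hh1 hB2 hB1 zero_le_one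
        _ = 2 := by norm_num
    have := mul_le_mul_of_nonneg_left (abs_le.mp this).1 (sq_nonneg γ)
    linarith
  have s6 : 0 ≤ q * N := by positivity
  have hμ2 : μ ≤ μ ^ 2 := by rw [pow_two]; exact le_mul_of_one_le_left (by linarith) hμ1
  have p5 : μ * G ≤ μ ^ 2 * G := mul_le_mul_of_nonneg_right hμ2 (by linarith)
  have p6 : G ≤ μ * G := le_mul_of_one_le_left (by linarith) hμ1
  have p7 : μ ^ 2 ≤ μ ^ 2 * G := le_mul_of_one_le_right (sq_nonneg μ) g4
  have p1 : (8 * q + 2 * μ) * S ≤ (1 + 2 * μ) * (13 * G) :=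
    (mul_le_mul_of_nonneg_left hS1 (by positivity)).trans
      (mul_le_mul_of_nonneg_right (by linarith) (by positivity))
  have p2 := mul_le_mul_of_nonneg_left u7 (zero_le_one.trans hμ1)
  have p3 := mul_le_mul_of_nonneg_left u4 (zero_le_one.trans hμ1)
  have p4 : 0 ≤ μ * N := by positivity
  constructor
  · have e : -(8 * q + 2 * μ) * S - 4 * (-γ ^ 2 * h * B + 2 * γ * (h / 100 + q * B) * l
          - 4 / 100 * q * N) + γ * (2 * K) * l + 2 * μ * (-γ * B * l + N / 100) - 2 * μ ^ 2 =
        -((8 * q + 2 * μ) * S) + 4 * (γ ^ 2 * (h * B)) - 8 * ((h / 100 + q * B) * (γ * l))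
          + 16 / 100 * (q * N) + 32 * (μ * (1 * (γ * l))) - 2 * (μ * (B * (γ * l)))
          + 2 / 100 * (μ * N) - 2 * μ ^ 2 := by rw [hK]; ring
    rw [e]
    linarith
  · have e : γ ^ 2 * h ^ 2 - 4 * γ * (h * q * l) + 4 * (q ^ 2 * N) + γ * (B * l) - 1 / 100 * N + μ
        = S + B * (γ * l) - 1 / 100 * N + μ := by rw [hS']; ring
    rw [e]
    linarith

namespace SpaceTime
variable {n : ℕ}

/-- The conjugated function `e^φ w`. -/
noncomputable def conj (o : Fin n) (γ K L : ℝ) (w : SpaceTime n → ℝ) (p : SpaceTime n) : ℝ :=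
  Real.exp (wt o γ K L p) * w p

/-- The density of the bulk term in the Carleman inequality. -/
noncomputable def bulk (o : Fin n) (γ K L m : ℝ) (w : SpaceTime n → ℝ) (p : SpaceTime n) : ℝ :=
  4 * ∑ i, ∑ j, pd (dir i) (pd (dir j) (wt o γ K L)) p * pd (dir i) (conj o γ K L w) p *
      pd (dir j) (conj o γ K L w) p
    + 2 * m * ∑ i, pd (dir i) (conj o γ K L w) p ^ 2
    + (-pd timeDir (wtU o γ K L m) p + 2 * ∑ j, pd (dir j) (wtU o γ K L m) p *
        pd (dir j) (wt o γ K L) p - 2 * m * wtU o γ K L m p) * conj o γ K L w p ^ 2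
    - 1 / 2 * (Real.exp (wt o γ K L p) * (pd timeDir w p + lapl dir w p)) ^ 2

theorem bulk_eq (o : Fin n) (γ K L m : ℝ) (w : SpaceTime n → ℝ) (p : SpaceTime n) :
    bulk o γ K L m w p = (2 * m - 8 * wtQ L p) * gradSq dir (conj o γ K L w) p
    + (-pd timeDir (wtU o γ K L m) p + 2 * ∑ j, pd (dir j) (wtU o γ K L m) p *
        pd (dir j) (wt o γ K L) p - 2 * m * wtU o γ K L m p) * conj o γ K L w p ^ 2
    - 1 / 2 * (Real.exp (wt o γ K L p) * (pd timeDir w p + lapl dir w p)) ^ 2 := by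
  rw [bulk, hessian_wt, gradSq]; ring

theorem exp_mul_gradSq_le (o : Fin n) (γ K L : ℝ) {w : SpaceTime n → ℝ} (hw : ContDiff ℝ ∞ w)
    (p : SpaceTime n) : Real.exp (wt o γ K L p) ^ 2 * gradSq dir w p ≤
      2 * gradSq dir (conj o γ K L w) p +
        2 * (∑ i, pd (dir i) (wt o γ K L) p ^ 2) * conj o γ K L w p ^ 2 := by
  simp only [gradSq, Finset.mul_sum, Finset.sum_mul, ← Finset.sum_add_distrib]
  refine Finset.sum_le_sum fun i _ => ?_
  have : pd (dir i) (conj o γ K L w) p =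
      Real.exp (wt o γ K L p) * (pd (dir i) w p + pd (dir i) (wt o γ K L) p * w p) := by
    unfold conj
    rw [pd_mul (by fun_prop) hw, pd_exp (by fun_prop)]; ring
  rw [this, conj]
  set E := Real.exp (wt o γ K L p)
  set a := pd (dir i) w p
  set b := pd (dir i) (wt o γ K L) p * w p
  nlinarith [sq_nonneg (E * (a + 2 * b))]

theorem sq_le_bulk (o : Fin n) {c μ γ K L : ℝ} (hμ : μ = 1 + c ^ 2) (hK : K = 16 * μ)
    (hL : 64 * μ * L ≤ 1) {w : SpaceTime n → ℝ} (hw : ContDiff ℝ ∞ w) {p : SpaceTime n}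
    (ht0 : 0 ≤ time p) (htL : time p ≤ L) (hγ : 0 ≤ γ) (hl : 0 ≤ crd o p)
    (hγl : 1 + 2 * μ ^ 2 + c ^ 2 ≤ γ * crd o p)
    (hP : |pd timeDir w p + lapl dir w p| ≤ c * (√(gradSq dir w p) + |w p|)) :
    conj o γ K L w p ^ 2 ≤ bulk o γ K L μ w p := by
  have key := wt_grad_coeff hμ hK hL (τ := L - time p) (by linarith) (by linarith) hγ hl
    (nsq_nonneg p) (h := wtH K L p) (q := wtQ L p) rfl rfl
  rw [bulk_eq, zeroOrder_wt]
  have hg := exp_mul_gradSq_le o γ K L hw p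
  rw [gradSq_wt] at hg
  set E := Real.exp (wt o γ K L p) with hE
  set v := conj o γ K L w p with hv
  have hvE : v = E * w p := rfl
  set S := γ ^ 2 * wtH K L p ^ 2 - 4 * γ * wtH K L p * wtQ L p * crd o p + 4 * wtQ L p ^ 2 * nsq p
  have hf : (E * (pd timeDir w p + lapl dir w p)) ^ 2 ≤
      2 * c ^ 2 * (E ^ 2 * gradSq dir w p) + 2 * c ^ 2 * v ^ 2 := by
    have h1 : (pd timeDir w p + lapl dir w p) ^ 2 ≤ 2 * c ^ 2 * (gradSq dir w p + w p ^ 2) := by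
      calc (pd timeDir w p + lapl dir w p) ^ 2 = |pd timeDir w p + lapl dir w p| ^ 2 :=
          (sq_abs _).symm
        _ ≤ (c * (√(gradSq dir w p) + |w p|)) ^ 2 := by gcongr
        _ ≤ c ^ 2 * (2 * (√(gradSq dir w p) ^ 2 + |w p| ^ 2)) := by
          rw [mul_pow]; gcongr; exact add_sq_le
        _ = 2 * c ^ 2 * (gradSq dir w p + w p ^ 2) := by
          rw [Real.sq_sqrt (gradSq_nonneg _ _ _), sq_abs]; ring
    rw [mul_pow, hvE, mul_pow]
    nlinarith [mul_le_mul_of_nonneg_left h1 (sq_nonneg E)]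
  have hq : 0 ≤ 2 * μ - 8 * wtQ L p - 2 * c ^ 2 := by
    have : L ≤ 1 / 64 := by nlinarith [sq_nonneg c]
    rw [hμ, wtQ]; linarith
  have hq' := mul_nonneg hq (gradSq_nonneg dir (conj o γ K L w) p)
  have hg' := mul_le_mul_of_nonneg_left hg (sq_nonneg c)
  have hk' := mul_le_mul_of_nonneg_right key (sq_nonneg v)
  have hk'' : v ^ 2 * 1 ≤ v ^ 2 * (γ * crd o p - 2 * μ ^ 2 - c ^ 2) :=
    mul_le_mul_of_nonneg_left (by linarith) (sq_nonneg v)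
  linarith

theorem le_bulk_of_sq_le (o : Fin n) {μ γ K L : ℝ} (hμ : 1 ≤ μ) (hK : K = 16 * μ)
    (hL : 64 * μ * L ≤ 1) {w : SpaceTime n → ℝ} {p : SpaceTime n}
    (ht0 : 0 ≤ time p) (htL : time p ≤ 2 * L) (hγ : 1 ≤ γ) {F : ℝ}
    (hP : (pd timeDir w p + lapl dir w p) ^ 2 ≤ F) :
    -(160 * μ ^ 2 * (γ ^ 2 * (1 + nsq p))) * conj o γ K L w p ^ 2 -
      1 / 2 * Real.exp (wt o γ K L p) ^ 2 * F ≤ bulk o γ K L μ w p := by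
  have hτ : |L - time p| ≤ L := by rw [abs_le]; constructor <;> linarith
  have key := (wt_abs_bounds hμ hK (τ := L - time p) (by nlinarith) hγ (crd_sq_le o p)
    (h := wtH K L p) (q := wtQ L p) rfl rfl).1
  rw [bulk_eq, zeroOrder_wt]
  have hq : 0 ≤ 2 * μ - 8 * wtQ L p := by
    have : L ≤ 1 / 64 := by nlinarith
    rw [wtQ]; linarith
  have hq' := mul_nonneg hq (gradSq_nonneg dir (conj o γ K L w) p)
  have hk' := mul_le_mul_of_nonneg_right key (sq_nonneg (conj o γ K L w p))
  have hF := mul_le_mul_of_nonneg_left hP (sq_nonneg (Real.exp (wt o γ K L p)))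
  rw [mul_pow]
  linarith

theorem wtU_le (o : Fin n) {μ γ K L : ℝ} (hμ : 1 ≤ μ) (hK : K = 16 * μ)
    (hL : 64 * μ * L ≤ 1) {p : SpaceTime n}
    (ht0 : 0 ≤ time p) (htL : time p ≤ 2 * L) (hγ : 1 ≤ γ) :
    wtU o γ K L μ p ≤ 160 * μ ^ 2 * (γ ^ 2 * (1 + nsq p)) := by
  have hτ : |L - time p| ≤ L := by rw [abs_le]; constructor <;> linarith
  rw [wtU_eq]
  exact (wt_abs_bounds hμ hK (τ := L - time p) (by nlinarith) hγ (crd_sq_le o p)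
    (h := wtH K L p) (q := wtQ L p) rfl rfl).2

end SpaceTime

@[fun_prop]
theorem contDiff_smoothTransition' : ContDiff ℝ ∞ smoothTransition := Real.smoothTransition.contDiff

theorem contDiff_deriv {f : ℝ → ℝ} (hf : ContDiff ℝ ∞ f) : ContDiff ℝ ∞ (deriv f) :=
  (contDiff_infty_iff_deriv.mp hf).2

@[fun_prop]
theorem contDiff_deriv_smoothTransition : ContDiff ℝ ∞ (deriv smoothTransition) :=
  contDiff_deriv contDiff_smoothTransition'

@[fun_prop]
theorem contDiff_deriv_deriv_smoothTransition : ContDiff ℝ ∞ (deriv (deriv smoothTransition)) :=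
  contDiff_deriv contDiff_deriv_smoothTransition

theorem deriv_smoothTransition_of_notMem {x : ℝ} (hx : x ∉ Set.Icc (0 : ℝ) 1) :
    deriv smoothTransition x = 0 := by
  rw [Set.mem_Icc, not_and_or, not_le, not_le] at hx
  have : smoothTransition =ᶠ[𝓝 x] fun _ => smoothTransition x := by
    rcases hx with hx | hx
    · filter_upwards [Iio_mem_nhds hx] with y hy
      rw [smoothTransition.zero_of_nonpos hx.le, smoothTransition.zero_of_nonpos (le_of_lt hy)]
    · filter_upwards [Ioi_mem_nhds hx] with y hy
      rw [smoothTransition.one_of_one_le hx.le, smoothTransition.one_of_one_le (le_of_lt hy)]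
  rw [this.deriv_eq, deriv_const]

theorem deriv_deriv_smoothTransition_of_notMem {x : ℝ} (hx : x ∉ Set.Icc (0 : ℝ) 1) :
    deriv (deriv smoothTransition) x = 0 := by
  have : deriv smoothTransition =ᶠ[𝓝 x] fun _ => 0 := by
    filter_upwards [isClosed_Icc.isOpen_compl.mem_nhds hx] with y hy
    exact deriv_smoothTransition_of_notMem hy
  rw [this.deriv_eq, deriv_const]

theorem deriv_smoothTransition_nonneg (x : ℝ) : 0 ≤ deriv smoothTransition x :=
  smoothTransition.monotone.deriv_nonneg

theorem exists_bound_smoothTransition : ∃ C, 1 ≤ C ∧ ∀ x, |deriv smoothTransition x| ≤ C ∧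
    |deriv (deriv smoothTransition) x| ≤ C := by
  obtain ⟨A, hA⟩ := contDiff_deriv_smoothTransition.continuous.bounded_above_of_compact_support
    (HasCompactSupport.intro isCompact_Icc fun x hx => deriv_smoothTransition_of_notMem hx)
  obtain ⟨B, hB⟩ := contDiff_deriv_deriv_smoothTransition.continuous.bounded_above_of_compact_support
    (HasCompactSupport.intro isCompact_Icc fun x hx => deriv_deriv_smoothTransition_of_notMem hx)
  exact ⟨max 1 (max A B), le_max_left _ _, fun x =>
    ⟨(hA x).trans ((le_max_left _ _).trans (le_max_right _ _)),
      (hB x).trans ((le_max_right _ _).trans (le_max_right _ _))⟩⟩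

namespace SpaceTime
variable {n : ℕ}

/-- Smooth functions whose values and relevant derivatives are bounded by `C`. -/
structure ParabolicBdd (C : ℝ) (f : SpaceTime n → ℝ) : Prop where
  smooth : ContDiff ℝ ∞ f
  abs_le : ∀ p, |f p| ≤ C
  time_le : ∀ p, |pd timeDir f p| ≤ C
  grad_le : ∀ p, gradSq dir f p ≤ C
  lapl_le : ∀ p, |lapl dir f p| ≤ C

theorem ParabolicBdd.nonneg {C : ℝ} {f : SpaceTime n → ℝ} (h : ParabolicBdd C f) : 0 ≤ C :=
  (abs_nonneg _).trans (h.abs_le 0)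

theorem lapl_mul {f g : SpaceTime n → ℝ} (hf : ContDiff ℝ ∞ f) (hg : ContDiff ℝ ∞ g)
    (p : SpaceTime n) : lapl dir (fun p => f p * g p) p =
      lapl dir f p * g p + f p * lapl dir g p + 2 * ∑ i, pd (dir i) f p * pd (dir i) g p := by
  simp only [lapl, Finset.sum_mul, Finset.mul_sum, ← Finset.sum_add_distrib]
  refine Finset.sum_congr rfl fun i _ => ?_
  rw [show pd (dir i) (fun p => f p * g p) = fun p => pd (dir i) f p * g p + f p * pd (dir i) g p
    from funext fun p => pd_mul hf hg _ _, pd_add (by fun_prop) (by fun_prop),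
    pd_mul (by fun_prop) (by fun_prop), pd_mul (by fun_prop) (by fun_prop)]
  ring

theorem gradSq_mul_le {f g : SpaceTime n → ℝ} (hf : ContDiff ℝ ∞ f) (hg : ContDiff ℝ ∞ g)
    (p : SpaceTime n) : gradSq dir (fun p => f p * g p) p ≤
      2 * g p ^ 2 * gradSq dir f p + 2 * f p ^ 2 * gradSq dir g p := by
  simp only [gradSq, Finset.mul_sum, ← Finset.sum_add_distrib]
  refine Finset.sum_le_sum fun i _ => ?_
  rw [pd_mul hf hg]
  nlinarith [sq_nonneg (pd (dir i) f p * g p - f p * pd (dir i) g p)]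

theorem abs_sum_pd_mul_le (f g : SpaceTime n → ℝ) (p : SpaceTime n) :
    2 * |∑ i, pd (dir i) f p * pd (dir i) g p| ≤ gradSq dir f p + gradSq dir g p := by
  have h := sq_sum_pd_mul_le dir f g p
  have h1 := gradSq_nonneg dir f p
  have h2 := gradSq_nonneg dir g p
  refine abs_le_of_sq_le_sq' (a := 2 * |∑ i, pd (dir i) f p * pd (dir i) g p|) ?_ (by linarith) |>.2
  rw [mul_pow, sq_abs]
  nlinarith [sq_nonneg (gradSq dir f p - gradSq dir g p)]

theorem ParabolicBdd.mul {C D : ℝ} {f g : SpaceTime n → ℝ} (hf : ParabolicBdd C f)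
    (hg : ParabolicBdd D g) :
    ParabolicBdd (2 * (C * D) + 2 * D ^ 2 * C + 2 * C ^ 2 * D + C + D) (fun p => f p * g p) := by
  have hC := hf.nonneg
  have hD := hg.nonneg
  have hCD : 0 ≤ C * D := by positivity
  have h2 : 0 ≤ D ^ 2 * C := by positivity
  have h3 : 0 ≤ C ^ 2 * D := by positivity
  have prod : ∀ a b : ℝ, |a| ≤ C → |b| ≤ D → |a * b| ≤ C * D := fun a b ha hb => by
    rw [abs_mul]; exact mul_le_mul ha hb (abs_nonneg _) hC
  refine ⟨hf.smooth.mul hg.smooth, fun p => ?_, fun p => ?_, fun p => ?_, fun p => ?_⟩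
  · have := prod _ _ (hf.abs_le p) (hg.abs_le p)
    linarith
  · rw [pd_mul hf.smooth hg.smooth]
    have h1 := prod _ _ (hf.time_le p) (hg.abs_le p)
    have h2 := prod _ _ (hf.abs_le p) (hg.time_le p)
    have := abs_add_le (pd timeDir f p * g p) (f p * pd timeDir g p)
    linarith
  · refine (gradSq_mul_le hf.smooth hg.smooth p).trans ?_
    have a1 : g p ^ 2 ≤ D ^ 2 := sq_le_sq' (by linarith [(_root_.abs_le.mp (hg.abs_le p)).1])
      (_root_.abs_le.mp (hg.abs_le p)).2
    have a2 : f p ^ 2 ≤ C ^ 2 := sq_le_sq' (by linarith [(_root_.abs_le.mp (hf.abs_le p)).1])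
      (_root_.abs_le.mp (hf.abs_le p)).2
    have b1 := mul_le_mul a1 (hf.grad_le p) (gradSq_nonneg _ _ _) (sq_nonneg D)
    have b2 := mul_le_mul a2 (hg.grad_le p) (gradSq_nonneg _ _ _) (sq_nonneg C)
    linarith
  · rw [lapl_mul hf.smooth hg.smooth]
    have h1 := prod _ _ (hf.lapl_le p) (hg.abs_le p)
    have h2 := prod _ _ (hf.abs_le p) (hg.lapl_le p)
    have h3 := abs_sum_pd_mul_le f g p
    have h4 := hf.grad_le p
    have h5 := hg.grad_le p
    rw [_root_.abs_le] at h1 h2 ⊢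
    have h6 := neg_abs_le (∑ i, pd (dir i) f p * pd (dir i) g p)
    have h7 := le_abs_self (∑ i, pd (dir i) f p * pd (dir i) g p)
    constructor <;> linarith

theorem lapl_comp {s : ℝ → ℝ} {f : SpaceTime n → ℝ} (hs : ContDiff ℝ ∞ s) (hf : ContDiff ℝ ∞ f)
    (p : SpaceTime n) : lapl dir (fun p => s (f p)) p =
      deriv (deriv s) (f p) * gradSq dir f p + deriv s (f p) * lapl dir f p := by
  simp only [lapl, gradSq, Finset.mul_sum, ← Finset.sum_add_distrib]
  refine Finset.sum_congr rfl fun i _ => ?_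
  have h1 := contDiff_deriv hs
  rw [show pd (dir i) (fun p => s (f p)) = fun p => deriv s (f p) * pd (dir i) f p
    from funext fun p => pd_comp hs hf _ _, pd_mul (by fun_prop) (by fun_prop),
    pd_comp (by fun_prop) hf]
  ring

theorem gradSq_comp {s : ℝ → ℝ} {f : SpaceTime n → ℝ} (hs : ContDiff ℝ ∞ s) (hf : ContDiff ℝ ∞ f)
    (p : SpaceTime n) : gradSq dir (fun p => s (f p)) p = deriv s (f p) ^ 2 * gradSq dir f p := by
  simp only [gradSq, Finset.mul_sum]
  refine Finset.sum_congr rfl fun i _ => ?_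
  rw [pd_comp hs hf]
  ring

/-- Composition of the standard transition function with a function whose derivatives are bounded
where the transition takes place. -/
theorem exists_parabolicBdd_comp (A : ℝ) : ∃ C, ∀ f : SpaceTime n → ℝ, ContDiff ℝ ∞ f →
    (∀ p, 0 ≤ f p → |pd timeDir f p| ≤ A ∧ gradSq dir f p ≤ A ∧ |lapl dir f p| ≤ A) →
    ParabolicBdd C (fun p => smoothTransition (f p)) := by
  obtain ⟨B, hB1, hB⟩ := exists_bound_smoothTransition
  refine ⟨1 + B * |A| + B ^ 2 * |A| + B * |A|, fun f hf hA => ?_⟩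
  have hA0 := abs_nonneg A
  have hAA := le_abs_self A
  have q1 : 0 ≤ B * |A| := by positivity
  have q2 : 0 ≤ B ^ 2 * |A| := by positivity
  have hneg : ∀ p, f p < 0 → deriv smoothTransition (f p) = 0 ∧
      deriv (deriv smoothTransition) (f p) = 0 := fun p hp =>
    ⟨deriv_smoothTransition_of_notMem fun h => absurd h.1 (not_le.mpr hp),
      deriv_deriv_smoothTransition_of_notMem fun h => absurd h.1 (not_le.mpr hp)⟩
  refine ⟨by fun_prop, fun p => ?_, fun p => ?_, fun p => ?_, fun p => ?_⟩
  · rw [abs_of_nonneg (smoothTransition.nonneg _)]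
    linarith [smoothTransition.le_one (f p)]
  · rw [pd_comp (by fun_prop) hf]
    rcases lt_or_ge (f p) 0 with h | h
    · rw [(hneg p h).1, zero_mul, abs_zero]; positivity
    · rw [abs_mul]
      have := mul_le_mul (hB (f p)).1 ((hA p h).1.trans hAA) (abs_nonneg _) (by linarith)
      linarith
  · rw [gradSq_comp (by fun_prop) hf]
    rcases lt_or_ge (f p) 0 with h | h
    · rw [(hneg p h).1]; nlinarith
    · have h1 : deriv smoothTransition (f p) ^ 2 ≤ B ^ 2 := by
        rw [← sq_abs]; exact pow_le_pow_left₀ (abs_nonneg _) (hB (f p)).1 2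
      have := mul_le_mul h1 ((hA p h).2.1.trans hAA) (gradSq_nonneg _ _ _) (sq_nonneg B)
      linarith
  · rw [lapl_comp (by fun_prop) hf]
    rcases lt_or_ge (f p) 0 with h | h
    · rw [(hneg p h).1, (hneg p h).2]; simp; linarith
    · refine (abs_add_le _ _).trans ?_
      rw [abs_mul, abs_mul, abs_of_nonneg (gradSq_nonneg dir f p)]
      have h1 := mul_le_mul (hB (f p)).2 ((hA p h).2.1.trans hAA) (gradSq_nonneg _ _ _) (by linarith)
      have h2 := mul_le_mul (hB (f p)).1 ((hA p h).2.2.trans hAA) (abs_nonneg _) (by linarith)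
      linarith

/-- The cutoff function to `{crd o > δ, |x|² < 2 r², t < 2 L}`. -/
noncomputable def cutoff (o : Fin n) (δ r L : ℝ) (p : SpaceTime n) : ℝ :=
  smoothTransition (crd o p / δ - 1) * smoothTransition (2 - nsq p / r ^ 2) *
    smoothTransition (2 - time p / L)

theorem pd_aff {f : SpaceTime n → ℝ} (hf : ContDiff ℝ ∞ f) (a b : ℝ) (v p : SpaceTime n) :
    pd v (fun p => a * f p + b) p = a * pd v f p := by
  rw [pd_add (by fun_prop) (by fun_prop), pd_const_mul hf, pd_const, add_zero]

theorem lapl_aff {f : SpaceTime n → ℝ} (hf : ContDiff ℝ ∞ f) (a b : ℝ) (p : SpaceTime n) :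
    lapl dir (fun p => a * f p + b) p = a * lapl dir f p := by
  simp only [lapl, Finset.mul_sum]
  refine Finset.sum_congr rfl fun i _ => ?_
  rw [show pd (dir i) (fun p => a * f p + b) = fun p => a * pd (dir i) f p
    from funext fun p => pd_aff hf _ _ _ _, pd_const_mul (by fun_prop)]

theorem gradSq_aff {f : SpaceTime n → ℝ} (hf : ContDiff ℝ ∞ f) (a b : ℝ) (p : SpaceTime n) :
    gradSq dir (fun p => a * f p + b) p = a ^ 2 * gradSq dir f p := by
  simp only [gradSq, Finset.mul_sum]
  refine Finset.sum_congr rfl fun i _ => ?_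
  rw [pd_aff hf]; ring

theorem gradSq_crd (o : Fin n) (p : SpaceTime n) : gradSq dir (crd o) p = 1 := by
  simp [gradSq, pd_dir_crd]

theorem lapl_crd (o : Fin n) (p : SpaceTime n) : lapl dir (crd o) p = 0 := by
  have : ∀ i, pd (dir i) (crd o) = fun _ => if o = i then 1 else 0 :=
    fun i => funext fun p => pd_dir_crd i o p
  simp [lapl, this, pd_const]

theorem gradSq_time (p : SpaceTime n) : gradSq dir time p = 0 := by
  simp [gradSq, pd_dir_time]

theorem lapl_time (p : SpaceTime n) : lapl dir time p = 0 := by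
  have : ∀ i : Fin n, pd (dir i) time = fun _ => 0 := fun i => funext fun p => pd_dir_time i p
  simp [lapl, this, pd_const]

theorem gradSq_nsq (p : SpaceTime n) : gradSq dir nsq p = 4 * nsq p := by
  simp only [gradSq, pd_dir_nsq, nsq, Finset.mul_sum]
  exact Finset.sum_congr rfl fun i _ => by ring

theorem lapl_nsq (p : SpaceTime n) : lapl dir nsq p = 2 * n := by
  have : ∀ i : Fin n, pd (dir i) nsq = fun p => 2 * crd i p :=
    fun i => funext fun p => pd_dir_nsq i p
  simp [lapl, this, pd_const_mul, contDiff_crd, pd_dir_crd]; ring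

theorem exists_parabolicBdd_cutoff (o : Fin n) (δ L : ℝ) :
    ∃ C, ∀ r, 1 ≤ r → ParabolicBdd C (cutoff o δ r L) := by
  obtain ⟨C₁, h₁⟩ := exists_parabolicBdd_comp (n := n) (1 / δ ^ 2)
  obtain ⟨C₂, h₂⟩ := exists_parabolicBdd_comp (n := n) (8 + 2 * n)
  obtain ⟨C₃, h₃⟩ := exists_parabolicBdd_comp (n := n) |1 / L|
  refine ⟨_, fun r hr => ParabolicBdd.mul (ParabolicBdd.mul (h₁ _ (by fun_prop) fun p _ => ?_)
    (h₂ _ (by fun_prop) fun p hp => ?_)) (h₃ _ (by fun_prop) fun p _ => ?_)⟩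
  · rw [show (fun p : SpaceTime n => crd o p / δ - 1) = fun p => (1 / δ) * crd o p + -1 from
      funext fun p => by ring, pd_aff (by fun_prop), gradSq_aff (by fun_prop),
      lapl_aff (by fun_prop), pd_timeDir_crd, gradSq_crd, lapl_crd]
    simp; positivity
  · rw [show (fun p : SpaceTime n => 2 - nsq p / r ^ 2) = fun p => (-(1 / r ^ 2)) * nsq p + 2 from
      funext fun p => by ring, pd_aff (by fun_prop), gradSq_aff (by fun_prop),
      lapl_aff (by fun_prop), pd_timeDir_nsq, gradSq_nsq, lapl_nsq]
    have hr2 : 1 / r ^ 2 ≤ 1 := by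
      rw [div_le_one (by positivity)]; exact one_le_pow₀ hr
    have hr0 : 0 ≤ 1 / r ^ 2 := by positivity
    have hn : (0 : ℝ) ≤ 2 * n := by positivity
    set k := 1 / r ^ 2 with hk
    have hkN : k * nsq p ≤ 2 := by
      have : k * nsq p = nsq p / r ^ 2 := by rw [hk]; ring
      linarith
    refine ⟨by simp; positivity, ?_, ?_⟩
    · calc (-k) ^ 2 * (4 * nsq p) = 4 * (k * (k * nsq p)) := by ring
        _ ≤ 4 * (1 * 2) := by
          have := mul_nonneg hr0 (nsq_nonneg p)
          gcongr
        _ ≤ _ := by linarith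
    · rw [abs_mul, abs_neg, abs_of_nonneg hr0, abs_of_nonneg hn]
      nlinarith
  · rw [show (fun p : SpaceTime n => 2 - time p / L) = fun p => (-(1 / L)) * time p + 2 from
      funext fun p => by ring, pd_aff (by fun_prop), gradSq_aff (by fun_prop),
      lapl_aff (by fun_prop), pd_timeDir_time, gradSq_time, lapl_time]
    simp

theorem gradSq_congr {f g : SpaceTime n → ℝ} {p : SpaceTime n} (h : f =ᶠ[𝓝 p] g) :
    gradSq dir f p = gradSq dir g p := by
  simp only [gradSq, pd_congr h]

theorem lapl_congr {f g : SpaceTime n → ℝ} {p : SpaceTime n} (h : f =ᶠ[𝓝 p] g) :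
    lapl dir f p = lapl dir g p := by
  simp only [lapl]
  refine Finset.sum_congr rfl fun i _ => pd_congr ?_ _
  filter_upwards [h.eventuallyEq_nhds] with q hq using pd_congr hq _

theorem heat_congr {f g : SpaceTime n → ℝ} {p : SpaceTime n} (h : f =ᶠ[𝓝 p] g) :
    pd timeDir f p + lapl dir f p = pd timeDir g p + lapl dir g p := by
  rw [lapl_congr h, pd_congr h]

theorem cutoff_nonneg (o : Fin n) (δ r L : ℝ) (p : SpaceTime n) : 0 ≤ cutoff o δ r L p := by
  unfold cutoff
  have := fun x => smoothTransition.nonneg x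
  exact mul_nonneg (mul_nonneg (this _) (this _)) (this _)

theorem cutoff_le_one (o : Fin n) (δ r L : ℝ) (p : SpaceTime n) : cutoff o δ r L p ≤ 1 := by
  unfold cutoff
  exact mul_le_one₀ (mul_le_one₀ (smoothTransition.le_one _) (smoothTransition.nonneg _)
    (smoothTransition.le_one _)) (smoothTransition.nonneg _) (smoothTransition.le_one _)

theorem cutoff_eq_one (o : Fin n) {δ r L : ℝ} (hδ : 0 < δ) (hr : 0 < r) (hL : 0 < L)
    {p : SpaceTime n} (h1 : 2 * δ ≤ crd o p) (h2 : nsq p ≤ r ^ 2) (h3 : time p ≤ L) :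
    cutoff o δ r L p = 1 := by
  unfold cutoff
  have hr2 : 0 < r ^ 2 := by positivity
  have a1 := (le_div_iff₀ hδ).mpr h1
  have a2 := (div_le_one hr2).mpr h2
  have a3 := (div_le_one hL).mpr h3
  rw [smoothTransition.one_of_one_le (by linarith), smoothTransition.one_of_one_le (by linarith),
    smoothTransition.one_of_one_le (by linarith)]
  norm_num

theorem cutoff_eq_zero (o : Fin n) {δ r L : ℝ} (hδ : 0 < δ) (hr : 0 < r) (hL : 0 < L)
    {p : SpaceTime n} (h : ¬(δ < crd o p ∧ nsq p < 2 * r ^ 2 ∧ time p < 2 * L)) :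
    cutoff o δ r L p = 0 := by
  unfold cutoff
  have hr2 : 0 < r ^ 2 := by positivity
  rw [not_and_or, not_and_or, not_lt, not_lt, not_lt] at h
  rcases h with h | h | h
  · have a1 := (div_le_one hδ).mpr h
    rw [smoothTransition.zero_of_nonpos (x := crd o p / δ - 1) (by linarith)]; simp
  · have a1 := (le_div_iff₀ hr2).mpr h
    rw [smoothTransition.zero_of_nonpos (x := 2 - nsq p / r ^ 2) (by linarith)]; simp
  · have a1 := (le_div_iff₀ hL).mpr h
    rw [smoothTransition.zero_of_nonpos (x := 2 - time p / L) (by linarith)]; simp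

@[fun_prop]
theorem contDiff_cutoff (o : Fin n) (δ r L : ℝ) : ContDiff ℝ ∞ (cutoff o δ r L) := by
  unfold cutoff; fun_prop

theorem exp_wt_le (o : Fin n) {γ K L δ r : ℝ} (hK : 0 ≤ K) (hKL : K * L ≤ 1) (hL1 : L ≤ 1)
    (hγ : 0 ≤ γ) (hr : 200 * γ * (L + K * L ^ 2) ≤ r) {p : SpaceTime n}
    (ht0 : 0 ≤ time p) (htL : time p ≤ 2 * L) (hl : 0 ≤ crd o p)
    (h : crd o p ≤ 2 * δ ∨ r ^ 2 ≤ nsq p ∨ L ≤ time p) (hδ : 0 ≤ δ) :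
    Real.exp (wt o γ K L p) ^ 2 ≤
      Real.exp (4 * γ * (L + K * L ^ 2) * δ) * Real.exp (-(nsq p / 100)) := by
  rw [← Real.exp_nat_mul, ← Real.exp_add]
  refine Real.exp_le_exp.mpr ?_
  have hN := nsq_nonneg p
  have hL0 : 0 ≤ L := by linarith
  set H := L + K * L ^ 2 with hH
  have hH0 : 0 ≤ H := by positivity
  have hh : wtH K L p ≤ H := by
    have : (L - time p) ^ 2 ≤ L ^ 2 := sq_le_sq' (by linarith) (by linarith)
    have := mul_le_mul_of_nonneg_left this hK
    rw [wtH]; linarith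
  have hq : nsq p / 100 ≤ wtQ L p * nsq p := by
    rw [wtQ]; nlinarith
  have h4 : 0 ≤ 4 * γ * H * δ := by positivity
  have hγl : 0 ≤ γ * crd o p := by positivity
  have hhl : γ * (wtH K L p * crd o p) ≤ γ * crd o p * H := by
    have := mul_le_mul_of_nonneg_left hh hγl
    linarith
  simp only [wt, Nat.cast_ofNat]
  rcases h with h | h | h
  · have : γ * crd o p * H ≤ γ * (2 * δ) * H := by gcongr
    linarith
  · have hc : crd o p ≤ ‖p.1‖ := by
      refine le_of_sq_le_sq ?_ (norm_nonneg _)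
      rw [← nsq_eq]; exact crd_sq_le o p
    have hr' : r ≤ ‖p.1‖ := by
      refine le_of_sq_le_sq ?_ (norm_nonneg _)
      rw [← nsq_eq]; exact h
    have : γ * crd o p * H ≤ γ * ‖p.1‖ * H := by gcongr
    have h5 : 200 * γ * H * ‖p.1‖ ≤ ‖p.1‖ * ‖p.1‖ := by
      have := norm_nonneg p.1
      gcongr; linarith
    rw [nsq_eq] at *
    linarith
  · have hh0 : wtH K L p ≤ 0 := by
      have e : wtH K L p = -((time p - L) * (1 - K * (time p - L))) := by rw [wtH]; ring
      have : K * (time p - L) ≤ K * L := by gcongr; linarith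
      have : 0 ≤ (time p - L) * (1 - K * (time p - L)) := mul_nonneg (by linarith) (by linarith)
      linarith
    have : γ * crd o p * wtH K L p ≤ 0 := mul_nonpos_of_nonneg_of_nonpos hγl hh0
    linarith

theorem sq_heat_mul_le {C c : ℝ} {χ U : SpaceTime n → ℝ} (hχ : ParabolicBdd C χ)
    (hU : ContDiff ℝ ∞ U) {p : SpaceTime n}
    (hP : |pd timeDir U p + lapl dir U p| ≤ c * (√(gradSq dir U p) + |U p|)) :
    (pd timeDir (fun p => χ p * U p) p + lapl dir (fun p => χ p * U p) p) ^ 2 ≤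
      (6 * C ^ 2 * c ^ 2 + 12 * C ^ 2 + 12 * C) * (gradSq dir U p + U p ^ 2) := by
  have hC := hχ.nonneg
  have hG := gradSq_nonneg dir U p
  rw [pd_mul hχ.smooth hU, lapl_mul hχ.smooth hU]
  set D := ∑ i, pd (dir i) χ p * pd (dir i) U p with hD
  have e : pd timeDir χ p * U p + χ p * pd timeDir U p +
      (lapl dir χ p * U p + χ p * lapl dir U p + 2 * D) =
      χ p * (pd timeDir U p + lapl dir U p) + (pd timeDir χ p + lapl dir χ p) * U p + 2 * D := by
    ring
  rw [e]
  have h1 : (χ p * (pd timeDir U p + lapl dir U p)) ^ 2 ≤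
      2 * C ^ 2 * c ^ 2 * (gradSq dir U p + U p ^ 2) := by
    have a1 : χ p ^ 2 ≤ C ^ 2 := by rw [← sq_abs]; gcongr; exact hχ.abs_le p
    have a2 : (pd timeDir U p + lapl dir U p) ^ 2 ≤ c ^ 2 * (2 * (gradSq dir U p + U p ^ 2)) := by
      calc (pd timeDir U p + lapl dir U p) ^ 2 = |pd timeDir U p + lapl dir U p| ^ 2 :=
          (sq_abs _).symm
        _ ≤ (c * (√(gradSq dir U p) + |U p|)) ^ 2 := by gcongr
        _ ≤ c ^ 2 * (2 * (√(gradSq dir U p) ^ 2 + |U p| ^ 2)) := by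
          rw [mul_pow]; gcongr; exact add_sq_le
        _ = _ := by rw [Real.sq_sqrt hG, sq_abs]
    rw [mul_pow]
    calc χ p ^ 2 * (pd timeDir U p + lapl dir U p) ^ 2 ≤ C ^ 2 * (c ^ 2 *
        (2 * (gradSq dir U p + U p ^ 2))) := by gcongr
      _ = _ := by ring
  have h2 : ((pd timeDir χ p + lapl dir χ p) * U p) ^ 2 ≤ 4 * C ^ 2 * U p ^ 2 := by
    have a1 : (pd timeDir χ p + lapl dir χ p) ^ 2 ≤ (2 * C) ^ 2 := by
      rw [← sq_abs]; gcongr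
      exact (abs_add_le _ _).trans (by linarith [hχ.time_le p, hχ.lapl_le p])
    rw [mul_pow]
    calc _ ≤ (2 * C) ^ 2 * U p ^ 2 := by gcongr
      _ = _ := by ring
  have h3 : (2 * D) ^ 2 ≤ 4 * C * gradSq dir U p := by
    have := sq_sum_pd_mul_le dir χ U p
    have := mul_le_mul_of_nonneg_right (hχ.grad_le p) hG
    rw [mul_pow]; linarith
  set a := χ p * (pd timeDir U p + lapl dir U p)
  set b := (pd timeDir χ p + lapl dir χ p) * U p
  have h4 : (a + b + 2 * D) ^ 2 ≤ 3 * (a ^ 2 + b ^ 2 + (2 * D) ^ 2) := by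
    nlinarith [sq_nonneg (a - b), sq_nonneg (a - 2 * D), sq_nonneg (b - 2 * D)]
  have h5 : 0 ≤ C ^ 2 * gradSq dir U p := by positivity
  have h6 : 0 ≤ C * U p ^ 2 := by positivity
  linarith

theorem one_add_le_exp (x : ℝ) :
    (1 + x) * Real.exp (-(x / 100)) ≤ 200 * Real.exp (-(x / 200)) := by
  have h1 : 1 + x ≤ 200 * Real.exp (x / 200) := by
    have := Real.add_one_le_exp (x / 200)
    linarith
  calc (1 + x) * Real.exp (-(x / 100)) ≤ 200 * Real.exp (x / 200) * Real.exp (-(x / 100)) := by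
        gcongr
    _ = 200 * Real.exp (-(x / 200)) := by rw [mul_assoc, ← Real.exp_add]; congr 2; ring

/-- Absorption of the error terms in the Carleman inequality. -/
theorem exists_sq_conj_le (o : Fin n) {c μ K L δ : ℝ} (hμ : μ = 1 + c ^ 2)
    (hK : K = 16 * μ) (hL0 : 0 < L) (hL : 64 * μ * L ≤ 1) (hδ : 0 < δ) :
    ∃ C, 0 ≤ C ∧ ∀ γ r, 1 ≤ γ → 1 + 2 * μ ^ 2 + c ^ 2 ≤ γ * δ → 1 ≤ r →
      200 * γ * (L + K * L ^ 2) ≤ r → ∀ U : SpaceTime n → ℝ, ContDiff ℝ ∞ U → ∀ p,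
      0 < time p → time p ≤ 2 * L → δ ≤ crd o p →
      |pd timeDir U p + lapl dir U p| ≤ c * (√(gradSq dir U p) + |U p|) →
      conj o γ K L (fun p => cutoff o δ r L p * U p) p ^ 2 ≤
        bulk o γ K L μ (fun p => cutoff o δ r L p * U p) p +
        C * γ ^ 2 * Real.exp (4 * γ * (L + K * L ^ 2) * δ) *
          (Real.exp (-(nsq p / 200)) * (gradSq dir U p + U p ^ 2)) := by
  obtain ⟨B, hB⟩ := exists_parabolicBdd_cutoff o δ L
  have hB0 := (hB 1 le_rfl).nonneg
  have hμ1 : 1 ≤ μ := by nlinarith [sq_nonneg c]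
  set D := 6 * B ^ 2 * c ^ 2 + 12 * B ^ 2 + 12 * B with hD
  have hD0 : 0 ≤ D := by positivity
  refine ⟨200 * (1 + 160 * μ ^ 2 + D), by positivity, ?_⟩
  intro γ r hγ hγδ hr1 hr U hU p ht0 htL hpδ hP
  have hG := gradSq_nonneg dir U p
  have hw : ContDiff ℝ ∞ (fun p => cutoff o δ r L p * U p) := by fun_prop
  have hLs : L ≤ 1 := by nlinarith
  have hKL : K * L ≤ 1 := by rw [hK]; linarith
  by_cases hgood : 2 * δ < crd o p ∧ nsq p < r ^ 2 ∧ time p < L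
  · have hev : (fun p => cutoff o δ r L p * U p) =ᶠ[𝓝 p] U := by
      have o1 : IsOpen {p : SpaceTime n | 2 * δ < crd o p} := isOpen_lt (by fun_prop) (by fun_prop)
      have o2 : IsOpen {p : SpaceTime n | nsq p < r ^ 2} := isOpen_lt (by fun_prop) (by fun_prop)
      have o3 : IsOpen {p : SpaceTime n | time p < L} := isOpen_lt (by fun_prop) (by fun_prop)
      filter_upwards [o1.mem_nhds hgood.1, o2.mem_nhds hgood.2.1, o3.mem_nhds hgood.2.2]
        with q h1 h2 h3
      rw [cutoff_eq_one o hδ (by linarith) hL0 (le_of_lt h1) (le_of_lt h2) (le_of_lt h3), one_mul]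
    have h1 := sq_le_bulk o hμ hK hL hw (p := p) (γ := γ) ht0.le hgood.2.2.le (by linarith)
      (by linarith) (hγδ.trans (by gcongr)) (by
        rw [heat_congr hev, gradSq_congr hev, hev.eq_of_nhds]; exact hP)
    have h2 : 0 ≤ 200 * (1 + 160 * μ ^ 2 + D) * γ ^ 2 * Real.exp (4 * γ * (L + K * L ^ 2) * δ) *
          (Real.exp (-(nsq p / 200)) * (gradSq dir U p + U p ^ 2)) := by positivity
    linarith
  · rw [not_and_or, not_and_or, not_lt, not_lt, not_lt] at hgood
    have h1 := exp_wt_le o (by rw [hK]; positivity) hKL hLs (by linarith) hr ht0.le htL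
      (by linarith) hgood hδ.le
    have h2 := le_bulk_of_sq_le o hμ1 hK hL ht0.le htL hγ (sq_heat_mul_le (hB r hr1) hU hP)
    set Q := gradSq dir U p + U p ^ 2 with hQ
    set E := Real.exp (wt o γ K L p) ^ 2 with hE
    set S := Real.exp (4 * γ * (L + K * L ^ 2) * δ)
    have hN := nsq_nonneg p
    have hv : conj o γ K L (fun p => cutoff o δ r L p * U p) p ^ 2 ≤ E * Q := by
      rw [conj, mul_pow]
      refine mul_le_mul_of_nonneg_left ?_ (sq_nonneg _)
      rw [mul_pow]
      have : cutoff o δ r L p ^ 2 ≤ 1 := pow_le_one₀ (cutoff_nonneg _ _ _ _ _) (cutoff_le_one _ _ _ _ _)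
      nlinarith [sq_nonneg (U p)]
    have hQ0 : 0 ≤ Q := by positivity
    have hg1 : 1 ≤ γ ^ 2 * (1 + nsq p) := by nlinarith
    have h3 : conj o γ K L (fun p => cutoff o δ r L p * U p) p ^ 2 ≤
        bulk o γ K L μ (fun p => cutoff o δ r L p * U p) p +
        (1 + 160 * μ ^ 2 + D) * (γ ^ 2 * (1 + nsq p)) * (E * Q) := by
      have hEQ : 0 ≤ E * Q := by positivity
      have a1 := mul_le_mul_of_nonneg_left hv
        (by positivity : 0 ≤ 1 + 160 * μ ^ 2 * (γ ^ 2 * (1 + nsq p)))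
      have a2 : (1 + D) * (E * Q) ≤ (1 + D) * (γ ^ 2 * (1 + nsq p)) * (E * Q) := by
        refine mul_le_mul_of_nonneg_right ?_ hEQ
        exact le_mul_of_one_le_right (by positivity) hg1
      have a3 : 0 ≤ D * (E * Q) := by positivity
      linarith
    refine h3.trans (add_le_add_right ?_ _)
    calc (1 + 160 * μ ^ 2 + D) * (γ ^ 2 * (1 + nsq p)) * (E * Q)
        ≤ (1 + 160 * μ ^ 2 + D) * (γ ^ 2 * (1 + nsq p)) *
          (S * Real.exp (-(nsq p / 100)) * Q) := by gcongr
      _ = (1 + 160 * μ ^ 2 + D) * γ ^ 2 * S * Q * ((1 + nsq p) * Real.exp (-(nsq p / 100))) := by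
        ring
      _ ≤ (1 + 160 * μ ^ 2 + D) * γ ^ 2 * S * Q * (200 * Real.exp (-(nsq p / 200))) := by
        refine mul_le_mul_of_nonneg_left (one_add_le_exp _) ?_
        positivity
      _ = _ := by ring

/-- The cutoff function to positive times, at scale `ε`. -/
noncomputable def timeCutoff (ε : ℝ) (p : SpaceTime n) : ℝ :=
  smoothTransition (time p / ε - 1)

@[fun_prop]
theorem contDiff_timeCutoff (ε : ℝ) : ContDiff ℝ ∞ (timeCutoff ε : SpaceTime n → ℝ) := by
  unfold timeCutoff
  fun_prop

theorem timeCutoff_nonneg (ε : ℝ) (p : SpaceTime n) : 0 ≤ timeCutoff ε p :=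
  smoothTransition.nonneg _

theorem timeCutoff_le_one (ε : ℝ) (p : SpaceTime n) : timeCutoff ε p ≤ 1 :=
  smoothTransition.le_one _

theorem timeCutoff_eq_one {ε : ℝ} (hε : 0 < ε) {p : SpaceTime n} (h : 2 * ε ≤ time p) :
    timeCutoff ε p = 1 := by
  refine smoothTransition.one_of_one_le ?_
  rw [le_sub_iff_add_le, le_div_iff₀ hε]; linarith

theorem timeCutoff_eq_zero {ε : ℝ} (hε : 0 < ε) {p : SpaceTime n} (h : time p ≤ ε) :
    timeCutoff ε p = 0 := by
  refine smoothTransition.zero_of_nonpos ?_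
  rw [sub_nonpos, div_le_iff₀ hε]; linarith

theorem pd_timeCutoff (ε : ℝ) (v p : SpaceTime n) :
    pd v (timeCutoff ε) p = deriv smoothTransition (time p / ε - 1) * (ε⁻¹ * v.2) := by
  rw [show (timeCutoff ε : SpaceTime n → ℝ) = fun p => smoothTransition (ε⁻¹ * time p + -1) from
    funext fun p => by rw [timeCutoff]; ring_nf, pd_comp (by fun_prop) (by fun_prop),
    pd_aff (by fun_prop), pd_time]
  ring_nf

theorem pd_dir_timeCutoff (ε : ℝ) (i : Fin n) (p : SpaceTime n) :
    pd (dir i) (timeCutoff ε) p = 0 := by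
  rw [pd_timeCutoff]; simp [dir]

theorem pd_timeDir_timeCutoff (ε : ℝ) (p : SpaceTime n) :
    pd timeDir (timeCutoff ε) p = deriv smoothTransition (time p / ε - 1) * ε⁻¹ := by
  rw [pd_timeCutoff]; simp [timeDir]

theorem pd_timeDir_timeCutoff_nonneg {ε : ℝ} (hε : 0 < ε) (p : SpaceTime n) :
    0 ≤ pd timeDir (timeCutoff ε) p := by
  rw [pd_timeDir_timeCutoff]
  exact mul_nonneg (deriv_smoothTransition_nonneg _) (by positivity)

theorem gradSq_timeCutoff (ε : ℝ) (p : SpaceTime n) : gradSq dir (timeCutoff ε) p = 0 := by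
  simp [gradSq, pd_dir_timeCutoff]

theorem integrable_exp_neg_nsq {a : ℝ} (ha : 0 < a) (L : ℝ) :
    Integrable (fun p : SpaceTime n => Real.exp (-(nsq p / a)) *
      (Icc 0 L).indicator (fun _ => (1 : ℝ)) (time p)) := by
  have h1 : Integrable (fun x : EuclideanSpace ℝ (Fin n) => Real.exp (-(‖x‖ ^ 2 / a))) := by
    have h := (GaussianFourier.integrable_cexp_neg_mul_sq_norm_add (V := EuclideanSpace ℝ (Fin n))
      (b := ((1 / a : ℝ) : ℂ)) (by simpa using ha) 0 0).norm
    refine h.congr (ae_of_all _ fun x => ?_)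
    simp only [Complex.norm_exp]
    congr 1
    simp [← Complex.ofReal_pow]
    ring_nf
  have h2 : Integrable ((Icc 0 L).indicator (fun _ => (1 : ℝ))) := by
    rw [integrable_indicator_iff measurableSet_Icc]
    exact integrableOn_const measure_Icc_lt_top.ne
  have h3 := h1.mul_prod h2
  rw [← Measure.volume_eq_prod] at h3
  refine h3.congr (ae_of_all _ fun p => ?_)
  simp only [nsq_eq, time]

theorem isCompact_box (o : Fin n) (δ R a b : ℝ) :
    IsCompact {p : SpaceTime n | δ ≤ crd o p ∧ nsq p ≤ R ∧ a ≤ time p ∧ time p ≤ b} := by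
  have hc : IsClosed {p : SpaceTime n | δ ≤ crd o p ∧ nsq p ≤ R ∧ a ≤ time p ∧ time p ≤ b} :=
    (isClosed_le continuous_const (continuous_crd o)).inter
      ((isClosed_le continuous_nsq continuous_const).inter
      ((isClosed_le continuous_const continuous_time).inter
      (isClosed_le continuous_time continuous_const)))
  refine IsCompact.of_isClosed_subset
    ((isCompact_closedBall (0 : EuclideanSpace ℝ (Fin n)) √R).prod (isCompact_Icc (a := a) (b := b)))
    hc fun p hp => ?_
  refine ⟨?_, hp.2.2⟩
  rw [mem_closedBall_zero_iff]
  refine Real.le_sqrt_of_sq_le ?_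
  rw [← nsq_eq]; exact hp.2.1

/-- The box on which the solution enters the estimates. -/
def energyBox (o : Fin n) (δ r L ε : ℝ) : Set (SpaceTime n) :=
  {p | δ / 2 ≤ crd o p ∧ nsq p ≤ 8 * r ^ 2 ∧ ε / 2 ≤ time p ∧ time p ≤ 4 * L}

/-- The weight for the local energy estimate. -/
noncomputable def energyWt (o : Fin n) (δ r L ε : ℝ) (p : SpaceTime n) : ℝ :=
  cutoff o (δ / 2) (2 * r) (2 * L) p * (timeCutoff (ε / 2) p * Real.exp (-(nsq p / 400)))

theorem contDiff_energyWt (o : Fin n) (δ r L ε : ℝ) : ContDiff ℝ ∞ (energyWt o δ r L ε) := by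
  unfold energyWt
  fun_prop

theorem energyWt_eq_zero (o : Fin n) {δ r L ε : ℝ} (hδ : 0 < δ) (hr : 0 < r) (hL : 0 < L)
    (hε : 0 < ε) {p : SpaceTime n}
    (h : p ∉ energyBox o δ r L ε) :
    energyWt o δ r L ε p = 0 := by
  rw [energyWt]
  by_cases h1 : δ / 2 < crd o p ∧ nsq p < 2 * (2 * r) ^ 2 ∧ time p < 2 * (2 * L)
  · rw [timeCutoff_eq_zero (by positivity), zero_mul, mul_zero]
    by_contra! h2
    exact h ⟨h1.1.le, by linarith [h1.2.1], h2.le, by linarith [h1.2.2]⟩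
  · rw [cutoff_eq_zero o (by positivity) (by positivity) (by positivity) h1, zero_mul]

theorem hasCompactSupport_energyWt (o : Fin n) {δ r L ε : ℝ} (hδ : 0 < δ) (hr : 0 < r) (hL : 0 < L)
    (hε : 0 < ε) : HasCompactSupport (energyWt o δ r L ε) :=
  HasCompactSupport.intro (isCompact_box o _ _ _ _) fun _ hp => energyWt_eq_zero o hδ hr hL hε hp

theorem exists_energyWt_le (o : Fin n) {c δ L : ℝ} (hc : 0 ≤ c) :
    ∃ C, 0 ≤ C ∧ ∀ r ε, 1 ≤ r → 0 < ε → ∀ p,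
      -2 * energyWt o δ r L ε p * pd timeDir (energyWt o δ r L ε) p +
        (2 * (c ^ 2 + c) + 1) * energyWt o δ r L ε p ^ 2 +
        8 * gradSq dir (energyWt o δ r L ε) p ≤ C * Real.exp (-(nsq p / 400)) := by
  obtain ⟨B, hB⟩ := exists_parabolicBdd_cutoff o (δ / 2) (2 * L)
  have hB0 := (hB 1 le_rfl).nonneg
  refine ⟨2 * B + (2 * (c ^ 2 + c) + 1) + 8 * (2 * B + 1), by positivity, fun r ε hr hε p => ?_⟩
  have hχ := hB (2 * r) (by linarith)
  have hN := nsq_nonneg p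
  set χ := cutoff o (δ / 2) (2 * r) (2 * L) with hχd
  set ζ : SpaceTime n → ℝ := timeCutoff (ε / 2) with hζd
  set G : SpaceTime n → ℝ := fun p => Real.exp (-(nsq p / 400)) with hG
  have sχ : ContDiff ℝ ∞ χ := hχ.smooth
  have sζ : ContDiff ℝ ∞ ζ := contDiff_timeCutoff _
  have sG : ContDiff ℝ ∞ G := by rw [hG]; fun_prop
  have hg : energyWt o δ r L ε = fun p => χ p * (ζ p * G p) := rfl
  have pG : ∀ v, pd v G p = G p * (-(1 / 400) * pd v nsq p) := fun v => by
    rw [hG, show (fun p : SpaceTime n => Real.exp (-(nsq p / 400))) =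
      fun p => Real.exp (-(1 / 400) * nsq p + 0) from funext fun p => by ring_nf,
      pd_exp (by fun_prop), pd_aff (by fun_prop)]
  have gG : gradSq dir G p = G p ^ 2 * (4 * nsq p / 160000) := by
    simp only [gradSq, pG, mul_pow]
    rw [← Finset.mul_sum, ← Finset.mul_sum]
    have := gradSq_nsq p
    rw [gradSq] at this
    rw [this]; ring
  have z0 : 0 ≤ ζ p := timeCutoff_nonneg _ _
  have z1 : ζ p ≤ 1 := timeCutoff_le_one _ _
  have c0 : 0 ≤ χ p := cutoff_nonneg _ _ _ _ _
  have c1 : χ p ≤ 1 := cutoff_le_one _ _ _ _ _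
  have G0 : 0 < G p := Real.exp_pos _
  have G1 : G p ≤ 1 := Real.exp_le_one_iff.mpr (by linarith)
  have hGG : G p ^ 2 ≤ G p := by nlinarith
  have hGN : G p * nsq p ≤ 400 := by
    have h1 := Real.add_one_le_exp (nsq p / 400)
    have h2 : G p * Real.exp (nsq p / 400) = 1 := by
      rw [hG]; simp only; rw [← Real.exp_add]; simp
    nlinarith
  have zt : 0 ≤ pd timeDir ζ p := pd_timeDir_timeCutoff_nonneg (by positivity) p
  have hζ2 : ζ p ^ 2 ≤ 1 := pow_le_one₀ z0 z1
  have hχ2 : χ p ^ 2 ≤ 1 := pow_le_one₀ c0 c1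
  have hg2 : energyWt o δ r L ε p ^ 2 ≤ G p := by
    rw [hg]
    calc (χ p * (ζ p * G p)) ^ 2 = (χ p ^ 2 * ζ p ^ 2) * G p ^ 2 := by ring
      _ ≤ (1 * 1) * G p := by gcongr
      _ = G p := by ring
  have ht : -2 * energyWt o δ r L ε p * pd timeDir (energyWt o δ r L ε) p ≤ 2 * B * G p := by
    rw [hg, pd_mul sχ (by fun_prop), pd_mul sζ sG, pG, pd_timeDir_nsq]
    have h1 := (abs_le.mp (hχ.time_le p)).1
    have h2 : 0 ≤ χ p ^ 2 * ζ p * G p ^ 2 * pd timeDir ζ p := by positivity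
    have h3 : χ p * ζ p ^ 2 * G p ^ 2 * -pd timeDir χ p ≤ 1 * 1 * G p * B := by
      have : 0 ≤ χ p * ζ p ^ 2 * G p ^ 2 := by positivity
      calc _ ≤ χ p * ζ p ^ 2 * G p ^ 2 * B := by gcongr; linarith
        _ ≤ _ := by gcongr
    linarith
  have hgr : gradSq dir (energyWt o δ r L ε) p ≤ (2 * B + 1) * G p := by
    rw [hg]
    refine (gradSq_mul_le sχ (by fun_prop) p).trans ?_
    have h1 := gradSq_mul_le sζ sG p
    rw [gradSq_timeCutoff, gG] at h1
    have h2 : (ζ p * G p) ^ 2 ≤ G p := by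
      calc (ζ p * G p) ^ 2 = ζ p ^ 2 * G p ^ 2 := by ring
        _ ≤ 1 * G p := by gcongr
        _ = G p := by ring
    have h3 := mul_le_mul h2 (hχ.grad_le p) (gradSq_nonneg _ _ _) G0.le
    have h4 : ζ p ^ 2 * (G p ^ 2 * (4 * nsq p / 160000)) ≤ 1 * (G p / 100) := by
      have : G p ^ 2 * (4 * nsq p / 160000) ≤ G p / 100 := by nlinarith
      have : 0 ≤ G p ^ 2 * (4 * nsq p / 160000) := by positivity
      gcongr
    have h5 : gradSq dir (fun p => ζ p * G p) p ≤ G p / 50 := by linarith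
    have h6 := mul_le_mul hχ2 h5 (gradSq_nonneg _ _ _) (by norm_num)
    linarith
  have h8 : (2 * (c ^ 2 + c) + 1) * energyWt o δ r L ε p ^ 2 ≤ (2 * (c ^ 2 + c) + 1) * G p := by
    gcongr
  have : G p = Real.exp (-(nsq p / 400)) := rfl
  rw [← this]
  linarith

/-- The local energy estimate. -/
theorem exists_integral_energyWt_le (o : Fin n) {c δ L M : ℝ} (hc : 0 ≤ c) (hδ : 0 < δ)
    (hL : 0 < L) : ∃ J, 0 ≤ J ∧ ∀ r ε, 1 ≤ r → 0 < ε → ∀ U : SpaceTime n → ℝ, ContDiff ℝ ∞ U →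
      (∀ p ∈ energyBox o δ r L ε,
        |U p| ≤ M ∧ |pd timeDir U p + lapl dir U p| ≤ c * (√(gradSq dir U p) + |U p|)) →
      ∫ p, energyWt o δ r L ε p ^ 2 * (gradSq dir U p + U p ^ 2) ≤ J := by
  obtain ⟨C, hC0, hC⟩ := exists_energyWt_le o (δ := δ) (L := L) hc
  refine ⟨∫ p : SpaceTime n, M ^ 2 * C * (Real.exp (-(nsq p / 400)) *
      (Icc 0 (4 * L)).indicator (fun _ => (1 : ℝ)) (time p)), ?_, fun r ε hr hε U hU hP => ?_⟩
  · refine integral_nonneg fun p => ?_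
    have : 0 ≤ (Icc 0 (4 * L)).indicator (fun _ => (1 : ℝ)) (time p) :=
      indicator_nonneg (fun _ _ => zero_le_one) _
    positivity
  have hr0 : 0 < r := by linarith
  set g := energyWt o δ r L ε with hg
  have sg : ContDiff ℝ ∞ g := contDiff_energyWt ..
  have cg : HasCompactSupport g := hasCompactSupport_energyWt o hδ hr0 hL hε
  obtain ⟨N, hN, hNle⟩ := caccioppoli (ν := volume) hU sg cg dir timeDir hc fun p hp =>
    (hP p (by by_contra h; exact hp (energyWt_eq_zero o hδ hr0 hL hε h))).2
  have hI := (integrable_exp_neg_nsq (n := n) (a := 400) (by norm_num) (4 * L)).const_mul (M ^ 2 * C)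
  have : ∫ p, g p ^ 2 * (gradSq dir U p + U p ^ 2) ≤ ∫ p, (N p + M ^ 2 * C *
      (Real.exp (-(nsq p / 400)) * (Icc 0 (4 * L)).indicator (fun _ => (1 : ℝ)) (time p))) := by
    refine integral_mono ?_ (hN.1.add hI) fun p => ?_
    · refine Continuous.integrable_of_hasCompactSupport (by fun_prop) ?_
      have : (fun p => g p ^ 2 * (gradSq dir U p + U p ^ 2)) =
        fun p => g p * (g p * (gradSq dir U p + U p ^ 2)) := by ext; ring
      rw [this]
      exact cg.mul_right
    · have h1 := hNle p
      have h2 := hC r ε hr hε p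
      simp only
      by_cases hp : p ∈ energyBox o δ r L ε
      · rw [indicator_of_mem (by exact ⟨by linarith [hp.2.2.1], hp.2.2.2⟩), mul_one]
        have h3 : U p ^ 2 ≤ M ^ 2 := by
          rw [← sq_abs]; exact pow_le_pow_left₀ (abs_nonneg _) (hP p hp).1 2
        have h4 := mul_le_mul_of_nonneg_left h2 (sq_nonneg (U p))
        have h5 : U p ^ 2 * (C * Real.exp (-(nsq p / 400))) ≤
          M ^ 2 * (C * Real.exp (-(nsq p / 400))) := by gcongr
        linarith
      · have ho := (isCompact_box o (δ / 2) (8 * r ^ 2) (ε / 2) (4 * L)).isClosed.isOpen_compl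
        have hev : g =ᶠ[𝓝 p] fun _ => 0 := by
          filter_upwards [ho.mem_nhds hp] with q hq
          exact energyWt_eq_zero o hδ hr0 hL hε hq
        have e1 : g p = 0 := hev.eq_of_nhds
        have e2 : gradSq dir g p = 0 := by
          rw [gradSq_congr hev]; simp [gradSq, pd_const]
        rw [e1, e2] at h1
        rw [e1]
        have : 0 ≤ (Icc 0 (4 * L)).indicator (fun _ => (1 : ℝ)) (time p) :=
          indicator_nonneg (fun _ _ => zero_le_one) _
        have : 0 ≤ M ^ 2 * C * (Real.exp (-(nsq p / 400)) *
          (Icc 0 (4 * L)).indicator (fun _ => (1 : ℝ)) (time p)) := by positivity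
        simp at h1 ⊢
        linarith
  refine this.trans ?_
  rw [integral_add hN.1 hI, hN.2, zero_add]

theorem contDiff_conj (o : Fin n) (γ K L : ℝ) {w : SpaceTime n → ℝ} (hw : ContDiff ℝ ∞ w) :
    ContDiff ℝ ∞ (conj o γ K L w) := by
  unfold conj
  have := contDiff_wt o γ K L
  fun_prop

theorem conj_cutoff_eventuallyEq_zero (o : Fin n) {δ r L : ℝ} (hδ : 0 < δ) (hr : 0 < r)
    (hL : 0 < L) (U : SpaceTime n → ℝ) {p : SpaceTime n}
    (h : ¬(δ ≤ crd o p ∧ nsq p ≤ 2 * r ^ 2 ∧ time p ≤ 2 * L)) :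
    (fun p => cutoff o δ r L p * U p) =ᶠ[𝓝 p] fun _ => 0 := by
  have hc : IsClosed {p : SpaceTime n | δ ≤ crd o p ∧ nsq p ≤ 2 * r ^ 2 ∧ time p ≤ 2 * L} :=
    (isClosed_le continuous_const (continuous_crd o)).inter
      ((isClosed_le continuous_nsq continuous_const).inter
      (isClosed_le continuous_time continuous_const))
  filter_upwards [hc.isOpen_compl.mem_nhds h] with q hq
  rw [cutoff_eq_zero o hδ hr hL, zero_mul]
  exact fun h => hq ⟨h.1.le, h.2.1.le, h.2.2.le⟩

theorem bulk_eq_zero (o : Fin n) (γ K L m : ℝ) {w : SpaceTime n → ℝ} {p : SpaceTime n}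
    (h : w =ᶠ[𝓝 p] fun _ => 0) :
    bulk o γ K L m w p = 0 ∧ conj o γ K L w p = 0 ∧ gradSq dir (conj o γ K L w) p = 0 := by
  have h1 : conj o γ K L w =ᶠ[𝓝 p] fun _ => 0 := by
    filter_upwards [h] with q hq
    rw [conj, hq, mul_zero]
  have h2 : gradSq dir (conj o γ K L w) p = 0 := by
    rw [gradSq_congr h1]; simp [gradSq, pd_const]
  have h3 : pd timeDir w p + lapl dir w p = 0 := by
    rw [heat_congr h, pd_const]
    have : ∀ i : Fin n, pd (dir i) (fun _ : SpaceTime n => (0 : ℝ)) = fun _ => 0 :=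
      fun i => funext fun p => pd_const _ _ _
    simp [lapl, this]
  refine ⟨?_, h1.eq_of_nhds, h2⟩
  rw [bulk_eq, h1.eq_of_nhds, h2, h3]
  ring

/-- The Carleman inequality applied to a truncated solution. -/
theorem exists_integral_conj_sq_le (o : Fin n) {c μ K L δ M : ℝ} (hc : 0 ≤ c)
    (hμ : μ = 1 + c ^ 2) (hK : K = 16 * μ) (hL0 : 0 < L) (hL : 64 * μ * L ≤ 1) (hδ : 0 < δ) :
    ∃ C, 0 ≤ C ∧ ∀ γ r ε, 1 ≤ γ → 1 + 2 * μ ^ 2 + c ^ 2 ≤ γ * δ → 1 ≤ r →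
      200 * γ * (L + K * L ^ 2) ≤ r → 0 < ε → ∀ U : SpaceTime n → ℝ, ContDiff ℝ ∞ U →
      HasCompactSupport U →
      (∀ p ∈ energyBox o δ r L ε, |U p| ≤ M ∧
        |pd timeDir U p + lapl dir U p| ≤ c * (√(gradSq dir U p) + |U p|)) →
      ∫ p, timeCutoff ε p * conj o γ K L (fun p => cutoff o δ r L p * U p) p ^ 2 ≤
        C * γ ^ 2 * Real.exp (4 * γ * (L + K * L ^ 2) * δ) +
        160 * μ ^ 2 * γ ^ 2 * ∫ p, pd timeDir (timeCutoff ε) p *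
          ((1 + nsq p) * conj o γ K L (fun p => cutoff o δ r L p * U p) p ^ 2) := by
  obtain ⟨C, hC0, hC⟩ := exists_sq_conj_le o hμ hK hL0 hL hδ
  obtain ⟨J, hJ0, hJ⟩ := exists_integral_energyWt_le o (M := M) hc hδ hL0
  refine ⟨C * J, by positivity, fun γ r ε hγ hγδ hr hγr hε U hU hUc hP => ?_⟩
  have hμ1 : 1 ≤ μ := by nlinarith [sq_nonneg c]
  set w := fun p => cutoff o δ r L p * U p with hw
  set v := conj o γ K L w with hv
  set S := Real.exp (4 * γ * (L + K * L ^ 2) * δ)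
  have sw : ContDiff ℝ ∞ w := by rw [hw]; fun_prop
  have cw : HasCompactSupport w := hUc.mul_left
  have sv : ContDiff ℝ ∞ v := contDiff_conj o γ K L sw
  have cv : HasCompactSupport v := cw.mul_left
  have sE : ContDiff ℝ ∞ (energyWt o δ r L ε) := contDiff_energyWt ..
  obtain ⟨I, hI, hI0, hIeq⟩ := carleman_inequality (ν := (volume : Measure (SpaceTime n)))
    sw cw (contDiff_wt o γ K L) (contDiff_timeCutoff ε) (timeCutoff_nonneg ε) dir timeDir μ
    (fun i p => pd_dir_timeCutoff ε i p) (fun i p => pd_dir_lapl_wt o γ K L i p)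
    (v := v) (U := wtU o γ K L μ) rfl rfl
  have hIeq' : ∀ p, I p = timeCutoff ε p * bulk o γ K L μ w p + pd timeDir (timeCutoff ε) p *
      (gradSq dir v p - wtU o γ K L μ p * v p ^ 2) := hIeq
  have i2 : Integrable fun p => energyWt o δ r L ε p ^ 2 * (gradSq dir U p + U p ^ 2) := by
    refine Continuous.integrable_of_hasCompactSupport (by fun_prop) ?_
    rw [show (fun p => energyWt o δ r L ε p ^ 2 * (gradSq dir U p + U p ^ 2)) =
        fun p => energyWt o δ r L ε p * (energyWt o δ r L ε p * (gradSq dir U p + U p ^ 2)) from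
      funext fun p => by ring]
    exact (hasCompactSupport_energyWt o hδ (by linarith) hL0 hε).mul_right
  have i3 : Integrable fun p => pd timeDir (timeCutoff ε) p * ((1 + nsq p) * v p ^ 2) := by
    refine Continuous.integrable_of_hasCompactSupport (by fun_prop) ?_
    rw [show (fun p => pd timeDir (timeCutoff ε) p * ((1 + nsq p) * v p ^ 2)) =
        fun p => (pd timeDir (timeCutoff ε) p * (1 + nsq p) * v p) * v p from
      funext fun p => by ring]
    exact cv.mul_left
  have i1 : Integrable fun p => timeCutoff ε p * v p ^ 2 := by
    refine Continuous.integrable_of_hasCompactSupport (by fun_prop) ?_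
    rw [show (fun p => timeCutoff ε p * v p ^ 2) = fun p => (timeCutoff ε p * v p) * v p from
      funext fun p => by ring]
    exact cv.mul_left
  have key : ∀ p, timeCutoff ε p * v p ^ 2 ≤ I p +
      C * γ ^ 2 * S * (energyWt o δ r L ε p ^ 2 * (gradSq dir U p + U p ^ 2)) +
      160 * μ ^ 2 * γ ^ 2 * (pd timeDir (timeCutoff ε) p * ((1 + nsq p) * v p ^ 2)) := by
    intro p
    rw [hIeq']
    have hζ0 := timeCutoff_nonneg ε p
    have hζ1 := timeCutoff_le_one ε p
    have hζt := pd_timeDir_timeCutoff_nonneg hε p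
    have hG := gradSq_nonneg dir U p
    have hGv := gradSq_nonneg dir v p
    have hN := nsq_nonneg p
    rcases lt_or_ge (time p) ε with ht | ht
    · have hev : (timeCutoff ε : SpaceTime n → ℝ) =ᶠ[𝓝 p] fun _ => 0 := by
        filter_upwards [(isOpen_lt continuous_time continuous_const).mem_nhds ht] with q hq
        exact timeCutoff_eq_zero hε (le_of_lt hq)
      rw [pd_congr hev, hev.eq_of_nhds, pd_const]
      simp only [zero_mul, mul_zero, zero_add, add_zero]
      positivity
    by_cases hp : δ ≤ crd o p ∧ nsq p ≤ 2 * r ^ 2 ∧ time p ≤ 2 * L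
    · have hbox : p ∈ energyBox o δ r L ε :=
        ⟨by linarith [hp.1], by nlinarith [hp.2.1], by linarith, by linarith [hp.2.2]⟩
      have h1 := hC γ r hγ hγδ hr hγr U hU p (by linarith) hp.2.2 hp.1 (hP p hbox).2
      have hg : energyWt o δ r L ε p ^ 2 = Real.exp (-(nsq p / 200)) := by
        rw [energyWt, cutoff_eq_one o (by positivity) (by positivity) (by positivity)
          (by linarith [hp.1]) (by nlinarith [hp.2.1]) hp.2.2,
          timeCutoff_eq_one (by positivity) (by linarith), one_mul, one_mul, ← Real.exp_nat_mul]
        congr 1; push_cast; ring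
      rw [← hg] at h1
      have h2 := wtU_le o hμ1 hK hL (p := p) (γ := γ) (by linarith) hp.2.2 hγ
      set Q := energyWt o δ r L ε p ^ 2 * (gradSq dir U p + U p ^ 2)
      have hQ : 0 ≤ C * γ ^ 2 * S * Q := by positivity
      have h3 := mul_le_mul_of_nonneg_left h1 hζ0
      have h4 := mul_le_mul_of_nonneg_right hζ1 hQ
      have h5 := mul_le_mul_of_nonneg_left (mul_le_mul_of_nonneg_right h2 (sq_nonneg (v p))) hζt
      have h6 := mul_nonneg hζt hGv
      linarith
    · have hw0 := conj_cutoff_eventuallyEq_zero o hδ (by linarith) hL0 U hp (r := r)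
      obtain ⟨b1, b2, b3⟩ := bulk_eq_zero o γ K L μ hw0
      rw [b1, hv, b2, b3]
      have : 0 ≤ C * γ ^ 2 * S * (energyWt o δ r L ε p ^ 2 * (gradSq dir U p + U p ^ 2)) := by
        positivity
      simpa using this
  have hint := integral_mono i1 ((hI.add (i2.const_mul (C * γ ^ 2 * S))).add
    (i3.const_mul (160 * μ ^ 2 * γ ^ 2))) key
  refine hint.trans ?_
  rw [integral_add' (hI.add (i2.const_mul _)) (i3.const_mul _), integral_add' hI (i2.const_mul _),
    integral_const_mul, integral_const_mul]
  have h1 := mul_le_mul_of_nonneg_left (hJ r ε hr hε U hU hP)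
    (by positivity : 0 ≤ C * γ ^ 2 * S)
  linarith

end SpaceTime

theorem exists_contDiff_eventuallyEq {X : Type*} [NormedAddCommGroup X] [NormedSpace ℝ X]
    [FiniteDimensional ℝ X] {K O : Set X} (hK : IsCompact K) (hO : IsOpen O) (hKO : K ⊆ O)
    {f : X → ℝ} (hf : ContDiffOn ℝ ∞ f O) :
    ∃ U : X → ℝ, ContDiff ℝ ∞ U ∧ HasCompactSupport U ∧ ∀ p ∈ K, U =ᶠ[𝓝 p] f := by
  obtain ⟨K', hK', h1, h2⟩ := exists_compact_between hK hO hKO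
  obtain ⟨χ, hχ1, hχ0, -⟩ := exists_contMDiffMap_one_nhds_of_subset_interior (n := ⊤)
    (modelWithCornersSelf ℝ X) hK.isClosed h1
  have sχ : ContDiff ℝ ∞ (χ : X → ℝ) := χ.contMDiff.contDiff
  refine ⟨fun p => χ p * f p, ?_, ?_, fun p hp => ?_⟩
  · rw [contDiff_iff_contDiffAt]
    intro p
    by_cases hp : p ∈ O
    · exact sχ.contDiffAt.mul (hf.contDiffAt (hO.mem_nhds hp))
    · have : (fun p => χ p * f p) =ᶠ[𝓝 p] fun _ => 0 := by
        filter_upwards [hK'.isClosed.isOpen_compl.mem_nhds fun h => hp (h2 h)] with q hq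
        rw [hχ0 q hq, zero_mul]
      exact contDiffAt_const.congr_of_eventuallyEq this
  · exact HasCompactSupport.intro hK' fun p hp => by rw [hχ0 p hp, zero_mul]
  · filter_upwards [eventually_nhdsSet_iff_forall.mp hχ1 p hp] with q hq
    rw [hq, one_mul]

namespace SpaceTime
variable {n : ℕ}

theorem tendsto_integral_pd_timeCutoff {F k : SpaceTime n → ℝ} {M R B : ℝ}
    (hF : Measurable F) (hFM : ∀ p, |F p| ≤ M)
    (hF0 : ∀ x, Tendsto (fun t => F (x, t)) (𝓝[>] 0) (𝓝 0))
    (hk : ∀ p, 0 ≤ time p → time p ≤ 1 → |k p| ≤ B) (hkR : ∀ p, R < nsq p → k p = 0) :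
    Tendsto (fun ε => ∫ p, pd timeDir (timeCutoff ε) p * (k p * F p ^ 2)) (𝓝[>] 0) (𝓝 0) := by
  obtain ⟨A, hA1, hA⟩ := exists_bound_smoothTransition
  set D : Set (EuclideanSpace ℝ (Fin n)) := {x | ‖x‖ ^ 2 ≤ R} with hD
  have mD : MeasurableSet D := measurableSet_le (by fun_prop) measurable_const
  have fD : volume D < ⊤ := by
    refine lt_of_le_of_lt (measure_mono (t := Metric.closedBall 0 √R) fun x hx => ?_)
      measure_closedBall_lt_top
    rw [mem_closedBall_zero_iff]
    exact Real.le_sqrt_of_sq_le hx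
  set Φ : ℝ → ℝ := fun t => ∫ x in D, F (x, t) ^ 2 with hΦ
  have hFsq : ∀ p, F p ^ 2 ≤ M ^ 2 := fun p => by
    rw [← sq_abs]; exact pow_le_pow_left₀ (abs_nonneg _) (hFM p) 2
  have hΦ0 : Tendsto Φ (𝓝[>] 0) (𝓝 0) := by
    have := tendsto_integral_filter_of_dominated_convergence (μ := volume.restrict D)
      (l := 𝓝[>] (0 : ℝ)) (F := fun t x => F (x, t) ^ 2) (f := fun _ => 0) (fun _ => M ^ 2)
      (Eventually.of_forall fun t => by
        have : Measurable fun x => F (x, t) := hF.comp (by fun_prop)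
        exact (this.pow_const 2).aestronglyMeasurable)
      (Eventually.of_forall fun t => ae_of_all _ fun x => by
        rw [Real.norm_of_nonneg (sq_nonneg _)]; exact hFsq _)
      (integrableOn_const fD.ne)
      (ae_of_all _ fun x => by simpa using (hF0 x).pow 2)
    simpa using this
  have hB0 : 0 ≤ B := (abs_nonneg _).trans (hk 0 le_rfl zero_le_one)
  rw [Metric.tendsto_nhdsWithin_nhds] at hΦ0 ⊢
  intro η hη
  obtain ⟨d, hd, hdΦ⟩ := hΦ0 (η / (A * B + 1)) (by positivity)
  refine ⟨min (d / 2) (1 / 2), by positivity, fun {ε} hε hεd => ?_⟩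
  rw [mem_Ioi] at hε
  rw [dist_zero_right, Real.norm_of_nonneg hε.le, lt_min_iff] at hεd
  rw [dist_zero_right]
  set g : SpaceTime n → ℝ := fun p => (A / ε * B) * ((Icc ε (2 * ε)).indicator (fun _ => (1 : ℝ)) p.2 *
    D.indicator (fun x => F (x, p.2) ^ 2) p.1) with hg
  have hgi : Integrable g := by
    refine Integrable.const_mul ?_ _
    have : (fun p : SpaceTime n => (Icc ε (2 * ε)).indicator (fun _ => (1 : ℝ)) p.2 *
        D.indicator (fun x => F (x, p.2) ^ 2) p.1) =
        (D ×ˢ Icc ε (2 * ε)).indicator fun p => F p ^ 2 := by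
      ext p
      by_cases h1 : p.1 ∈ D <;> by_cases h2 : p.2 ∈ Icc ε (2 * ε) <;>
        simp [indicator, mem_prod, h1, h2]
    rw [this, integrable_indicator_iff (mD.prod measurableSet_Icc)]
    refine Measure.integrableOn_of_bounded (M := M ^ 2) ?_ (hF.pow_const 2).aestronglyMeasurable
      (ae_of_all _ fun p => by rw [Real.norm_of_nonneg (sq_nonneg _)]; exact hFsq _)
    rw [Measure.volume_eq_prod, Measure.prod_prod]
    exact (ENNReal.mul_lt_top fD measure_Icc_lt_top).ne
  have hle : ∀ p, ‖pd timeDir (timeCutoff ε) p * (k p * F p ^ 2)‖ ≤ g p := by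
    intro p
    have i1 : 0 ≤ (Icc ε (2 * ε)).indicator (fun _ => (1 : ℝ)) p.2 :=
      indicator_nonneg (fun _ _ => zero_le_one) _
    have i2 : 0 ≤ D.indicator (fun x => F (x, p.2) ^ 2) p.1 :=
      indicator_nonneg (fun _ _ => sq_nonneg _) _
    have hg0 : 0 ≤ g p := by simp only [hg]; positivity
    by_cases ht : p.2 ∈ Icc ε (2 * ε)
    · by_cases hx : p.1 ∈ D
      · simp only [hg]
        rw [indicator_of_mem ht, indicator_of_mem hx, one_mul, norm_mul, norm_mul,
          Real.norm_of_nonneg (sq_nonneg _), pd_timeDir_timeCutoff, norm_mul,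
          Real.norm_of_nonneg (inv_nonneg.mpr hε.le), ← mul_assoc, div_eq_mul_inv A]
        have h1 := (hA (time p / ε - 1)).1
        have h2 := hk p (by exact hε.le.trans ht.1) (by
          have : p.2 ≤ 2 * ε := ht.2
          show p.2 ≤ 1
          linarith)
        simp only [Real.norm_eq_abs]
        gcongr
      · rw [hkR p (by rw [nsq_eq]; simpa [hD] using hx)]
        simpa using hg0
    · have : deriv smoothTransition (time p / ε - 1) = 0 := by
        refine deriv_smoothTransition_of_notMem fun h => ht ?_
        rw [mem_Icc, sub_nonneg, le_div_iff₀ hε, sub_le_iff_le_add, div_le_iff₀ hε] at h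
        exact ⟨by simpa [time] using h.1, by
          have : p.2 ≤ (1 + 1) * ε := h.2
          linarith⟩
      rw [pd_timeDir_timeCutoff, this]
      simpa using hg0
  have hbd : ∫ p, g p ≤ A * B * (η / (A * B + 1)) := by
    have e1 : ∫ p, g p = ∫ t, (A / ε * B) * ((Icc ε (2 * ε)).indicator (fun _ => (1 : ℝ)) t * Φ t) := by
      rw [Measure.volume_eq_prod, integral_prod_symm _ (by rwa [← Measure.volume_eq_prod])]
      refine integral_congr_ae (ae_of_all _ fun t => ?_)
      simp only [hg, hΦ]
      rw [integral_const_mul, integral_const_mul, integral_indicator mD]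
    rw [e1, integral_const_mul]
    have e2 : (fun t => (Icc ε (2 * ε)).indicator (fun _ => (1 : ℝ)) t * Φ t) =
        (Icc ε (2 * ε)).indicator Φ := by
      ext t; by_cases h : t ∈ Icc ε (2 * ε) <;> simp [h]
    rw [e2, integral_indicator measurableSet_Icc]
    have h3 : ‖∫ t in Icc ε (2 * ε), Φ t‖ ≤ η / (A * B + 1) * volume.real (Icc ε (2 * ε)) := by
      refine norm_setIntegral_le_of_norm_le_const measure_Icc_lt_top fun t ht => ?_
      have ht0 : 0 < t := hε.trans_le ht.1
      have := hdΦ (x := t) ht0 (by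
        rw [dist_zero_right, Real.norm_of_nonneg ht0.le]; linarith [ht.2])
      rw [dist_zero_right] at this
      exact this.le
    rw [Real.volume_real_Icc_of_le (by linarith)] at h3
    calc A / ε * B * ∫ t in Icc ε (2 * ε), Φ t ≤ A / ε * B * (η / (A * B + 1) * (2 * ε - ε)) := by
          gcongr; exact (le_abs_self _).trans h3
      _ = A * B * (η / (A * B + 1)) := by field_simp; ring
  refine (norm_integral_le_of_norm_le hgi (ae_of_all _ hle)).trans_lt (hbd.trans_lt ?_)
  have hAB : 0 ≤ A * B := by positivity
  rw [← mul_div_assoc, div_lt_iff₀ (by positivity)]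
  linarith

/-- The time slab `0 < t < T` over a half-space. -/
def slab (o : Fin n) (T : ℝ) : Set (SpaceTime n) := {p | 0 < crd o p ∧ 0 < time p ∧ time p < T}

theorem isOpen_slab (o : Fin n) (T : ℝ) : IsOpen (slab o T) :=
  (isOpen_lt continuous_const (continuous_crd o)).inter
    ((isOpen_lt continuous_const continuous_time).inter (isOpen_lt continuous_time continuous_const))

/-- Bounded solutions of the backward differential inequality over a half-space, with vanishing
initial values. -/
structure IsSlabSol (o : Fin n) (c M T : ℝ) (f : SpaceTime n → ℝ) : Prop where
  smooth : ContDiffOn ℝ ∞ f (slab o T)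
  bdd : ∀ p ∈ slab o T, |f p| ≤ M
  heat : ∀ p ∈ slab o T, |pd timeDir f p + lapl dir f p| ≤ c * (√(gradSq dir f p) + |f p|)
  initial : ∀ x : EuclideanSpace ℝ (Fin n), 0 < x o →
    Tendsto (fun t => f (x, t)) (𝓝[>] 0) (𝓝 0)

/-- The region on which a single application of the Carleman inequality yields vanishing. -/
def vanishBox (o : Fin n) (δ ρ ε L : ℝ) : Set (SpaceTime n) :=
  {p | 16 * δ < crd o p ∧ nsq p < ρ ^ 2 ∧ ε < time p ∧ time p < L / 2}

theorem isOpen_vanishBox (o : Fin n) (δ ρ ε L : ℝ) : IsOpen (vanishBox o δ ρ ε L) :=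
  (isOpen_lt continuous_const (continuous_crd o)).inter
    ((isOpen_lt continuous_nsq continuous_const).inter
    ((isOpen_lt continuous_const continuous_time).inter
    (isOpen_lt continuous_time continuous_const)))

theorem volume_vanishBox_lt_top (o : Fin n) (δ ρ ε L : ℝ) : volume (vanishBox o δ ρ ε L) < ⊤ :=
  (measure_mono (t := {p | 16 * δ ≤ crd o p ∧ nsq p ≤ ρ ^ 2 ∧ ε ≤ time p ∧ time p ≤ L / 2})
    fun _ hp => ⟨hp.1.le, hp.2.1.le, hp.2.2.1.le, hp.2.2.2.le⟩).trans_lt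
    (isCompact_box o (16 * δ) (ρ ^ 2) ε (L / 2)).measure_lt_top

theorem le_two_mul_wt (o : Fin n) {γ K L δ ρ ε : ℝ} (hγ : 0 ≤ γ) (hK : 0 ≤ K) (hδ : 0 < δ)
    (hε : 0 < ε) (hL : L ≤ 1) {p : SpaceTime n} (hp : p ∈ vanishBox o δ ρ ε L) :
    8 * γ * (L + K * L ^ 2) * δ - ρ ^ 2 / 10 ≤ 2 * wt o γ K L p := by
  obtain ⟨h1, h2, h3, h4⟩ := hp
  have hN := nsq_nonneg p
  have hL0 : 0 < L := by linarith
  have hh : (L + K * L ^ 2) / 4 ≤ wtH K L p := by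
    rw [wtH]
    have : (L / 2) ^ 2 ≤ (L - time p) ^ 2 := by
      apply pow_le_pow_left₀ <;> linarith
    nlinarith
  have h5 : (L + K * L ^ 2) / 4 * (16 * δ) ≤ wtH K L p * crd o p := by
    have : 0 ≤ (L + K * L ^ 2) / 4 := by positivity
    exact mul_le_mul hh h1.le (by positivity) (this.trans hh)
  have h6 := mul_le_mul_of_nonneg_left h5 hγ
  have h7 : wtQ L p * nsq p ≤ 3 / 100 * ρ ^ 2 := by
    have : wtQ L p ≤ 3 / 100 := by rw [wtQ]; linarith
    gcongr
  rw [wt]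
  nlinarith [sq_nonneg ρ]

theorem IsSlabSol.integral_vanishBox_le (o : Fin n) {c M T μ K L δ : ℝ} (hc : 0 ≤ c)
    (hμ : μ = 1 + c ^ 2) (hK : K = 16 * μ) (hL0 : 0 < L) (hL : 64 * μ * L ≤ 1) (hLT : 4 * L < T)
    (hδ : 0 < δ) {f : SpaceTime n → ℝ} (hf : IsSlabSol o c M T f) :
    ∃ C, ∀ γ, 1 ≤ γ → 1 + 2 * μ ^ 2 + c ^ 2 ≤ γ * δ → ∀ ρ ε₀, 0 < ε₀ →
      Real.exp (8 * γ * (L + K * L ^ 2) * δ - ρ ^ 2 / 10) * ∫ p in vanishBox o δ ρ ε₀ L, f p ^ 2 ≤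
        C * γ ^ 2 * Real.exp (4 * γ * (L + K * L ^ 2) * δ) := by
  obtain ⟨C, hC0, hC⟩ := exists_integral_conj_sq_le o (M := M) hc hμ hK hL0 hL hδ
  refine ⟨C, fun γ hγ hγδ ρ ε₀ hε₀ => ?_⟩
  have hμ1 : 1 ≤ μ := by nlinarith [sq_nonneg c]
  have hL1 : L ≤ 1 := by nlinarith
  set H := L + K * L ^ 2
  obtain ⟨r, hr1, hrγ, hrρ⟩ : ∃ r, 1 ≤ r ∧ 200 * γ * H ≤ r ∧ |ρ| ≤ r :=
    ⟨max 1 (max (200 * γ * H) |ρ|), le_max_left _ _, (le_max_left _ _).trans (le_max_right _ _),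
      (le_max_right _ _).trans (le_max_right _ _)⟩
  have hr0 : 0 < r := by linarith
  set F := (slab o T).indicator f with hF
  have mF : Measurable F := by
    classical
    rw [hF, ← piecewise_eq_indicator]
    exact hf.smooth.continuousOn.measurable_piecewise continuousOn_const
      (isOpen_slab o T).measurableSet
  obtain ⟨M', hM'⟩ : ∃ M', ∀ p, |F p| ≤ M' := by
    refine ⟨|M|, fun p => ?_⟩
    by_cases hp : p ∈ slab o T
    · rw [hF, indicator_of_mem hp]; exact (hf.bdd p hp).trans (le_abs_self _)
    · rw [hF, indicator_of_notMem hp, abs_zero]; positivity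
  have hF0 : ∀ x, Tendsto (fun t => F (x, t)) (𝓝[>] 0) (𝓝 0) := by
    intro x
    by_cases hx : 0 < x o
    · refine (hf.initial x hx).congr' ?_
      filter_upwards [Ioo_mem_nhdsGT (show 0 < T by linarith)] with t ht
      rw [hF, indicator_of_mem (show (x, t) ∈ slab o T from ⟨hx, ht.1, ht.2⟩)]
    · refine tendsto_const_nhds.congr fun t => ?_
      rw [hF, indicator_of_notMem fun h => hx h.1]
  set k : SpaceTime n → ℝ := fun p => (Real.exp (wt o γ K L p) * cutoff o δ r L p) ^ 2 with hk
  have sk : Continuous k := by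
    have := (contDiff_wt o γ K L).continuous
    have := (contDiff_cutoff o δ r L).continuous
    fun_prop
  have hk0 : ∀ p, ¬(δ < crd o p ∧ nsq p < 2 * r ^ 2 ∧ time p < 2 * L) → k p = 0 := fun p hp => by
    simp only [hk]; rw [cutoff_eq_zero o hδ hr0 hL0 hp]; ring
  obtain ⟨B, hB⟩ := (isCompact_box o δ (2 * r ^ 2) 0 1).exists_bound_of_continuousOn
    (f := fun p => (1 + nsq p) * k p) (by fun_prop)
  have hlim := tendsto_integral_pd_timeCutoff (F := F) (k := fun p => (1 + nsq p) * k p)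
    (R := 2 * r ^ 2) (B := max B 0) mF hM' hF0 (fun p h1 h2 => by
      by_cases hp : δ < crd o p ∧ nsq p < 2 * r ^ 2 ∧ time p < 2 * L
      · exact (hB p ⟨hp.1.le, hp.2.1.le, h1, h2⟩).trans (le_max_left _ _)
      · rw [hk0 p hp, mul_zero, abs_zero]; exact le_max_right _ _)
    (fun p hp => by rw [hk0 p fun h => absurd h.2.1 (not_lt.mpr hp.le), mul_zero])
  have hlim2 := (hlim.const_mul (160 * μ ^ 2 * γ ^ 2)).const_add
    (C * γ ^ 2 * Real.exp (4 * γ * H * δ))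
  rw [mul_zero, add_zero] at hlim2
  refine ge_of_tendsto hlim2 ?_
  have hev : ∀ᶠ ε in 𝓝[>] (0 : ℝ), 0 < ε ∧ ε < ε₀ / 2 :=
    Ioo_mem_nhdsGT (by positivity)
  filter_upwards [hev] with ε ⟨hε, hεε⟩
  have hbox : IsCompact (energyBox o δ r L ε) := isCompact_box o _ _ _ _
  have hsub : energyBox o δ r L ε ⊆ slab o T := fun p hp =>
    ⟨by linarith [hp.1], by linarith [hp.2.2.1], by linarith [hp.2.2.2]⟩
  obtain ⟨U, sU, cU, hU⟩ := exists_contDiff_eventuallyEq hbox (isOpen_slab o T) hsub hf.smooth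
  have h1 := hC γ r ε hγ hγδ hr1 hrγ hε U sU cU fun p hp => by
    rw [heat_congr (hU p hp), gradSq_congr (hU p hp), (hU p hp).eq_of_nhds]
    exact ⟨hf.bdd p (hsub hp), hf.heat p (hsub hp)⟩
  have hconj : ∀ p, ε ≤ time p → conj o γ K L (fun p => cutoff o δ r L p * U p) p ^ 2 =
      k p * F p ^ 2 := by
    intro p ht
    rw [conj]
    by_cases hp : δ < crd o p ∧ nsq p < 2 * r ^ 2 ∧ time p < 2 * L
    · have hpb : p ∈ energyBox o δ r L ε := ⟨by linarith [hp.1], by nlinarith [hp.2.1],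
        by linarith, by linarith [hp.2.2]⟩
      rw [(hU p hpb).eq_of_nhds, hF, indicator_of_mem (hsub hpb)]
      simp only [hk]; ring
    · rw [hk0 p hp, cutoff_eq_zero o hδ hr0 hL0 hp]; ring
  have e2 : ∀ p, pd timeDir (timeCutoff ε) p * ((1 + nsq p) *
      conj o γ K L (fun p => cutoff o δ r L p * U p) p ^ 2) =
      pd timeDir (timeCutoff ε) p * ((1 + nsq p) * k p * F p ^ 2) := by
    intro p
    rcases lt_or_ge (time p) ε with ht | ht
    · have : deriv smoothTransition (time p / ε - 1) = 0 := by
        refine deriv_smoothTransition_of_notMem fun h => ?_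
        have := h.1
        rw [sub_nonneg, le_div_iff₀ hε] at this
        linarith
      rw [pd_timeDir_timeCutoff, this]; ring
    · rw [hconj p ht]; ring
  simp only [e2] at h1
  refine le_trans ?_ h1
  have sv : ContDiff ℝ ∞ (conj o γ K L (fun p => cutoff o δ r L p * U p)) :=
    contDiff_conj o γ K L (by fun_prop)
  have cv : HasCompactSupport (conj o γ K L (fun p => cutoff o δ r L p * U p)) :=
    (HasCompactSupport.mul_left cU).mul_left
  have i1 : Integrable fun p =>
      timeCutoff ε p * conj o γ K L (fun p => cutoff o δ r L p * U p) p ^ 2 := by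
    refine Continuous.integrable_of_hasCompactSupport (by fun_prop) ?_
    rw [show (fun p => timeCutoff ε p * conj o γ K L (fun p => cutoff o δ r L p * U p) p ^ 2) =
      fun p => (timeCutoff ε p * conj o γ K L (fun p => cutoff o δ r L p * U p) p) *
        conj o γ K L (fun p => cutoff o δ r L p * U p) p from funext fun p => by ring]
    exact cv.mul_left
  have mV := (isOpen_vanishBox o δ ρ ε₀ L).measurableSet
  have hVs : vanishBox o δ ρ ε₀ L ⊆ slab o T := fun p hp =>
    ⟨by linarith [hp.1], by linarith [hp.2.2.1], by linarith [hp.2.2.2]⟩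
  have e3 : ∫ p in vanishBox o δ ρ ε₀ L, f p ^ 2 = ∫ p in vanishBox o δ ρ ε₀ L, F p ^ 2 :=
    setIntegral_congr_fun mV fun p hp => by rw [hF, indicator_of_mem (hVs hp)]
  have hFsq : ∀ p, ‖F p ^ 2‖ ≤ M' ^ 2 := fun p => by
    rw [Real.norm_of_nonneg (sq_nonneg _), ← sq_abs]
    exact pow_le_pow_left₀ (abs_nonneg _) (hM' p) 2
  have i2 : IntegrableOn (fun p => F p ^ 2) (vanishBox o δ ρ ε₀ L) :=
    Measure.integrableOn_of_bounded (volume_vanishBox_lt_top ..).ne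
      (mF.pow_const 2).aestronglyMeasurable (ae_of_all _ hFsq)
  rw [e3, ← integral_const_mul]
  refine le_trans ?_ (setIntegral_le_integral (s := vanishBox o δ ρ ε₀ L) i1 (ae_of_all _ fun p =>
    mul_nonneg (timeCutoff_nonneg _ _) (sq_nonneg _)))
  refine setIntegral_mono_on (i2.const_mul _) i1.integrableOn mV fun p hp => ?_
  have ht : ε₀ < time p := hp.2.2.1
  rw [hconj p (by linarith), timeCutoff_eq_one hε (by linarith), one_mul]
  refine mul_le_mul_of_nonneg_right ?_ (sq_nonneg _)
  simp only [hk]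
  rw [cutoff_eq_one o hδ hr0 hL0 (by linarith [hp.1]) (hp.2.1.le.trans ?_) (by linarith [hp.2.2.2]),
    mul_one, ← Real.exp_nat_mul, Real.exp_le_exp]
  · exact le_two_mul_wt o (by linarith) (by rw [hK]; linarith) hδ hε₀ hL1 hp
  · rw [← sq_abs]; exact pow_le_pow_left₀ (abs_nonneg _) hrρ 2

theorem IsSlabSol.eq_zero_of_mem_vanishBox (o : Fin n) {c M T μ K L δ : ℝ} (hc : 0 ≤ c)
    (hμ : μ = 1 + c ^ 2) (hK : K = 16 * μ) (hL0 : 0 < L) (hL : 64 * μ * L ≤ 1) (hLT : 4 * L < T)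
    (hδ : 0 < δ) {f : SpaceTime n → ℝ} (hf : IsSlabSol o c M T f) {ρ ε₀ : ℝ} (hε₀ : 0 < ε₀) :
    ∀ p ∈ vanishBox o δ ρ ε₀ L, f p = 0 := by
  obtain ⟨C, hC⟩ := hf.integral_vanishBox_le o hc hμ hK hL0 hL hLT hδ
  have hVs : vanishBox o δ ρ ε₀ L ⊆ slab o T := fun p hp =>
    ⟨by linarith [hp.1], by linarith [hp.2.2.1], by linarith [hp.2.2.2]⟩
  have hcont : ContinuousOn f (vanishBox o δ ρ ε₀ L) := hf.smooth.continuousOn.mono hVs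
  have mV := (isOpen_vanishBox o δ ρ ε₀ L).measurableSet
  have hμ1 : 1 ≤ μ := by nlinarith [sq_nonneg c]
  set a := 4 * (L + K * L ^ 2) * δ with ha
  have ha0 : 0 < a := by rw [ha, hK]; positivity
  set A := ∫ p in vanishBox o δ ρ ε₀ L, f p ^ 2 with hA
  have hA0 : 0 ≤ A := integral_nonneg fun _ => sq_nonneg _
  have hle : ∀ᶠ γ in atTop, A ≤ C * Real.exp (ρ ^ 2 / 10) * (γ ^ 2 * Real.exp (-a * γ)) := by
    filter_upwards [eventually_ge_atTop 1,
      eventually_ge_atTop ((1 + 2 * μ ^ 2 + c ^ 2) / δ)] with γ h1 h2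
    have h3 := hC γ h1 ((div_le_iff₀ hδ).mp h2) ρ ε₀ hε₀
    have h4 : 0 ≤ Real.exp (-(2 * a * γ) + ρ ^ 2 / 10) := (Real.exp_pos _).le
    have h5 := mul_le_mul_of_nonneg_left h3 h4
    have e1 : Real.exp (-(2 * a * γ) + ρ ^ 2 / 10) *
        (Real.exp (8 * γ * (L + K * L ^ 2) * δ - ρ ^ 2 / 10) * A) = A := by
      rw [← mul_assoc, ← Real.exp_add, show -(2 * a * γ) + ρ ^ 2 / 10 +
        (8 * γ * (L + K * L ^ 2) * δ - ρ ^ 2 / 10) = 0 by rw [ha]; ring, Real.exp_zero, one_mul]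
    have e2 : Real.exp (-(2 * a * γ) + ρ ^ 2 / 10) *
        (C * γ ^ 2 * Real.exp (4 * γ * (L + K * L ^ 2) * δ)) =
        C * Real.exp (ρ ^ 2 / 10) * (γ ^ 2 * Real.exp (-a * γ)) := by
      rw [show -(2 * a * γ) + ρ ^ 2 / 10 = ρ ^ 2 / 10 + (-a * γ + -(4 * γ * (L + K * L ^ 2) * δ)) by
        rw [ha]; ring, Real.exp_add, Real.exp_add, Real.exp_neg]
      field_simp
    rwa [e1, e2] at h5
  have hlim : Tendsto (fun γ : ℝ => C * Real.exp (ρ ^ 2 / 10) * (γ ^ 2 * Real.exp (-a * γ)))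
      atTop (𝓝 0) := by
    have := (tendsto_rpow_mul_exp_neg_mul_atTop_nhds_zero 2 a ha0).const_mul
      (C * Real.exp (ρ ^ 2 / 10))
    simpa using this
  have hAz : A = 0 := le_antisymm (ge_of_tendsto hlim hle) hA0
  have hfi : IntegrableOn (fun p => f p ^ 2) (vanishBox o δ ρ ε₀ L) := by
    refine IntegrableOn.of_bound (volume_vanishBox_lt_top ..)
      ((hcont.pow 2).aestronglyMeasurable mV) (M ^ 2) ?_
    filter_upwards [ae_restrict_mem mV] with p hp
    rw [Real.norm_of_nonneg (sq_nonneg _), ← sq_abs]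
    exact pow_le_pow_left₀ (abs_nonneg _) (hf.bdd p (hVs hp)) 2
  rw [hA, integral_eq_zero_iff_of_nonneg (fun _ => sq_nonneg _) hfi] at hAz
  have := Measure.eqOn_open_of_ae_eq (μ := volume) hAz (isOpen_vanishBox ..) (hcont.pow 2)
    continuousOn_const
  intro p hp
  simpa using this hp

theorem IsSlabSol.eq_zero_of_time_lt (o : Fin n) {c M T L : ℝ} (hc : 0 ≤ c)
    (hL0 : 0 < L) (hL : 64 * (1 + c ^ 2) * L ≤ 1) (hLT : 4 * L < T)
    {f : SpaceTime n → ℝ} (hf : IsSlabSol o c M T f) {p : SpaceTime n} (hp : 0 < crd o p)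
    (h0 : 0 < time p) (h1 : time p < L / 2) : f p = 0 := by
  refine hf.eq_zero_of_mem_vanishBox o hc rfl rfl hL0 hL hLT (δ := crd o p / 32) (by positivity)
    (ρ := nsq p + 1) (ε₀ := time p / 2) (by positivity) p ⟨by linarith, ?_, by linarith, h1⟩
  nlinarith [nsq_nonneg p]

end SpaceTime

theorem pd_comp_add_right {X : Type*} [NormedAddCommGroup X] [NormedSpace ℝ X] (f : X → ℝ)
    (v a : X) : pd v (fun p => f (p + a)) = fun p => pd v f (p + a) := by
  ext p
  rw [pd, fderiv_comp_add_right]; rfl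

theorem pd_comp_equiv {X : Type*} [NormedAddCommGroup X] [NormedSpace ℝ X] (f : X → ℝ)
    (A : X ≃L[ℝ] X) (v : X) : pd v (fun p => f (A p)) = fun p => pd (A v) f (A p) := by
  ext p
  rw [pd, show (fun p => f (A p)) = f ∘ A from rfl, A.comp_right_fderiv]; rfl

namespace SpaceTime
variable {n : ℕ}

theorem IsSlabSol.shift (o : Fin n) {c M T s : ℝ} (hs : 0 ≤ s) {f : SpaceTime n → ℝ}
    (hf : IsSlabSol o c M T f)
    (h0 : ∀ x : EuclideanSpace ℝ (Fin n), 0 < x o → Tendsto (fun t => f (x, t)) (𝓝[>] s) (𝓝 0)) :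
    IsSlabSol o c M (T - s) (fun p => f (p + (0, s))) := by
  have hmem : ∀ p ∈ slab o (T - s), p + (0, s) ∈ slab o T := by
    rintro p ⟨h1, h2, h3⟩
    simp only [slab, crd, time, mem_ofPred_eq, Prod.fst_add, Prod.snd_add, add_zero] at h1 h2 h3 ⊢
    exact ⟨h1, by linarith, by linarith⟩
  refine ⟨hf.smooth.comp (contDiff_id.add contDiff_const).contDiffOn hmem,
    fun p hp => hf.bdd _ (hmem p hp), fun p hp => ?_, fun x hx => ?_⟩
  · have := hf.heat _ (hmem p hp)
    simpa only [lapl, gradSq, pd_comp_add_right] using this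
  · have h1 : Tendsto (fun t : ℝ => t + s) (𝓝[>] 0) (𝓝[>] s) := by
      refine tendsto_nhdsWithin_iff.mpr ⟨?_, ?_⟩
      · refine Tendsto.mono_left ?_ nhdsWithin_le_nhds
        exact (continuous_add_const s).tendsto' 0 s (zero_add s)
      · filter_upwards [self_mem_nhdsWithin] with t ht
        rw [mem_Ioi] at ht ⊢
        linarith
    refine ((h0 x hx).comp h1).congr fun t => ?_
    simp

/-- Backward uniqueness in a half-space. -/
theorem IsSlabSol.eq_zero (o : Fin n) {c M T : ℝ} (hc : 0 ≤ c) {f : SpaceTime n → ℝ}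
    (hf : IsSlabSol o c M T f) {p : SpaceTime n} (hp : p ∈ slab o T) : f p = 0 := by
  have hT' : time p < T := hp.2.2
  set T' := time p with hT'd
  set L := min (1 / (64 * (1 + c ^ 2))) ((T - T') / 8) with hL
  have hL0 : 0 < L := lt_min (by positivity) (by linarith)
  have hL1 : 64 * (1 + c ^ 2) * L ≤ 1 := by
    have h := (le_div_iff₀ (by positivity)).mp (min_le_left (1 / (64 * (1 + c ^ 2))) ((T - T') / 8))
    rw [← hL] at h; linarith
  have hL2 : 4 * L < T - T' := by
    have := min_le_right (1 / (64 * (1 + c ^ 2))) ((T - T') / 8)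
    rw [← hL] at this; linarith
  have key : ∀ k : ℕ, ∀ q : SpaceTime n, 0 < crd o q → 0 < time q → time q ≤ k * (L / 4) →
      time q ≤ T' → f q = 0 := by
    intro k
    induction k with
    | zero => intro q _ h1 h2; simp at h2; linarith
    | succ k ih =>
      intro q hq0 hq1 hq2 hq3
      rcases le_or_gt (time q) (k * (L / 4)) with h | h
      · exact ih q hq0 hq1 h hq3
      set s : ℝ := k * (L / 4) with hs
      have hs0 : 0 ≤ s := by positivity
      have hinit : ∀ x : EuclideanSpace ℝ (Fin n), 0 < x o →
          Tendsto (fun t => f (x, t)) (𝓝[>] s) (𝓝 0) := by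
        intro x hx
        rcases hs0.eq_or_lt with h0 | h0
        · rw [← h0]; exact hf.initial x hx
        · have hm : (x, s) ∈ slab o T := ⟨hx, h0, show s < T by linarith⟩
          have hc : ContinuousAt f (x, s) :=
            hf.smooth.continuousOn.continuousAt ((isOpen_slab o T).mem_nhds hm)
          have h3 : ContinuousAt (fun t => f (x, t)) s :=
            ContinuousAt.comp (f := fun t : ℝ => (x, t)) hc (by fun_prop)
          have h4 := h3.tendsto
          simp only [ih (x, s) hx h0 le_rfl (show s ≤ T' by linarith)] at h4
          exact h4.mono_left nhdsWithin_le_nhds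
      have h5 := (hf.shift o hs0 hinit).eq_zero_of_time_lt o hc hL0 hL1 (by linarith)
        (p := (q.1, q.2 - s)) hq0 (show 0 < time q - s by linarith) (by
          show time q - s < L / 2
          push_cast at hq2
          linarith)
      simpa using h5
  obtain ⟨k, hk⟩ := exists_nat_ge (T' / (L / 4))
  exact key k p hp.1 hp.2.1 ((div_le_iff₀ (by positivity)).mp hk) le_rfl

section Slices
variable {g : SpaceTime n → ℝ} {x : EuclideanSpace ℝ (Fin n)} {t : ℝ}

theorem fderiv_slice (hg : DifferentiableAt ℝ g (x, t)) (i : Fin n) :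
    fderiv ℝ (fun y => g (y, t)) x (EuclideanSpace.single i 1) = pd (dir i) g (x, t) := by
  have h1 : HasFDerivAt (fun y : EuclideanSpace ℝ (Fin n) => (y, t))
      (ContinuousLinearMap.inl ℝ _ ℝ) x := hasFDerivAt_prodMk_left x t
  have h2 : HasFDerivAt (fun y => g (y, t)) _ x := hg.hasFDerivAt.comp x h1
  rw [h2.fderiv, pd]
  rfl

theorem deriv_slice (hg : DifferentiableAt ℝ g (x, t)) :
    deriv (fun s => g (x, s)) t = pd timeDir g (x, t) := by
  have h1 : HasFDerivAt (fun s : ℝ => (x, s)) (ContinuousLinearMap.inr ℝ _ ℝ) t :=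
    hasFDerivAt_prodMk_right x t
  have h2 : HasFDerivAt (fun s => g (x, s)) _ t := hg.hasFDerivAt.comp t h1
  rw [h2.hasDerivAt.deriv, pd]
  rfl

theorem norm_gradient (h : EuclideanSpace ℝ (Fin n) → ℝ) (x : EuclideanSpace ℝ (Fin n)) :
    ‖gradient h x‖ = √(∑ i, fderiv ℝ h x (EuclideanSpace.single i 1) ^ 2) := by
  rw [EuclideanSpace.norm_eq]
  congr 1
  refine Finset.sum_congr rfl fun i _ => ?_
  have : inner ℝ (gradient h x) (EuclideanSpace.single i 1) =
      fderiv ℝ h x (EuclideanSpace.single i 1) := by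
    rw [gradient, InnerProductSpace.toDual_symm_apply]
  rw [EuclideanSpace.inner_single_right] at this
  simp only [conj_trivial, one_mul] at this
  rw [Real.norm_eq_abs, sq_abs, this]

theorem lap_slice {O : Set (SpaceTime n)} (hO : IsOpen O) (hg : ContDiffOn ℝ ∞ g O)
    (hx : (x, t) ∈ O) : lap (fun y => g (y, t)) x = lapl dir g (x, t) := by
  have hd : ∀ q ∈ O, DifferentiableAt ℝ g q := fun q hq =>
    (hg.contDiffAt (hO.mem_nhds hq)).differentiableAt (by simp)
  rw [lap, lapl]
  refine Finset.sum_congr rfl fun i _ => ?_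
  have hpd : ContDiffAt ℝ 1 (pd (dir i) g) (x, t) := by
    have h1 : ContDiffAt ℝ 1 (fderiv ℝ g) (x, t) :=
      ((hg.contDiffAt (hO.mem_nhds hx)).fderiv_right (m := ∞) le_rfl).of_le (by simp)
    exact h1.clm_apply contDiffAt_const
  rw [← fderiv_slice (hpd.differentiableAt (by simp))]
  congr 1
  refine Filter.EventuallyEq.fderiv_eq ?_
  have : Continuous fun y : EuclideanSpace ℝ (Fin n) => (y, t) := by fun_prop
  filter_upwards [this.continuousAt.preimage_mem_nhds (hO.mem_nhds hx)] with y hy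
  exact fderiv_slice (hd _ hy) i

end Slices

theorem hasBU_halfSpace (o : Fin n) : HasBU n {x | 0 < x o} := by
  intro T hT c hc u hu ⟨M, hM⟩ hheat hlim x hx t ht
  set g : SpaceTime n → ℝ := fun p => u p.1 p.2 with hg
  have hslab : {x : EuclideanSpace ℝ (Fin n) | 0 < x o} ×ˢ Set.Ioo 0 T = slab o T := by
    ext p; rfl
  rw [hslab] at hu
  set A : SpaceTime n ≃L[ℝ] SpaceTime n :=
    (ContinuousLinearEquiv.refl ℝ _).prodCongr (ContinuousLinearEquiv.neg ℝ) with hA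
  set f : SpaceTime n → ℝ := fun p => g (A p + (0, T)) with hf
  have hAe : ∀ p, A p + (0, T) = (p.1, T - p.2) := fun p => by
    ext
    · simp [hA]
    · simp [hA]; ring
  have hAdir : ∀ i, A (dir i) = dir i := fun i => by simp [hA, dir]
  have hAt : A timeDir = -timeDir := by simp [hA, timeDir]
  have hmem : ∀ p ∈ slab o T, A p + (0, T) ∈ slab o T := by
    intro p ⟨h1, h2, h3⟩
    rw [hAe]
    exact ⟨h1, show 0 < T - time p by linarith, show T - time p < T by linarith⟩
  have hfpd : ∀ v, pd v f = fun p => pd (A v) g (A p + (0, T)) := fun v => by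
    rw [hf, pd_comp_equiv (fun q => g (q + (0, T))) A v, pd_comp_add_right]
  have hsol : IsSlabSol o c M T f := by
    refine ⟨hu.comp (A.contDiff.add contDiff_const).contDiffOn hmem, fun p hp => ?_,
      fun p hp => ?_, fun x hx => ?_⟩
    · exact hM _ (hmem p hp).1 _ (hmem p hp).2
    · have h1 := hmem p hp
      set q := A p + (0, T) with hq
      have h2 := hheat q.1 h1.1 q.2 h1.2
      have hd : DifferentiableAt ℝ g q :=
        (hu.contDiffAt ((isOpen_slab o T).mem_nhds h1)).differentiableAt (by simp)
      have e1 : deriv (u q.1) q.2 = pd timeDir g q := deriv_slice (g := g) hd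
      have e2 : lap (fun y => u y q.2) q.1 = lapl dir g q := lap_slice (g := g) (isOpen_slab o T) hu h1
      have e3 : ‖gradient (fun y => u y q.2) q.1‖ = √(gradSq dir g q) := by
        rw [norm_gradient, gradSq]
        congr 1
        exact Finset.sum_congr rfl fun i _ => by
          have e : fderiv ℝ (fun y => u y q.2) q.1 (EuclideanSpace.single i 1) = pd (dir i) g q :=
            fderiv_slice (g := g) hd i
          rw [e]
      rw [e1, e2, e3] at h2
      have e4 : pd timeDir f p = -pd timeDir g q := by
        rw [hfpd timeDir, hAt]; exact map_neg _ _
      have e5 : lapl dir f p = lapl dir g q := by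
        simp only [lapl, hfpd, hAdir]
        refine Finset.sum_congr rfl fun i _ => ?_
        rw [pd_comp_equiv (fun q => pd (dir i) g (q + (0, T))) A, pd_comp_add_right, hAdir]
      have e6 : gradSq dir f p = gradSq dir g q := by
        simp only [gradSq, hfpd, hAdir]; rfl
      rw [e4, e5, e6]
      rw [abs_sub_comm] at h2
      rwa [neg_add_eq_sub]
    · have h1 : Tendsto (fun t : ℝ => T - t) (𝓝[>] 0) (𝓝[<] T) := by
        refine tendsto_nhdsWithin_iff.mpr ⟨?_, ?_⟩
        · refine Tendsto.mono_left ?_ nhdsWithin_le_nhds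
          exact (continuous_const.sub continuous_id).tendsto' 0 T (sub_zero T)
        · filter_upwards [self_mem_nhdsWithin] with t ht
          rw [mem_Ioi] at ht
          rw [mem_Iio]
          linarith
      refine ((hlim x hx).comp h1).congr fun t => ?_
      simp only [hf, hAe]; rfl
  have h := hsol.eq_zero o hc (p := (x, T - t)) ⟨hx, show 0 < T - t by linarith [ht.2],
    show T - t < T by linarith [ht.1]⟩
  simpa [hf, hAe, hg] using h

end SpaceTime

section Isometry
variable {n : ℕ}

theorem lap_eq_sum {f : EuclideanSpace ℝ (Fin n) → ℝ} {x : EuclideanSpace ℝ (Fin n)}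
    (hf : DifferentiableAt ℝ (fderiv ℝ f) x) :
    lap f x = ∑ i, fderiv ℝ (fderiv ℝ f) x (EuclideanSpace.single i 1)
      (EuclideanSpace.single i 1) := by
  refine Finset.sum_congr rfl fun i _ => ?_
  rw [fderiv_clm_apply hf (differentiableAt_const _)]
  simp

theorem lap_comp_isometry (A : EuclideanSpace ℝ (Fin n) ≃ₗᵢ[ℝ] EuclideanSpace ℝ (Fin n))
    {f : EuclideanSpace ℝ (Fin n) → ℝ} {x : EuclideanSpace ℝ (Fin n)}
    (hf : DifferentiableAt ℝ (fderiv ℝ f) (A x)) :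
    lap (fun y => f (A y)) x = lap f (A x) := by
  have h1 : ∀ (h : EuclideanSpace ℝ (Fin n) → ℝ) (y v : EuclideanSpace ℝ (Fin n)),
      fderiv ℝ (fun y => h (A y)) y v = fderiv ℝ h (A y) (A v) := fun h y v => by
    have : (fun y => h (A y)) = h ∘ A.toContinuousLinearEquiv := rfl
    rw [this, ContinuousLinearEquiv.comp_right_fderiv]
    rfl
  have h2 := fun b : OrthonormalBasis (Fin n) ℝ (EuclideanSpace ℝ (Fin n)) =>
    congrFun (InnerProductSpace.laplacian_eq_iteratedFDeriv_orthonormalBasis f b) (A x)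
  simp only [iteratedFDeriv_two_apply, Matrix.cons_val_zero, Matrix.cons_val_one] at h2
  have h3 := (h2 ((EuclideanSpace.basisFun (Fin n) ℝ).map A)).symm.trans
    (h2 (EuclideanSpace.basisFun (Fin n) ℝ))
  simp only [OrthonormalBasis.map_apply, EuclideanSpace.basisFun_apply] at h3
  rw [lap_eq_sum hf, ← h3, lap]
  refine Finset.sum_congr rfl fun i _ => ?_
  simp only [h1]
  rw [h1 (fun z => fderiv ℝ f z (A (EuclideanSpace.single i 1))),
    fderiv_clm_apply hf (differentiableAt_const _)]
  simp

theorem norm_gradient_comp_isometry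
    (A : EuclideanSpace ℝ (Fin n) ≃ₗᵢ[ℝ] EuclideanSpace ℝ (Fin n))
    (f : EuclideanSpace ℝ (Fin n) → ℝ) (x : EuclideanSpace ℝ (Fin n)) :
    ‖gradient (fun y => f (A y)) x‖ = ‖gradient f (A x)‖ := by
  have : (fun y => f (A y)) = f ∘ A.toContinuousLinearEquiv := rfl
  rw [gradient, gradient, LinearIsometryEquiv.norm_map, LinearIsometryEquiv.norm_map, this,
    ContinuousLinearEquiv.comp_right_fderiv]
  exact ContinuousLinearMap.opNorm_comp_linearIsometryEquiv _ A

/-- Backward uniqueness passes to open sets that are unions of isometric copies. -/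
theorem HasBU.of_isometry {Ω Ω' : Set (EuclideanSpace ℝ (Fin n))} (h : HasBU n Ω)
    (hΩ' : IsOpen Ω')
    (hcov : ∀ x ∈ Ω', ∃ A : EuclideanSpace ℝ (Fin n) ≃ₗᵢ[ℝ] EuclideanSpace ℝ (Fin n),
      A.symm x ∈ Ω ∧ ∀ y ∈ Ω, A y ∈ Ω') : HasBU n Ω' := by
  intro T hT c hc u hu ⟨M, hM⟩ hheat hlim x hx t ht
  obtain ⟨A, hAx, hA⟩ := hcov x hx
  have := h T hT c hc (fun y => u (A y)) ?_ ⟨M, fun y hy => hM _ (hA y hy)⟩ ?_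
    (fun y hy => hlim _ (hA y hy)) _ hAx t ht
  · simpa using this
  · exact hu.comp (f := fun p : EuclideanSpace ℝ (Fin n) × ℝ => (A p.1, p.2))
      ((A.contDiff.comp contDiff_fst).prodMk contDiff_snd).contDiffOn
      fun p hp => ⟨hA _ hp.1, hp.2⟩
  · intro y hy s hs
    have h1 : ContDiffAt ℝ 2 (fun z => u z s) (A y) := by
      have h2 : ContDiffAt ℝ ∞ (fun p : EuclideanSpace ℝ (Fin n) × ℝ => u p.1 p.2) (A y, s) :=
        hu.contDiffAt ((hΩ'.prod isOpen_Ioo).mem_nhds ⟨hA y hy, hs⟩)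
      exact (h2.comp (A y) (f := fun z => (z, s))
        (contDiffAt_id.prodMk contDiffAt_const)).of_le ENat.LEInfty.out
    have h3 : DifferentiableAt ℝ (fderiv ℝ (fun z => u z s)) (A y) :=
      (h1.fderiv_right (m := 1) (by norm_num)).differentiableAt (by simp)
    rw [lap_comp_isometry A h3, norm_gradient_comp_isometry A (fun z => u z s)]
    exact hheat _ (hA y hy) s hs

end Isometry

section Cone
variable {n : ℕ} [NeZero n]

open InnerProductGeometry

theorem isOpen_cone (θ : ℝ) : IsOpen (cone n θ) :=
  isOpen_lt (by fun_prop) (by fun_prop)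

theorem mem_cone_iff_angle {θ : ℝ} (h0 : 0 < θ) (h1 : θ < 2 * π)
    {x : EuclideanSpace ℝ (Fin n)} :
    x ∈ cone n θ ↔ x ≠ 0 ∧ angle x (EuclideanSpace.single 0 1) < θ / 2 := by
  rw [cone, mem_ofPred_eq]
  rcases eq_or_ne x 0 with rfl | hx
  · simp
  have h2 := cos_angle_mul_norm_mul_norm x (EuclideanSpace.single (0 : Fin n) (1 : ℝ))
  rw [EuclideanSpace.inner_single_right] at h2
  simp only [PiLp.norm_single, norm_one, mul_one, conj_trivial, one_mul] at h2
  rw [← h2, mul_comm, mul_lt_mul_iff_left₀ (norm_pos_iff.mpr hx),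
    strictAntiOn_cos.lt_iff_gt ⟨by linarith, by linarith⟩ ⟨angle_nonneg _ _, angle_le_pi _ _⟩]
  simp [hx]

theorem exists_angle_eq {V : Type*} [NormedAddCommGroup V] [InnerProductSpace ℝ V] {x e : V}
    (hx : x ≠ 0) (he : e ≠ 0) (hπ : angle e x < π) {δ : ℝ} (h0 : 0 ≤ δ) (h1 : δ ≤ angle e x) :
    ∃ w, w ≠ 0 ∧ angle e w = δ ∧ angle w x = angle e x - δ := by
  have hw : ∀ s ∈ Set.Icc (0 : ℝ) 1, (1 - s) • e + s • x ≠ 0 := by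
    intro s hs h
    rcases hs.1.eq_or_lt with rfl | hs0
    · simp [he] at h
    rcases hs.2.eq_or_lt with rfl | hs1
    · simp [hx] at h
    refine hπ.ne (angle_eq_pi_iff.mpr ⟨he, -((1 - s) / s),
      neg_neg_of_pos (div_pos (by linarith) hs0), ?_⟩)
    have h2 : s • x = -((1 - s) • e) := by rw [eq_neg_iff_add_eq_zero, add_comm]; exact h
    rw [neg_smul, div_eq_inv_mul, mul_smul, ← smul_neg, ← h2, inv_smul_smul₀ hs0.ne']
  have hc : ContinuousOn (fun s : ℝ => angle e ((1 - s) • e + s • x)) (Set.Icc 0 1) := by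
    intro s hs
    have h2 : ContinuousAt (fun y : V × V => angle y.1 y.2) (e, (1 - s) • e + s • x) :=
      continuousAt_angle he (hw s hs)
    exact (ContinuousAt.comp (f := fun s : ℝ => (e, (1 - s) • e + s • x)) h2
      (by fun_prop)).continuousWithinAt
  obtain ⟨s, hs, hse⟩ := intermediate_value_Icc zero_le_one hc
    (show δ ∈ Set.Icc _ _ by simpa [angle_self he] using ⟨h0, h1⟩)
  refine ⟨_, hw s hs, hse, ?_⟩
  have h3 := angle_eq_angle_add_add_angle_add_of_mem_span (x := e) (z := x) (hw s hs)
    (Submodule.mem_span_pair.mpr ⟨⟨1 - s, by linarith [hs.2]⟩, ⟨s, hs.1⟩, rfl⟩)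
  simp only at hse
  linarith

theorem hasBU_cone_mono {θ θ' : ℝ} (h0 : 0 < θ) (h1 : θ ≤ θ') (h2 : θ' < 2 * π)
    (h : HasBU n (cone n θ)) : HasBU n (cone n θ') := by
  refine h.of_isometry (isOpen_cone θ') fun x hx => ?_
  obtain ⟨hx0, hxa⟩ := (mem_cone_iff_angle (by linarith) h2).mp hx
  set e : EuclideanSpace ℝ (Fin n) := EuclideanSpace.single 0 1 with he
  have hen : ‖e‖ = 1 := by simp [he]
  have he0 : e ≠ 0 := norm_ne_zero_iff.mp (by rw [hen]; exact one_ne_zero)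
  rw [angle_comm] at hxa
  have ha := angle_nonneg e x
  set φ := angle e x with hφ
  have hθ' : 0 < θ' := by linarith
  obtain ⟨w, hw, hew, hwx⟩ := exists_angle_eq hx0 he0 (by linarith)
    (δ := φ * ((θ' - θ) / θ')) (mul_nonneg ha (div_nonneg (by linarith) hθ'.le))
    (mul_le_of_le_one_right ha ((div_le_one hθ').mpr (by linarith)))
  have hδ1 : φ * ((θ' - θ) / θ') ≤ (θ' - θ) / 2 := by
    rw [mul_div_assoc', div_le_div_iff₀ hθ' two_pos]
    nlinarith
  have hδ2 : φ - φ * ((θ' - θ) / θ') < θ / 2 := by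
    have : φ - φ * ((θ' - θ) / θ') = φ * θ / θ' := by field_simp; ring
    rw [this, div_lt_div_iff₀ hθ' two_pos]
    nlinarith
  set w' := ‖w‖⁻¹ • w with hw'
  have hwn : ‖w'‖ = 1 := by rw [hw', norm_smul, norm_inv, norm_norm, inv_mul_cancel₀ (norm_ne_zero_iff.mpr hw)]
  have hpos : 0 < ‖w‖⁻¹ := inv_pos.mpr (norm_pos_iff.mpr hw)
  have hA := Submodule.reflection_sub (v := e) (w := w') (hen.trans hwn.symm)
  set A := (ℝ ∙ (e - w'))ᗮ.reflection
  refine ⟨A, (mem_cone_iff_angle h0 (by linarith)).mpr ⟨by simpa using hx0, ?_⟩, fun y hy => ?_⟩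
  · have : angle (A.symm x) e = angle x w' := by
      rw [← A.toLinearIsometry.angle_map (A.symm x) e]
      simp [hA]
    rw [← he, this, angle_comm, hw', angle_smul_left_of_pos _ _ hpos, hwx]
    exact hδ2
  · obtain ⟨hy0, hya⟩ := (mem_cone_iff_angle h0 (by linarith)).mp hy
    refine (mem_cone_iff_angle hθ' h2).mpr ⟨by simpa using hy0, ?_⟩
    have h3 := angle_le_angle_add_angle (A y) w' e
    have h4 : angle (A y) w' = angle y e := by
      rw [← hA]; exact A.toLinearIsometry.angle_map y e
    have h5 : angle w' e = φ * ((θ' - θ) / θ') := by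
      rw [hw', angle_smul_left_of_pos _ _ hpos, angle_comm, hew]
    rw [h4, h5] at h3
    rw [← he] at hya ⊢
    linarith

theorem hasBU_cone_pi : HasBU n (cone n π) := by
  have : cone n π = {x | 0 < x 0} := by
    ext x; simp [cone, Real.cos_pi_div_two]
  rw [this]
  exact SpaceTime.hasBU_halfSpace 0

end Cone

section Counterexample
variable {n : ℕ}

theorem fderiv_re_comp (L : EuclideanSpace ℝ (Fin n) →L[ℝ] ℂ) {H : ℂ → ℂ} {d : ℂ}
    {y : EuclideanSpace ℝ (Fin n)} (hH : HasDerivAt H d (L y)) (v : EuclideanSpace ℝ (Fin n)) :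
    fderiv ℝ (fun y => (H (L y)).re) y v = (d * L v).re := by
  have h1 := (hH.hasFDerivAt.restrictScalars ℝ).comp y L.hasFDerivAt
  have h2 : HasFDerivAt (fun y => (H (L y)).re) _ y := Complex.reCLM.hasFDerivAt.comp y h1
  rw [h2.fderiv]
  simp [mul_comm]

theorem lap_re_comp (L : EuclideanSpace ℝ (Fin n) →L[ℝ] ℂ) {H H₁ H₂ : ℂ → ℂ}
    (h1 : ∀ z, HasDerivAt H (H₁ z) z) (h2 : ∀ z, HasDerivAt H₁ (H₂ z) z)
    (x : EuclideanSpace ℝ (Fin n)) :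
    lap (fun y => (H (L y)).re) x =
      (H₂ (L x) * ∑ i, L (EuclideanSpace.single i 1) ^ 2).re := by
  rw [Finset.mul_sum, Complex.re_sum, lap]
  refine Finset.sum_congr rfl fun i _ => ?_
  simp only [fderiv_re_comp L (h1 _)]
  rw [fderiv_re_comp L (H := fun z => H₁ z * L (EuclideanSpace.single i 1)) ((h2 _).mul_const _)]
  ring_nf

/-- The complex heat kernel run towards time `1`, evaluated at `ζ + a`. -/
noncomputable def complexKernel (a ζ : ℂ) (t : ℝ) : ℂ :=
  Complex.exp (-((Real.log (1 - t) / 2 : ℝ) : ℂ) - (ζ + a) ^ 2 * (((1 - t)⁻¹ : ℝ) : ℂ))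

theorem hasDerivAt_complexKernel (a ζ : ℂ) (t : ℝ) :
    HasDerivAt (fun z => complexKernel a z t)
      (-2 * (ζ + a) * (((1 - t)⁻¹ : ℝ) : ℂ) * complexKernel a ζ t) ζ := by
  have h := (((((hasDerivAt_id ζ).add_const a).pow 2).mul_const
    (((1 - t)⁻¹ : ℝ) : ℂ)).const_sub (-((Real.log (1 - t) / 2 : ℝ) : ℂ))).cexp
  refine h.congr_deriv ?_
  simp only [complexKernel, id, Pi.pow_apply]
  push_cast
  ring

theorem hasDerivAt_complexKernel₂ (a ζ : ℂ) (t : ℝ) :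
    HasDerivAt (fun z => -2 * (z + a) * (((1 - t)⁻¹ : ℝ) : ℂ) * complexKernel a z t)
      ((-2 * (((1 - t)⁻¹ : ℝ) : ℂ) + 4 * (ζ + a) ^ 2 * (((1 - t)⁻¹ : ℝ) : ℂ) ^ 2) *
        complexKernel a ζ t) ζ := by
  have h := ((((hasDerivAt_id ζ).add_const a).const_mul (-2)).mul_const
    (((1 - t)⁻¹ : ℝ) : ℂ)).mul (hasDerivAt_complexKernel a ζ t)
  refine h.congr_deriv ?_
  simp only [id]
  ring

theorem hasDerivAt_complexKernel_time (a ζ : ℂ) {t : ℝ} (ht : t < 1) :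
    HasDerivAt (fun s => complexKernel a ζ s)
      (((((1 - t)⁻¹ : ℝ) : ℂ) / 2 - (ζ + a) ^ 2 * (((1 - t)⁻¹ : ℝ) : ℂ) ^ 2) *
        complexKernel a ζ t) t := by
  have ht' : 1 - t ≠ 0 := by linarith
  have h0 : HasDerivAt (fun s : ℝ => 1 - s) (-1) t := (hasDerivAt_id t).const_sub 1
  have h : HasDerivAt (fun s => complexKernel a ζ s) (complexKernel a ζ t * _) t :=
    (((h0.log ht').div_const 2).ofReal_comp.neg.sub
    ((h0.inv ht').ofReal_comp.const_mul ((ζ + a) ^ 2))).cexp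
  refine h.congr_deriv ?_
  rw [mul_comm]
  congr 1
  push_cast
  field_simp

theorem norm_complexKernel_le {a ζ : ℂ} {t δ : ℝ} (ht : t < 1) (hδ : 0 < δ)
    (h : δ ≤ ((ζ + a) ^ 2).re) : ‖complexKernel a ζ t‖ ≤ √(1 - t) / δ := by
  have ht' : 0 < 1 - t := by linarith
  have hs : 0 < √(1 - t) := Real.sqrt_pos.mpr ht'
  rw [complexKernel, Complex.norm_exp, Complex.sub_re, Complex.neg_re, Complex.ofReal_re,
    Complex.re_mul_ofReal, sub_eq_add_neg, Real.exp_add, ← Real.log_sqrt ht'.le, Real.exp_neg,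
    Real.exp_log hs, Real.exp_neg, ← mul_inv, div_eq_inv_mul]
  have h1 : δ * (1 - t)⁻¹ ≤ Real.exp (((ζ + a) ^ 2).re * (1 - t)⁻¹) :=
    (mul_le_mul_of_nonneg_right h (inv_pos.mpr ht').le).trans
      (by linarith [Real.add_one_le_exp (((ζ + a) ^ 2).re * (1 - t)⁻¹)])
  have h2 : √(1 - t) * (δ * (1 - t)⁻¹) = δ * (√(1 - t))⁻¹ := by
    have := Real.mul_self_sqrt ht'.le
    field_simp
    nlinarith
  calc _ ≤ (√(1 - t) * (δ * (1 - t)⁻¹))⁻¹ := by gcongr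
    _ = _ := by rw [h2, mul_inv, inv_inv]

theorem not_hasBU_of_exists {Ω : Set (EuclideanSpace ℝ (Fin n))}
    (L : EuclideanSpace ℝ (Fin n) →L[ℝ] ℂ) {a : ℂ} {δ : ℝ}
    (hL : ∑ i, L (EuclideanSpace.single i 1) ^ 2 = -1 / 4) (hδ : 0 < δ)
    (hΩ : ∀ x ∈ Ω, δ ≤ ((L x + a) ^ 2).re)
    (hne : ∃ x ∈ Ω, ((L x + a) ^ 2).im = 0) : ¬ HasBU n Ω := by
  intro h
  have hb : ∀ x ∈ Ω, ∀ t ∈ Set.Ioo (0 : ℝ) 1, |(complexKernel a (L x) t).re| ≤ √(1 - t) / δ :=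
    fun x hx t ht => (Complex.abs_re_le_norm _).trans (norm_complexKernel_le ht.2 hδ (hΩ x hx))
  obtain ⟨x, hx, him⟩ := hne
  have h0 := h 1 one_pos 0 le_rfl (fun x t => (complexKernel a (L x) t).re) ?_
    ⟨1 / δ, fun x hx t ht => (hb x hx t ht).trans ?_⟩ ?_ ?_ x hx (1 / 2) (by norm_num)
  · have : complexKernel a (L x) (1 / 2) =
        ((Real.exp (-(Real.log (1 - 1 / 2) / 2) - ((L x + a) ^ 2).re * (1 - 1 / 2)⁻¹) : ℝ) : ℂ) := by
      have h2 : (L x + a) ^ 2 = (((L x + a) ^ 2).re : ℂ) := by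
        apply Complex.ext <;> simp only [Complex.ofReal_re, Complex.ofReal_im, him]
      rw [complexKernel, h2, Complex.ofReal_re]
      push_cast
      rfl
    simp only [this, Complex.ofReal_re] at h0
    exact (Real.exp_pos _).ne' h0
  · refine Complex.reCLM.contDiff.comp_contDiffOn ?_
    refine ContDiffOn.cexp ?_
    have h1 : ContDiffOn ℝ ∞ (fun p : EuclideanSpace ℝ (Fin n) × ℝ => 1 - p.2)
      (Ω ×ˢ Set.Ioo 0 1) := (contDiff_const.sub contDiff_snd).contDiffOn
    have h2 : ∀ p ∈ Ω ×ˢ Set.Ioo (0 : ℝ) 1, 1 - p.2 ≠ 0 := fun p hp => by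
      have := hp.2.2
      linarith
    refine ContDiffOn.sub (Complex.ofRealCLM.contDiff.comp_contDiffOn
      ((h1.log h2).div_const 2)).neg (ContDiffOn.mul ?_
        (Complex.ofRealCLM.contDiff.comp_contDiffOn (h1.inv h2)))
    exact (((L.contDiff.comp contDiff_fst).add contDiff_const).pow 2).contDiffOn
  · have : √(1 - t) ≤ 1 := Real.sqrt_le_one.mpr (by linarith [ht.1])
    gcongr
  · intro x hx t ht
    have h1 : HasDerivAt (fun s => (complexKernel a (L x) s).re) _ t :=
      Complex.reCLM.hasFDerivAt.comp_hasDerivAt t (hasDerivAt_complexKernel_time a (L x) ht.2)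
    rw [h1.deriv, lap_re_comp L (fun z => hasDerivAt_complexKernel a z t)
      (fun z => hasDerivAt_complexKernel₂ a z t), hL, zero_mul, Complex.reCLM_apply,
      ← Complex.sub_re]
    ring_nf
    simp
  · intro x hx
    have h1 : Tendsto (fun t : ℝ => √(1 - t) / δ) (𝓝[<] 1) (𝓝 0) := by
      have : Continuous fun t : ℝ => √(1 - t) / δ := by fun_prop
      exact (this.tendsto' 1 0 (by simp)).mono_left nhdsWithin_le_nhds
    refine squeeze_zero_norm' ?_ h1
    filter_upwards [Ioo_mem_nhdsLT zero_lt_one] with t ht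
    exact hb x hx t ht

theorem not_hasBU_cone [NeZero n] (hn : 2 ≤ n) {θ : ℝ} (h0 : 0 < θ) (h1 : θ < π / 2) :
    ¬ HasBU n (cone n θ) := by
  set c := Real.cos (θ / 2) with hc
  have hc0 : 0 < c := Real.cos_pos_of_mem_Ioo ⟨by linarith, by linarith⟩
  have hc1 : 0 < 2 * c ^ 2 - 1 := by
    rw [hc, ← Real.cos_two_mul]
    exact Real.cos_pos_of_mem_Ioo ⟨by linarith, by linarith⟩
  have hc2 : c < 1 := by
    rw [hc, ← Real.cos_zero]
    exact Real.cos_lt_cos_of_nonneg_of_le_pi le_rfl (by linarith) (by linarith)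
  set α := √(1 / (4 * (2 * c ^ 2 - 1))) with hα
  have hα2 : α ^ 2 = 1 / (4 * (2 * c ^ 2 - 1)) := Real.sq_sqrt (by positivity)
  have hα0 : 0 < α := Real.sqrt_pos.mpr (by positivity)
  set β := √(α ^ 2 + 1 / 4) with hβ
  have hβ2 : β ^ 2 = α ^ 2 + 1 / 4 := Real.sq_sqrt (by positivity)
  have hαβ : β ^ 2 * (1 - c ^ 2) ≤ α ^ 2 * c ^ 2 := by
    have : α ^ 2 * (2 * c ^ 2 - 1) = 1 / 4 := by rw [hα2]; field_simp
    rw [hβ2]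
    nlinarith [sq_nonneg c]
  set j : Fin n := ⟨1, hn⟩ with hj
  have hj0 : j ≠ 0 := by rw [Ne, Fin.ext_iff]; simp [hj]
  set L : EuclideanSpace ℝ (Fin n) →L[ℝ] ℂ :=
    (EuclideanSpace.proj 0 : EuclideanSpace ℝ (Fin n) →L[ℝ] ℝ).smulRight (α : ℂ) +
      (EuclideanSpace.proj j : EuclideanSpace ℝ (Fin n) →L[ℝ] ℝ).smulRight (β * Complex.I) with hL
  have hLx : ∀ x, L x = x 0 * α + x j * (β * Complex.I) := fun x => by simp [hL]
  refine not_hasBU_of_exists L (a := α) (δ := α ^ 2) ?_ (by positivity) (fun x hx => ?_)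
    ⟨EuclideanSpace.single 0 1, ?_, ?_⟩
  · rw [Finset.sum_eq_add 0 j hj0.symm]
    · simp only [hLx]
      simp only [PiLp.single_apply, hj0, hj0.symm, if_true, if_false]
      have : ((β : ℂ)) ^ 2 = α ^ 2 + 1 / 4 := by
        rw [← Complex.ofReal_pow, hβ2]
        push_cast
        rfl
      push_cast
      rw [zero_mul, zero_mul, one_mul, one_mul, add_zero, zero_add, mul_pow, this, Complex.I_sq]
      ring
    · intro i _ hi
      simp [hLx, hi.1.symm, hi.2.symm]
    · simp
    · simp
  · have hx' : ‖x‖ * c < x 0 := hx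
    have hn2 : x 0 ^ 2 + x j ^ 2 ≤ ‖x‖ ^ 2 := by
      rw [EuclideanSpace.norm_sq_eq, ← Finset.sum_pair hj0.symm (f := fun i => x i ^ 2)]
      simp only [Real.norm_eq_abs, sq_abs]
      exact Finset.sum_le_sum_of_subset_of_nonneg (Finset.subset_univ _)
        fun i _ _ => sq_nonneg _
    have hx0 : 0 ≤ x 0 := (by positivity : 0 ≤ ‖x‖ * c).trans hx'.le
    have h2 : ‖x‖ ^ 2 * c ^ 2 ≤ x 0 ^ 2 := by
      rw [← mul_pow]
      exact pow_le_pow_left₀ (by positivity) hx'.le 2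
    have h3 : β ^ 2 * x j ^ 2 ≤ α ^ 2 * x 0 ^ 2 := by
      have h4 : x j ^ 2 * c ^ 2 ≤ x 0 ^ 2 * (1 - c ^ 2) := by nlinarith [sq_nonneg c]
      have h5 : c ^ 2 * (β ^ 2 * x j ^ 2) ≤ c ^ 2 * (α ^ 2 * x 0 ^ 2) := by
        nlinarith [mul_le_mul_of_nonneg_left h4 (sq_nonneg β),
          mul_le_mul_of_nonneg_left hαβ (sq_nonneg (x 0))]
      exact le_of_mul_le_mul_left h5 (by positivity)
    have h6 : ((L x + α) ^ 2).re = α ^ 2 * (x 0 + 1) ^ 2 - β ^ 2 * x j ^ 2 := by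
      rw [hLx, sq, Complex.mul_re]
      simp
      ring
    rw [h6]
    nlinarith [sq_nonneg α, mul_nonneg (sq_nonneg α) hx0]
  · show ‖EuclideanSpace.single (0 : Fin n) (1 : ℝ)‖ * c < EuclideanSpace.single (0 : Fin n) (1 : ℝ) 0
    simpa using hc2
  · rw [hLx, sq, Complex.mul_im]
    simp [hj0]

end Counterexample

end Auxiliary

/-- There is a critical angle `θ₀ ∈ [π/2, π]` such that (BU) holds for cones of
opening angle `θ ∈ (θ₀, 2π)` and fails for cones of opening angle `θ ∈ (0, θ₀)`. -/
theorem exists_critical_angle (n : ℕ) [NeZero n] (hn : 2 ≤ n) :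
    ∃ θ₀ ∈ Set.Icc (π / 2) π,
      (∀ θ ∈ Set.Ioo θ₀ (2 * π), HasBU n (cone n θ)) ∧
      (∀ θ ∈ Set.Ioo 0 θ₀, ¬ HasBU n (cone n θ)) := by
  have hpi := Real.pi_pos
  set S := {θ | 0 < θ ∧ HasBU n (cone n θ)} with hS
  have hπ : π ∈ S := ⟨hpi, hasBU_cone_pi⟩
  have hlow : ∀ θ ∈ S, π / 2 ≤ θ := fun θ hθ =>
    not_lt.mp fun h => not_hasBU_cone hn hθ.1 h hθ.2
  have hbdd : BddBelow S := ⟨_, hlow⟩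
  refine ⟨sInf S, ⟨le_csInf ⟨π, hπ⟩ hlow, csInf_le hbdd hπ⟩, fun θ hθ => ?_, fun θ hθ h => ?_⟩
  · obtain ⟨θ', hθ', hlt⟩ := exists_lt_of_csInf_lt ⟨π, hπ⟩ hθ.1
    exact hasBU_cone_mono hθ'.1 hlt.le hθ.2 hθ'.2
  · exact (csInf_le hbdd ⟨hθ.1, h⟩).not_gt hθ.2
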